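/- Let Q be a bipartite recurrent quiver on a finite vertex set V. Then the following are equivalent: (i) there exists a positive integer N such that for every λ : V → ℝ the tropical T-system satisfies f^λ(t + 2N, v) = f^λ(t, v) for all v ∈ V and t ∈ ℤ with t + ε(v) even; (ii) G(Q) is an admissible ADE bigraph. -/

import Mathlib

/-!
# Periodicity of tropical `T`-systems of recurrent bipartite quivers

The matrices `A` and `B` commute, so on each connected component of the bigraph they have a common
positive eigenvector `p` (`perron_ext`), with eigenvalues `μ` and `ν`. Both sides of the equivalence
amount to `μ, ν < 2`.

*Periodicity implies ADE.* If `max μ ν ≥ 2`, the vector `p` times a growing solution of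
`g (t + 1) + g (t - 1) = max (μ g t) (ν g t)` is a tropical solution which is not periodic. If
`μ, ν < 2`, there are no multiple edges, and `p` is strictly superharmonic on every component of the
two graphs; the classification of finite connected graphs carrying such a function gives the ADE
diagrams (`isADE_of_subHarm`).

*ADE implies periodicity.* Pairing `p` with the marks of the affine diagram gives `μ, ν < 2`
(`eig_lt_of_ade`), so the Chebyshev matrices `U_{n-1}(A/2)` are nonnegative until they vanish, at a
time `h` depending on the graph, and `U_{h-2}(A/2)` squares to one (`cheb_coxeter`); likewise for
`B`. Consequently the integer vectors `coef`, which follow a tropical `Y`-system started at `-1, 1`,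
run through alternating phases in which all entries are positive, respectively negative, and the
linear recursion `g (n + 2) = A g (n + 1) - g n` in positive phases,
`g (n + 2) = B g (n + 1) - g n` in negative phases, returns to its initial value after finitely many
phases (`phases`).

To compare a tropical solution `F` with this linear recursion, consider the birational `T`-system
`T (n + 2) T n = ∏ T (n + 1) ^ A + ∏ T (n + 1) ^ B` started at `exp (s F 0)`, `exp (s F 1)`, and
weight one of its two monomials by `θ ^ |coef|`, according to the sign of `coef` (`Usol`).
For fixed `θ` the solution is comparable with `exp (s F n)`, uniformly in `s` (`Usol_bound`); for
`θ → 0` it tends to `exp (s g n)` with `g` the linear recursion (`Usol_limit`). The deformed system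
is a rescaled specialisation of a `T`-system with coefficients, for which the Laurent phenomenon
holds (`laurent`). Hence up to a power of `θ` it is a polynomial in `θ`, of degree bounded
independently of `s`, and its limit at `0` is controlled by its values at finitely many `θ > 0`
(`limit_interp`). This yields `exp (s F 0) ≤ C exp (s F M)` for all `s ≥ 0`, with `M` the period of
the linear recursion, so that `F 0 ≤ F M` (`trop_le`); reversing time gives equality
(`trop_periodic`).

The Laurent phenomenon is proved by induction: expanding in the initial data at times `1, 2` and at
times `3, 4`, the denominators of `T n v` are products of `T 2`, respectively of `T 3` and `T 4`. The
elements `T 2 u` are primes of the Laurent ring not dividing any `T 3 w` or `T 4 w`, so the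
denominators are trivial.
-/


open scoped BigOperators

/-- A bipartite quiver on a finite vertex set `V`, encoded by a bipartition `eps`
and the two symmetric edge-multiplicity matrices `A` (arrows from `eps = 0` to `eps = 1`)
and `B` (arrows from `eps = 1` to `eps = 0`). -/
def BipartiteData {V : Type} [Fintype V] (eps : V → ℤ) (A B : V → V → ℕ) : Prop :=
  (∀ v, eps v = 0 ∨ eps v = 1) ∧
  (∀ u v, A u v = A v u) ∧
  (∀ u v, B u v = B v u) ∧
  (∀ v, A v v = 0) ∧
  (∀ v, B v v = 0) ∧
  (∀ u v, eps u = eps v → A u v = 0 ∧ B u v = 0) ∧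
  (∀ u v, A u v * B u v = 0)

/-- A bipartite quiver is recurrent iff the matrices `A` and `B` commute. -/
def RecurrentQuiver {V : Type} [Fintype V] (A B : V → V → ℕ) : Prop :=
  ∀ u v, (∑ w, A u w * B w v) = ∑ w, B u w * A w v

/-- The tropical `T`-system associated with a bipartite quiver, with initial value `lam`. -/
def IsTropicalTSystem {V : Type} [Fintype V] (eps : V → ℤ) (A B : V → V → ℕ)
    (lam : V → ℝ) (f : ℤ → V → ℝ) : Prop :=
  (∀ v, f (eps v) v = lam v) ∧
  (∀ (t : ℤ) (v : V), Odd (t + eps v) →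
    f (t + 1) v + f (t - 1) v =
      max (∑ u, (A v u : ℝ) * f t u) (∑ u, (B v u : ℝ) * f t u))

/-- The Dynkin diagram `A_n`: vertices `0, …, n-1` with edges `{i, i+1}`. -/
def adeA (n : ℕ) : SimpleGraph (Fin n) :=
  SimpleGraph.fromRel (fun i j => (i : ℕ) + 1 = (j : ℕ))

/-- The Dynkin diagram `D_n` (`n ≥ 4`): a path on vertices `0, …, n-2`
together with the edge `{n-3, n-1}`. -/
def adeD (n : ℕ) : SimpleGraph (Fin n) :=
  SimpleGraph.fromRel (fun i j =>
    ((i : ℕ) + 1 = (j : ℕ) ∧ (j : ℕ) ≤ n - 2) ∨ ((i : ℕ) = n - 3 ∧ (j : ℕ) = n - 1))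

/-- The Dynkin diagram `E_n` (`n = 6, 7, 8`): a path on vertices `0, …, n-2`
together with the edge `{2, n-1}`. -/
def adeE (n : ℕ) : SimpleGraph (Fin n) :=
  SimpleGraph.fromRel (fun i j =>
    ((i : ℕ) + 1 = (j : ℕ) ∧ (j : ℕ) ≤ n - 2) ∨ ((i : ℕ) = 2 ∧ (j : ℕ) = n - 1))

/-- A graph is an ADE Dynkin diagram if it is isomorphic to some `A_n` (`n ≥ 1`),
`D_n` (`n ≥ 4`), or `E_n` (`n = 6, 7, 8`). -/
def IsADE {W : Type*} (G : SimpleGraph W) : Prop :=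
  (∃ n : ℕ, 1 ≤ n ∧ Nonempty (G ≃g adeA n)) ∨
  (∃ n : ℕ, 4 ≤ n ∧ Nonempty (G ≃g adeD n)) ∨
  (∃ n : ℕ, (n = 6 ∨ n = 7 ∨ n = 8) ∧ Nonempty (G ≃g adeE n))

/-- The simple graph on `V` whose edges are the pairs `{u, v}` with `A u v = 1`. -/
def graphOf {V : Type} (A : V → V → ℕ) : SimpleGraph V :=
  SimpleGraph.fromRel (fun u v => A u v = 1)

/-- `G(Q)` is an admissible ADE bigraph: `A` and `B` take values in `{0, 1}` and every
connected component of `Γ` and of `Δ` is an ADE Dynkin diagram. -/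
def AdmissibleADE {V : Type} [Fintype V] (A B : V → V → ℕ) : Prop :=
  (∀ u v, A u v ≤ 1) ∧ (∀ u v, B u v ≤ 1) ∧
  (∀ c : (graphOf A).ConnectedComponent, IsADE ((graphOf A).induce c.supp)) ∧
  (∀ c : (graphOf B).ConnectedComponent, IsADE ((graphOf B).induce c.supp))

/-! ### Common Perron eigenvectors -/

/-- A pair of multiplicity matrices is connected: the only nonempty set of vertices closed under
taking neighbours (for `A` or `B`) is the whole vertex set. -/
def Conn {W : Type} (A B : W → W → ℕ) : Prop :=
  ∀ S : Set W, S.Nonempty → (∀ u ∈ S, ∀ v, A u v + B u v ≠ 0 → v ∈ S) → ∀ v, v ∈ S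

/-- The Perron eigenvector of an irreducible nonnegative symmetric matrix, with its simple
eigenvalue: a maximiser of the quadratic form on the unit sphere may be taken nonnegative, and
irreducibility makes it positive. -/
theorem perron_aux {W : Type} [Fintype W] [Nonempty W] (C : W → W → ℝ)
    (hC : ∀ u v, C u v = C v u) (hC0 : ∀ u v, 0 ≤ C u v)
    (hconn : ∀ S : Set W, S.Nonempty → (∀ u ∈ S, ∀ v, C u v ≠ 0 → v ∈ S) → ∀ v, v ∈ S) :
    ∃ (p : W → ℝ) (ρ : ℝ), (∀ v, 0 < p v) ∧ (∀ v, ∑ u, C v u * p u = ρ * p v) ∧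
      ∀ y : W → ℝ, (∀ v, ∑ u, C v u * y u = ρ * y v) → ∃ m, ∀ v, y v = m * p v := by
  classical
  let q : (W → ℝ) → ℝ := fun x => ∑ v, x v * ∑ u, C v u * x u
  have hqc : Continuous q := by fun_prop
  let S : Set (W → ℝ) := {x | ∑ v, x v ^ 2 = 1}
  have hScl : IsClosed S := isClosed_eq (by fun_prop) continuous_const
  have hSb : Bornology.IsBounded S := by
    refine (Metric.isBounded_closedBall (x := (0 : W → ℝ)) (r := 1)).subset ?_
    intro x hx
    rw [mem_closedBall_zero_iff, pi_norm_le_iff_of_nonneg zero_le_one]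
    intro v
    have h1 : x v ^ 2 ≤ ∑ v, x v ^ 2 :=
      Finset.single_le_sum (f := fun v => x v ^ 2) (fun _ _ => sq_nonneg _) (Finset.mem_univ v)
    have hx' : ∑ v, x v ^ 2 = 1 := hx
    rw [Real.norm_eq_abs, ← sq_le_one_iff_abs_le_one]
    linarith
  have hSc : IsCompact S := Metric.isCompact_of_isClosed_isBounded hScl hSb
  have hSn : S.Nonempty := by
    obtain ⟨w⟩ := ‹Nonempty W›
    refine ⟨Pi.single w 1, ?_⟩
    show ∑ v, (Pi.single w (1:ℝ) : W → ℝ) v ^ 2 = 1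
    rw [Finset.sum_eq_single w] <;> simp +contextual
  obtain ⟨x0, hx0, hmax⟩ := hSc.exists_isMaxOn hSn hqc.continuousOn
  set ρ := q x0 with hρ
  -- homogeneity extends the maximality to all vectors
  have hall : ∀ y : W → ℝ, q y ≤ ρ * ∑ v, y v ^ 2 := by
    intro y
    by_cases hy : ∑ v, y v ^ 2 = 0
    · have : ∀ v, y v = 0 := by
        intro v
        have := (Finset.sum_eq_zero_iff_of_nonneg (fun v _ => sq_nonneg (y v))).1 hy v
          (Finset.mem_univ v)
        simpa using this
      simp [q, this]
    · have hpos : 0 < ∑ v, y v ^ 2 :=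
        lt_of_le_of_ne (Finset.sum_nonneg fun v _ => sq_nonneg _) (Ne.symm hy)
      set n := ∑ v, y v ^ 2 with hn
      have hs : √n ^ 2 = n := Real.sq_sqrt hpos.le
      have hs0 : √n ≠ 0 := (Real.sqrt_pos.2 hpos).ne'
      have hmem : (fun v => (√n)⁻¹ * y v) ∈ S := by
        show ∑ v, ((√n)⁻¹ * y v) ^ 2 = 1
        simp only [mul_pow, ← Finset.mul_sum, ← hn, inv_pow, hs]
        field_simp
      have h := hmax hmem
      have hq : q (fun v => (√n)⁻¹ * y v) = n⁻¹ * q y := by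
        simp only [q, Finset.mul_sum]
        refine Finset.sum_congr rfl fun v _ => Finset.sum_congr rfl fun u _ => ?_
        rw [show n⁻¹ = (√n)⁻¹ ^ 2 by rw [inv_pow, hs]]; ring
      have h' : n⁻¹ * q y ≤ ρ := by rw [← hq]; exact h
      rw [inv_mul_le_iff₀ hpos] at h'
      linarith
  let x : W → ℝ := fun v => |x0 v|
  have hxS : ∑ v, x v ^ 2 = 1 := by
    simp only [x, sq_abs]; exact hx0
  have hxq : q x = ρ := by
    apply le_antisymm
    · have := hall x; rw [hxS] at this; linarith
    · rw [hρ]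
      simp only [q, Finset.mul_sum]
      refine Finset.sum_le_sum fun v _ => Finset.sum_le_sum fun u _ => ?_
      have := le_abs_self (x0 v * x0 u)
      rw [abs_mul] at this
      have := mul_le_mul_of_nonneg_left this (hC0 v u)
      simp only [x]; linarith
  have heig : ∀ v, ∑ u, C v u * x u = ρ * x v := by
    intro v
    -- first variation at the maximiser
    have key : ∀ t : ℝ, 0 ≤ t * (2 * (ρ * x v - ∑ u, C v u * x u)) + t ^ 2 * (ρ - C v v) := by
      intro t
      have h := hall (fun u => x u + if u = v then t else 0)
      have e1 : ∑ u, (x u + if u = v then t else 0) ^ 2 = 1 + 2 * t * x v + t ^ 2 := by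
        have : ∀ u, (x u + if u = v then t else 0) ^ 2
            = x u ^ 2 + (if u = v then 2 * t * x v + t ^ 2 else 0) := by
          intro u; split_ifs with hu
          · subst hu; ring
          · ring
        simp only [this, Finset.sum_add_distrib, hxS]
        simp; ring
      have e2 : q (fun u => x u + if u = v then t else 0)
          = ρ + 2 * t * (∑ u, C v u * x u) + t ^ 2 * C v v := by
        have e3 : ∀ w, ∑ u, C w u * (x u + if u = v then t else 0)
            = ∑ u, C w u * x u + C w v * t := by
          intro w
          simp [mul_add, Finset.sum_add_distrib]
        simp only [q, e3]
        have e4 : ∀ w, (x w + if w = v then t else 0) * (∑ u, C w u * x u + C w v * t)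
           = x w * ∑ u, C w u * x u + t * (C v w * x w)
             + (if w = v then t * (∑ u, C v u * x u) + t ^ 2 * C v v else 0) := by
          intro w; rw [hC v w]; split_ifs with hw
          · subst hw; ring
          · ring
        simp only [e4, Finset.sum_add_distrib]
        have : ∑ w, x w * ∑ u, C w u * x u = ρ := hxq
        rw [this, ← Finset.mul_sum]
        simp; ring
      rw [e1, e2] at h
      linarith
    by_contra hne
    set a := ρ * x v - ∑ u, C v u * x u with ha
    have ha0 : a ≠ 0 := fun h => hne (by linarith)
    set b := |ρ - C v v| + 1 with hb
    have hb0 : 0 < b := by positivity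
    have h := key (-a / b)
    have h2 : ρ - C v v ≤ b := by have := le_abs_self (ρ - C v v); linarith
    have h3 : 0 ≤ (-a / b) ^ 2 * (b - (ρ - C v v)) :=
      mul_nonneg (sq_nonneg _) (by linarith)
    have h4 : (-a / b) * (2 * a) + (-a / b) ^ 2 * b = - (a ^ 2 / b) := by field_simp; ring
    have h5 : 0 < a ^ 2 / b := by positivity
    nlinarith
  have hx0' : ∀ v, 0 ≤ x v := fun v => abs_nonneg _
  -- a nonnegative eigenvector vanishing somewhere vanishes everywhere
  have hprop : ∀ z : W → ℝ, (∀ v, 0 ≤ z v) → (∀ v, ∑ u, C v u * z u = ρ * z v) →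
      (∃ v, z v = 0) → ∀ v, z v = 0 := by
    intro z hz hze ⟨v0, hv0⟩
    refine hconn {v | z v = 0} ⟨v0, hv0⟩ ?_
    intro u hu v huv
    have h := hze u
    rw [show z u = 0 from hu, mul_zero] at h
    have := (Finset.sum_eq_zero_iff_of_nonneg
      (fun v _ => mul_nonneg (hC0 u v) (hz v))).1 h v (Finset.mem_univ v)
    exact (mul_eq_zero.1 this).resolve_left huv
  have hpos : ∀ v, 0 < x v := by
    intro v
    refine lt_of_le_of_ne (hx0' v) fun h => ?_
    have := hprop x hx0' heig ⟨v, h.symm⟩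
    simp [this] at hxS
  refine ⟨x, ρ, hpos, heig, ?_⟩
  intro y hy
  obtain ⟨w, -, hw⟩ := Finset.exists_max_image Finset.univ (fun v => y v / x v)
    Finset.univ_nonempty
  refine ⟨y w / x w, ?_⟩
  have := hprop (fun v => y w / x w * x v - y v) ?_ ?_ ⟨w, ?_⟩
  · intro v; have := this v; linarith
  · intro v
    have := hw v (Finset.mem_univ v)
    rw [div_le_iff₀ (hpos v)] at this
    linarith
  · intro v
    have e : ∀ u, C v u * (y w / x w * x u - y u) = y w / x w * (C v u * x u) - C v u * y u := by
      intro u; ring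
    simp only [e, Finset.sum_sub_distrib, ← Finset.mul_sum, heig, hy]
    ring
  · have := (hpos w).ne'
    field_simp; ring

/-- The commuting nonnegative matrices `A` and `B` of a connected recurrent quiver have a common
positive eigenvector. -/
theorem perron {W : Type} [Fintype W] [Nonempty W] (A B : W → W → ℕ)
    (hA : ∀ u v, A u v = A v u) (hB : ∀ u v, B u v = B v u)
    (hrec : RecurrentQuiver A B) (hconn : Conn A B) :
    ∃ (p : W → ℝ) (μ ν : ℝ), 0 ≤ μ ∧ 0 ≤ ν ∧ (∀ v, 0 < p v) ∧
      (∀ v, ∑ u, (A v u : ℝ) * p u = μ * p v) ∧ (∀ v, ∑ u, (B v u : ℝ) * p u = ν * p v) := by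
  obtain ⟨p, ρ, hp, hpe, huniq⟩ := perron_aux (fun u v => (A u v + B u v : ℝ))
    (fun u v => by rw [hA, hB]) (fun u v => by positivity)
    (fun S hS h => hconn S hS fun u hu v huv => h u hu v (by exact_mod_cast huv))
  have hcomm : ∀ v, ∑ w, (A v w : ℝ) * ∑ u, (B w u : ℝ) * p u
      = ∑ w, (B v w : ℝ) * ∑ u, (A w u : ℝ) * p u := by
    intro v
    simp only [Finset.mul_sum, ← mul_assoc]
    rw [Finset.sum_comm, Finset.sum_comm (f := fun w u => (B v w : ℝ) * A w u * p u)]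
    simp only [← Finset.sum_mul]
    refine Finset.sum_congr rfl fun u _ => ?_
    congr 1
    exact_mod_cast hrec v u
  have key : ∀ X : W → W → ℕ, (∀ v, ∑ u, (X v u : ℝ) * (ρ * p u)
      = ∑ w, (A v w + B v w : ℝ) * ∑ u, (X w u : ℝ) * p u) →
      ∃ m : ℝ, 0 ≤ m ∧ ∀ v, ∑ u, (X v u : ℝ) * p u = m * p v := by
    intro X hX
    obtain ⟨m, hm⟩ := huniq (fun v => ∑ u, (X v u : ℝ) * p u) (by
      intro v
      rw [← hX v, Finset.mul_sum]
      exact Finset.sum_congr rfl fun u _ => by ring)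
    refine ⟨m, ?_, hm⟩
    obtain ⟨w⟩ := ‹Nonempty W›
    have h1 : 0 ≤ m * p w := by
      rw [← hm w]; exact Finset.sum_nonneg fun u _ => mul_nonneg (by positivity) (hp u).le
    exact nonneg_of_mul_nonneg_left h1 (hp w)
  have hexp : ∀ u, ρ * p u = ∑ w, (A u w : ℝ) * p w + ∑ w, (B u w : ℝ) * p w := by
    intro u; rw [← hpe u, ← Finset.sum_add_distrib]
    exact Finset.sum_congr rfl fun w _ => by ring
  obtain ⟨μ, hμ, hμe⟩ := key A (by
    intro v
    simp only [hexp, mul_add, add_mul, Finset.sum_add_distrib, hcomm])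
  obtain ⟨ν, hν, hνe⟩ := key B (by
    intro v
    simp only [hexp, mul_add, add_mul, Finset.sum_add_distrib, hcomm])
  exact ⟨p, μ, ν, hμ, hν, hp, hμe, hνe⟩

/-! ### Components of the bigraph, and periodicity bounds the eigenvalues -/

/-- Reachability of vertices along edges of either colour. -/
def Reach {V : Type} (A B : V → V → ℕ) : V → V → Prop :=
  Relation.ReflTransGen (fun u v => A u v + B u v ≠ 0)

theorem Reach.symm' {V : Type} {A B : V → V → ℕ}
    (hA : ∀ u v, A u v = A v u) (hB : ∀ u v, B u v = B v u) {u v : V} (h : Reach A B u v) :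
    Reach A B v u := by
  induction h with
  | refl => exact Relation.ReflTransGen.refl
  | tail _ h2 ih => exact Relation.ReflTransGen.head (by rw [hA, hB]; exact h2) ih

/-- The connected component of `v0` in the bigraph. -/
abbrev Comp {V : Type} (A B : V → V → ℕ) (v0 : V) : Type := {v // Reach A B v0 v}

/-- Sums over a subtype of functions supported on it are sums over the whole type. -/
theorem comp_sum {V M : Type} [Fintype V] [AddCommMonoid M] (P : V → Prop) [Fintype {v // P v}]
    (g : V → M) (hg : ∀ u, ¬ P u → g u = 0) : ∑ u : {v // P v}, g u.1 = ∑ u, g u := by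
  classical
  rw [← Finset.sum_subtype (s := Finset.univ.filter P) (by simp) g, Finset.sum_filter]
  exact Finset.sum_congr rfl fun u _ => by split_ifs with h <;> simp [hg u, h]

theorem reach_of {V : Type} {A B : V → V → ℕ} {v0 v u : V} (hv : Reach A B v0 v)
    (h : A v u ≠ 0 ∨ B v u ≠ 0) : Reach A B v0 u :=
  Relation.ReflTransGen.tail hv (by omega)

/-- Vertices connected in the graph of `X = A` or `X = B` lie in the same component of the bigraph. -/
theorem reach_of_reachable {V : Type} {A B X : V → V → ℕ} (hX : ∀ u v, X u v = X v u)
    (hXAB : ∀ u v, X u v ≠ 0 → A u v ≠ 0 ∨ B u v ≠ 0) {x y : V}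
    (h : (graphOf X).Reachable x y) : Reach A B x y := by
  obtain ⟨W⟩ := h
  induction W with
  | nil => exact Relation.ReflTransGen.refl
  | @cons u v w hadj W ih =>
    refine Relation.ReflTransGen.head ?_ ih
    simp only [graphOf, SimpleGraph.fromRel_adj] at hadj
    have : X u v ≠ 0 := by
      rcases hadj.2 with h | h
      · omega
      · rw [hX]; omega
    have := hXAB u v this
    omega

theorem comp_conn {V : Type} (A B : V → V → ℕ) (v0 : V)
    (hA : ∀ u v, A u v = A v u) (hB : ∀ u v, B u v = B v u) :
    Conn (W := Comp A B v0) (fun u v => A u.1 v.1) (fun u v => B u.1 v.1) := by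
  intro S ⟨w, hw⟩ hS v
  have key : ∀ x, Reach A B w.1 x → ∀ hx : Reach A B v0 x, (⟨x, hx⟩ : Comp A B v0) ∈ S := by
    intro x h
    induction h with
    | refl => intro _; exact hw
    | tail h1 h2 ih =>
      intro hx
      exact hS _ (ih (Relation.ReflTransGen.trans w.2 h1)) _ h2
  exact key v.1 (Relation.ReflTransGen.trans (w.2.symm' hA hB) v.2) v.2

theorem comp_rec {V : Type} [Fintype V] (A B : V → V → ℕ) (v0 : V) [Fintype (Comp A B v0)]
    (hrec : RecurrentQuiver A B) :
    RecurrentQuiver (V := Comp A B v0) (fun u v => A u.1 v.1) (fun u v => B u.1 v.1) := by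
  intro u v
  rw [comp_sum (Reach A B v0) (fun w => A u.1 w * B w v.1),
    comp_sum (Reach A B v0) (fun w => B u.1 w * A w v.1)]
  · exact hrec u.1 v.1
  · intro w hw; by_contra h
    exact hw (reach_of u.2 (Or.inr fun h0 => h (by simp [h0])))
  · intro w hw; by_contra h
    exact hw (reach_of u.2 (Or.inl fun h0 => h (by simp [h0])))

/-- The common Perron vector of a component, extended by zero. -/
theorem perron_ext {V : Type} [Fintype V] (A B : V → V → ℕ)
    (hA : ∀ u v, A u v = A v u) (hB : ∀ u v, B u v = B v u)
    (hrec : RecurrentQuiver A B) (v0 : V) :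
    ∃ (p : V → ℝ) (μ ν : ℝ), 0 ≤ μ ∧ 0 ≤ ν ∧ (∀ v, Reach A B v0 v → 0 < p v) ∧
      (∀ v, ¬ Reach A B v0 v → p v = 0) ∧
      (∀ v, ∑ u, (A v u : ℝ) * p u = μ * p v) ∧ (∀ v, ∑ u, (B v u : ℝ) * p u = ν * p v) := by
  classical
  have : Nonempty (Comp A B v0) := ⟨⟨v0, Relation.ReflTransGen.refl⟩⟩
  obtain ⟨p, μ, ν, hμ, hν, hp, h1, h2⟩ := perron (W := Comp A B v0)
    (fun u v => A u.1 v.1) (fun u v => B u.1 v.1)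
    (fun u v => hA _ _) (fun u v => hB _ _) (comp_rec A B v0 hrec) (comp_conn A B v0 hA hB)
  let p' : V → ℝ := fun v => if h : Reach A B v0 v then p ⟨v, h⟩ else 0
  have hp' : ∀ u : Comp A B v0, p' u.1 = p u := fun u => by simp [p', u.2]
  have hn : ∀ v, ¬ Reach A B v0 v → p' v = 0 := fun v h => by simp [p', h]
  have main : ∀ (X : V → V → ℕ) (m : ℝ), (∀ u v, X u v = X v u) →
      (∀ u v, X u v ≠ 0 → A u v ≠ 0 ∨ B u v ≠ 0) →
      (∀ v : Comp A B v0, ∑ u : Comp A B v0, (X v.1 u.1 : ℝ) * p u = m * p v) →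
      ∀ v, ∑ u, (X v u : ℝ) * p' u = m * p' v := by
    intro X m hX hXAB h v
    by_cases hv : Reach A B v0 v
    · have := h ⟨v, hv⟩
      simp only [← hp'] at this
      rw [comp_sum (Reach A B v0) (fun u => (X v u : ℝ) * p' u)] at this
      · exact this
      · intro u hu; simp [hn u hu]
    · rw [hn v hv, mul_zero]
      refine Finset.sum_eq_zero fun u _ => ?_
      by_cases hu : Reach A B v0 u
      · have : X v u = 0 := by
          by_contra h0
          exact hv (reach_of hu (hXAB u v (by rwa [hX])))
        simp [this]
      · simp [hn u hu]
  exact ⟨p', μ, ν, hμ, hν, fun v hv => by rw [hp' ⟨v, hv⟩]; exact hp _, hn,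
    main A μ hA (fun _ _ h => Or.inl h) h1, main B ν hB (fun _ _ h => Or.inr h) h2⟩

/-- A scalar solution of the tropical recursion that grows forever, when `max μ ν ≥ 2`. -/
theorem scalar_growth (μ ν : ℝ) (hm : 2 ≤ max μ ν) :
    ∃ g : ℤ → ℝ, (∀ t, g (t + 1) + g (t - 1) = max (μ * g t) (ν * g t)) ∧
      ∀ t : ℤ, 0 ≤ t → ∀ n : ℕ, 0 < n → g t < g (t + n) := by
  let e : Equiv.Perm (ℝ × ℝ) :=
    { toFun := fun x => (x.2, max (μ * x.2) (ν * x.2) - x.1)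
      invFun := fun x => (max (μ * x.1) (ν * x.1) - x.2, x.1)
      left_inv := fun x => by simp
      right_inv := fun x => by simp }
  let g : ℤ → ℝ := fun t => ((e ^ t) (1, 2)).1
  have h1 : ∀ t, g (t + 1) = ((e ^ t) (1, 2)).2 := by
    intro t
    simp only [g, add_comm t 1, zpow_add, zpow_one, Equiv.Perm.mul_apply]
    rfl
  have h2 : ∀ t, g (t + 1) + g (t - 1) = max (μ * g t) (ν * g t) := by
    intro t
    have e1 : g (t + 1) = max (μ * ((e ^ (t - 1)) (1, 2)).2) (ν * ((e ^ (t - 1)) (1, 2)).2)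
        - ((e ^ (t - 1)) (1, 2)).1 := by
      rw [h1]
      conv_lhs => rw [show t = 1 + (t - 1) by ring, zpow_add, zpow_one, Equiv.Perm.mul_apply]
      rfl
    have e2 := h1 (t - 1)
    rw [sub_add_cancel] at e2
    rw [e1, ← e2]
    simp [g]
  have h3 : ∀ n : ℕ, 0 < g n ∧ g n < g (n + 1) := by
    intro n
    induction n with
    | zero =>
      have := h1 0
      simp only [zero_add, zpow_zero, Equiv.Perm.coe_one, id] at this
      simp [g, this] at this ⊢
    | succ n ih =>
      push_cast
      have h := h2 (n + 1)
      rw [add_sub_cancel_right] at h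
      have h4 : 0 < g (n + 1) := ih.1.trans ih.2
      rw [← max_mul_of_nonneg _ _ h4.le] at h
      have : 2 * g (n + 1) ≤ max μ ν * g (n + 1) := mul_le_mul_of_nonneg_right hm h4.le
      exact ⟨h4, by linarith [ih.2]⟩
  have h4 : StrictMono (fun n : ℕ => g n) := by
    refine strictMono_nat_of_lt_succ fun n => ?_
    have := (h3 n).2
    exact_mod_cast this
  refine ⟨g, h2, ?_⟩
  intro t ht n hn
  obtain ⟨k, rfl⟩ := Int.eq_ofNat_of_zero_le ht
  have := h4 (show k < k + n by omega)
  exact_mod_cast this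

/-- Periodicity forces both eigenvalues below `2`: otherwise the product of a joint nonnegative
eigenvector with the growing solution of `scalar_growth` is a solution which is not periodic. -/
theorem periodic_eig_lt {V : Type} [Fintype V] (eps : V → ℤ) (A B : V → V → ℕ)
    (heps : ∀ v, eps v = 0 ∨ eps v = 1)
    (hper : ∃ N : ℕ, 0 < N ∧ ∀ (lam : V → ℝ) (f : ℤ → V → ℝ),
      IsTropicalTSystem eps A B lam f →
      ∀ (v : V) (t : ℤ), Even (t + eps v) → f (t + 2 * N) v = f t v)
    (p : V → ℝ) (hp : ∀ v, 0 ≤ p v) (v0 : V) (hv0 : 0 < p v0) (μ ν : ℝ)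
    (hA : ∀ v, ∑ u, (A v u : ℝ) * p u = μ * p v) (hB : ∀ v, ∑ u, (B v u : ℝ) * p u = ν * p v) :
    μ < 2 ∧ ν < 2 := by
  rw [← max_lt_iff]
  by_contra hm
  rw [not_lt] at hm
  obtain ⟨g, hg, hgm⟩ := scalar_growth μ ν hm
  obtain ⟨N, hN, h⟩ := hper
  have := h (fun v => g (eps v) * p v) (fun t v => g t * p v) ⟨fun v => rfl, ?_⟩ v0 (eps v0)
    ⟨eps v0, rfl⟩
  · have h1 := hgm (eps v0) (by rcases heps v0 with h | h <;> simp [h]) (2 * N) (by omega)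
    have h2 := mul_right_cancel₀ hv0.ne' this
    push_cast at h1
    linarith
  · intro t v _
    have e : ∀ X : V → V → ℕ, ∑ u, (X v u : ℝ) * (g t * p u) = g t * ∑ u, (X v u : ℝ) * p u := by
      intro X; rw [Finset.mul_sum]; exact Finset.sum_congr rfl fun u _ => by ring
    rw [← add_mul, hg, e, e, hA, hB, max_mul_of_nonneg _ _ (hp v)]
    congr 1 <;> ring

/-- A multiple edge would give `2 p v ≤ μ p u` and `2 p u ≤ μ p v`, hence `μ ≥ 2`. -/
theorem mult_le_one {V : Type} [Fintype V] (X : V → V → ℕ) (hX : ∀ u v, X u v = X v u)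
    (p : V → ℝ) (hp : ∀ v, 0 ≤ p v) (μ : ℝ) (hμ : μ < 2)
    (hXp : ∀ v, ∑ u, (X v u : ℝ) * p u = μ * p v) (u v : V) (hu : 0 < p u) (hv : 0 < p v) :
    X u v ≤ 1 := by
  by_contra h
  have h2 : (2 : ℝ) ≤ X u v := by exact_mod_cast (by omega : 2 ≤ X u v)
  have key : ∀ a b, (2 : ℝ) ≤ X a b → 0 < p a → 2 * p b < 2 * p a := by
    intro a b hab ha
    have h1 : (X a b : ℝ) * p b ≤ μ * p a := by
      rw [← hXp a]
      exact Finset.single_le_sum (f := fun u => (X a u : ℝ) * p u)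
        (fun u _ => mul_nonneg (by positivity) (hp u)) (Finset.mem_univ b)
    nlinarith [hp b]
  have := key u v h2 hu
  have := key v u (by rwa [hX]) hv
  linarith

/-! ### Graphs with a strictly superharmonic function are ADE diagrams -/

/-- `w 0, …, w m` is a path without repeated vertices. -/
def IsSPath {W : Type} (G : SimpleGraph W) (w : ℕ → W) (m : ℕ) : Prop :=
  (∀ k < m, G.Adj (w k) (w (k + 1))) ∧ ∀ j ≤ m, ∀ k ≤ m, w j = w k → j = k

/-- The path on `0, …, n-2` with one more vertex `n-1` attached at position `i`. The diagrams
`D_n` and `E_n` are the cases `i = n-3` and `i = 2`. -/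
def branchGraph (n i : ℕ) : SimpleGraph (Fin n) :=
  SimpleGraph.fromRel (fun a b =>
    ((a : ℕ) + 1 = (b : ℕ) ∧ (b : ℕ) ≤ n - 2) ∨ ((a : ℕ) = i ∧ (b : ℕ) = n - 1))

theorem IsSPath.reverse {W : Type} {G : SimpleGraph W} {w : ℕ → W} {m : ℕ} (h : IsSPath G w m) :
    IsSPath G (fun k => w (m - k)) m := by
  refine ⟨fun k hk => ?_, fun j hj k hk hjk => ?_⟩
  · have := (h.1 (m - (k + 1)) (by omega)).symm
    rwa [show m - (k + 1) + 1 = m - k by omega] at this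
  · have := h.2 (m - j) (by omega) (m - k) (by omega) hjk
    omega

/-- The hypothesis that `p` is positive and that at each vertex the sum of `p` over any set of
neighbours is less than twice the value of `p`. -/
structure SubHarm {W : Type} (G : SimpleGraph W) (p : W → ℝ) : Prop where
  pos : ∀ v, 0 < p v
  loc : ∀ v (s : Finset W), (∀ u ∈ s, G.Adj v u) → ∑ u ∈ s, p u < 2 * p v

namespace SubHarm

variable {W : Type} {G : SimpleGraph W} {p : W → ℝ} (h : SubHarm G p)
include h

theorem loc1 {v a : W} (ha : G.Adj v a) : p a < 2 * p v := by
  simpa using h.loc v {a} (by simpa using ha)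

theorem loc2 {v a b : W} (ha : G.Adj v a) (hb : G.Adj v b) (hab : a ≠ b) :
    p a + p b < 2 * p v := by
  classical
  have := h.loc v {a, b} (by simp [ha, hb])
  rwa [Finset.sum_pair hab] at this

theorem loc3 {v a b c : W} (ha : G.Adj v a) (hb : G.Adj v b) (hc : G.Adj v c) (hab : a ≠ b)
    (hac : a ≠ c) (hbc : b ≠ c) : p a + p b + p c < 2 * p v := by
  classical
  have := h.loc v {a, b, c} (by simp [ha, hb, hc])
  rw [Finset.sum_insert (by simp [hab, hac]), Finset.sum_pair hbc] at this
  linarith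

theorem loc4 {v a b c d : W} (ha : G.Adj v a) (hb : G.Adj v b) (hc : G.Adj v c) (hd : G.Adj v d)
    (hab : a ≠ b) (hac : a ≠ c) (had : a ≠ d) (hbc : b ≠ c) (hbd : b ≠ d) (hcd : c ≠ d) :
    p a + p b + p c + p d < 2 * p v := by
  classical
  have := h.loc v {a, b, c, d} (by simp [ha, hb, hc, hd])
  rw [Finset.sum_insert (by simp [hab, hac, had]), Finset.sum_insert (by simp [hbc, hbd]),
    Finset.sum_pair hcd] at this
  linarith

/-- There are no cycles: at a minimum of `p` on a vertex set of minimal degree two, the local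
inequality fails. -/
theorem no_core (S : Finset W) (hS : S.Nonempty)
    (h2 : ∀ v ∈ S, ∃ a ∈ S, ∃ b ∈ S, a ≠ b ∧ G.Adj v a ∧ G.Adj v b) : False := by
  obtain ⟨v, hv, hmin⟩ := S.exists_min_image p hS
  obtain ⟨a, ha, b, hb, hab, h1, h2⟩ := h2 v hv
  have := h.loc2 h1 h2 hab
  linarith [hmin a ha, hmin b hb]

variable {w : ℕ → W} {m : ℕ} (hw : IsSPath G w m)
include hw

/-- A chord of a path would close up a cycle. -/
theorem no_chord {i j : ℕ} (hij : i + 1 < j) (hj : j ≤ m) : ¬ G.Adj (w i) (w j) := by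
  classical
  intro hadj
  refine h.no_core ((Finset.Icc i j).image w) ⟨w i, ?_⟩ ?_
  · exact Finset.mem_image_of_mem _ (by simp; omega)
  · intro v hv
    obtain ⟨k, hk, rfl⟩ := Finset.mem_image.1 hv
    rw [Finset.mem_Icc] at hk
    have hm : ∀ l, i ≤ l → l ≤ j → w l ∈ (Finset.Icc i j).image w := fun l h1 h2 =>
      Finset.mem_image_of_mem _ (by simp; omega)
    have hne : ∀ a b, a ≤ j → b ≤ j → a ≠ b → w a ≠ w b := fun a b ha hb hab e =>
      hab (hw.2 a (by omega) b (by omega) e)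
    rcases eq_or_ne k i with rfl | hki
    · exact ⟨w (k + 1), hm _ (by omega) (by omega), w j, hm _ (by omega) (by omega),
        hne _ _ (by omega) (by omega) (by omega), hw.1 k (by omega), hadj⟩
    have hpred : G.Adj (w k) (w (k - 1)) := by
      have := (hw.1 (k - 1) (by omega)).symm
      rwa [show k - 1 + 1 = k by omega] at this
    rcases eq_or_ne k j with rfl | hkj
    · exact ⟨w (k - 1), hm _ (by omega) (by omega), w i, hm _ (by omega) (by omega),
        hne _ _ (by omega) (by omega) (by omega), hpred, hadj.symm⟩
    · exact ⟨w (k - 1), hm _ (by omega) (by omega), w (k + 1), hm _ (by omega) (by omega),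
        hne _ _ (by omega) (by omega) (by omega), hpred, hw.1 k (by omega)⟩

theorem adj_iff {i j : ℕ} (hi : i ≤ m) (hj : j ≤ m) :
    G.Adj (w i) (w j) ↔ i + 1 = j ∨ j + 1 = i := by
  constructor
  · intro hadj
    by_contra hn
    push Not at hn
    rcases lt_trichotomy i j with h1 | rfl | h1
    · exact h.no_chord hw (by omega) hj hadj
    · exact G.loopless.irrefl _ hadj
    · exact h.no_chord hw (by omega) hi hadj.symm
  · rintro (rfl | rfl)
    · exact hw.1 i (by omega)
    · exact (hw.1 j (by omega)).symm

/-- A vertex off a path is adjacent to at most one vertex of the path. -/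
theorem unique_attach {x : W} (hx : ∀ k ≤ m, w k ≠ x) {i j : ℕ} (hij : i < j) (hj : j ≤ m)
    (hi' : G.Adj x (w i)) (hj' : G.Adj x (w j)) : False := by
  classical
  refine h.no_core (insert x ((Finset.Icc i j).image w)) ⟨x, by simp⟩ ?_
  have hm : ∀ l, i ≤ l → l ≤ j → w l ∈ insert x ((Finset.Icc i j).image w) := fun l h1 h2 =>
      Finset.mem_insert_of_mem (Finset.mem_image_of_mem _ (by simp; omega))
  have hne : ∀ a b, a ≤ j → b ≤ j → a ≠ b → w a ≠ w b := fun a b ha hb hab e =>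
      hab (hw.2 a (by omega) b (by omega) e)
  intro v hv
  rcases Finset.mem_insert.1 hv with rfl | hv
  · exact ⟨w i, hm _ (by omega) (by omega), w j, hm _ (by omega) (by omega),
      hne _ _ (by omega) (by omega) (by omega), hi', hj'⟩
  obtain ⟨k, hk, rfl⟩ := Finset.mem_image.1 hv
  rw [Finset.mem_Icc] at hk
  rcases eq_or_ne k i with rfl | hki
  · exact ⟨w (k + 1), hm _ (by omega) (by omega), x, by simp, hx _ (by omega),
      hw.1 k (by omega), hi'.symm⟩
  have hpred : G.Adj (w k) (w (k - 1)) := by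
    have := (hw.1 (k - 1) (by omega)).symm
    rwa [show k - 1 + 1 = k by omega] at this
  rcases eq_or_ne k j with rfl | hkj
  · exact ⟨w (k - 1), hm _ (by omega) (by omega), x, by simp, hx _ (by omega), hpred, hj'.symm⟩
  · exact ⟨w (k - 1), hm _ (by omega) (by omega), w (k + 1), hm _ (by omega) (by omega),
      hne _ _ (by omega) (by omega) (by omega), hpred, hw.1 k (by omega)⟩

/-- Two branch points on a path are impossible: `p` is strictly concave along the path and would
have to decrease at the first branch point and increase at the second. -/
theorem no_two_branch {x y : W} (hx : ∀ k ≤ m, w k ≠ x) (hy : ∀ k ≤ m, w k ≠ y)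
    {i j : ℕ} (hi : 1 ≤ i) (hij : i < j) (hj : j < m)
    (hi' : G.Adj x (w i)) (hj' : G.Adj y (w j)) : False := by
  have adj : ∀ k l, k ≤ m → l ≤ m → (k + 1 = l ∨ l + 1 = k) → G.Adj (w k) (w l) :=
    fun k l hk hl => (h.adj_iff hw hk hl).2
  have hne : ∀ a b, a ≤ m → b ≤ m → a ≠ b → w a ≠ w b := fun a b ha hb hab e =>
      hab (hw.2 a ha b hb e)
  have key : ∀ d, i + d < j → p (w (i + d + 1)) < p (w (i + d)) := by
    intro d
    induction d with
    | zero =>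
      intro _
      have h1 := h.loc3 (v := w i) (adj i (i - 1) (by omega) (by omega) (by omega))
        (adj i (i + 1) (by omega) (by omega) (by omega)) hi'.symm
        (hne _ _ (by omega) (by omega) (by omega)) (hx _ (by omega)) (hx _ (by omega))
      have h2 := h.loc1 hi'
      have h3 := h.loc1 (adj (i - 1) i (by omega) (by omega) (by omega))
      simp only [add_zero]
      linarith
    | succ d ih =>
      intro hd
      have h1 := h.loc2 (v := w (i + d + 1)) (adj (i + d + 1) (i + d) (by omega) (by omega)
        (by omega)) (adj (i + d + 1) (i + d + 1 + 1) (by omega) (by omega) (by omega))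
        (hne _ _ (by omega) (by omega) (by omega))
      have h2 := ih (by omega)
      rw [show i + (d + 1) = i + d + 1 by ring]
      linarith
  have h0 := key (j - i - 1) (by omega)
  rw [show i + (j - i - 1) + 1 = j by omega, show i + (j - i - 1) = j - 1 by omega] at h0
  have h1 := h.loc3 (v := w j) (adj j (j - 1) (by omega) (by omega) (by omega))
    (adj j (j + 1) (by omega) (by omega) (by omega)) hj'.symm
    (hne _ _ (by omega) (by omega) (by omega)) (hy _ (by omega)) (hy _ (by omega))
  have h2 := h.loc1 hj'
  have h3 := h.loc1 (adj (j + 1) j (by omega) (by omega) (by omega))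
  linarith

/-- A path with one more vertex attached at `w i`, and nothing else, is `branchGraph (m + 2) i`. -/
theorem iso_branch {x : W} (hx : ∀ k ≤ m, w k ≠ x) {i : ℕ} (hi : i ≤ m)
    (hi' : G.Adj x (w i)) (hall : ∀ v, v = x ∨ ∃ k ≤ m, w k = v) :
    Nonempty (G ≃g branchGraph (m + 2) i) := by
  let φ : Fin (m + 2) → W := fun k => if (k : ℕ) ≤ m then w k else x
  have hφ : Function.Bijective φ := by
    constructor
    · intro a b hab
      have ha := a.2
      have hb := b.2
      simp only [φ] at hab
      split_ifs at hab with h1 h2 h2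
      · exact Fin.ext (hw.2 _ h1 _ h2 hab)
      · exact absurd hab (hx _ h1)
      · exact absurd hab.symm (hx _ h2)
      · exact Fin.ext (by omega)
    · intro v
      rcases hall v with rfl | ⟨k, hk, rfl⟩
      · exact ⟨⟨m + 1, by omega⟩, by simp [φ]⟩
      · exact ⟨⟨k, by omega⟩, by simp [φ, hk]⟩
  refine ⟨(RelIso.mk (Equiv.ofBijective φ hφ) ?_ : branchGraph (m + 2) i ≃g G).symm⟩
  intro a b
  have hu : ∀ k ≤ m, G.Adj x (w k) ↔ k = i := by
    intro k hk
    constructor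
    · intro hadj
      rcases lt_trichotomy k i with h1 | h1 | h1
      · exact (h.unique_attach hw hx h1 hi hadj hi').elim
      · exact h1
      · exact (h.unique_attach hw hx h1 hk hi' hadj).elim
    · rintro rfl; exact hi'
  have ha := a.2
  have hb := b.2
  simp only [Equiv.ofBijective_apply, branchGraph, SimpleGraph.fromRel_adj, φ, ne_eq, Fin.ext_iff]
  split_ifs with h1 h2 h2
  · rw [h.adj_iff hw h1 h2]; omega
  · rw [SimpleGraph.adj_comm, hu _ h1]; omega
  · rw [hu _ h2]; omega
  · simp; omega

/-- A tree with one branch point and a short arm of length one: `D_n` or `E_n`. -/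
theorem ade_branch {x : W} (hx : ∀ k ≤ m, w k ≠ x) {i : ℕ} (hi1 : 1 ≤ i) (hi : 2 * i ≤ m)
    (hi' : G.Adj x (w i)) (hall : ∀ v, v = x ∨ ∃ k ≤ m, w k = v) : IsADE G := by
  have adj : ∀ k l, k ≤ m → l ≤ m → (k + 1 = l ∨ l + 1 = k) → G.Adj (w k) (w l) :=
    fun k l hk hl => (h.adj_iff hw hk hl).2
  have hne : ∀ a b, a ≤ m → b ≤ m → a ≠ b → w a ≠ w b := fun a b ha hb hab e =>
      hab (hw.2 a ha b hb e)
  have L1 : ∀ k l, k ≤ m → l ≤ m → (k + 1 = l ∨ l + 1 = k) → p (w l) < 2 * p (w k) :=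
    fun k l hk hl hkl => h.loc1 (adj k l hk hl hkl)
  have L2 : ∀ k, k + 2 ≤ m → p (w k) + p (w (k + 2)) < 2 * p (w (k + 1)) :=
    fun k hk => h.loc2 (adj (k + 1) k (by omega) (by omega) (by omega))
      (adj (k + 1) (k + 2) (by omega) (by omega) (by omega))
      (hne _ _ (by omega) (by omega) (by omega))
  have L3 := h.loc3 (v := w i) (adj i (i - 1) (by omega) (by omega) (by omega))
        (adj i (i + 1) (by omega) (by omega) (by omega)) hi'.symm
        (hne _ _ (by omega) (by omega) (by omega)) (hx _ (by omega)) (hx _ (by omega))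
  have L4 := h.loc1 hi'
  rcases (show i = 1 ∨ i = 2 ∨ 3 ≤ i by omega) with rfl | rfl | h3
  · right; left
    refine ⟨m + 2, by omega, ?_⟩
    have := h.iso_branch hw.reverse (x := x) (i := m - 1) (fun k hk => hx _ (by omega)) (by omega)
      (by simpa [show m - (m - 1) = 1 by omega] using hi') (fun v => ?_)
    · exact this
    · rcases hall v with hv | ⟨k, hk, hv⟩
      · exact Or.inl hv
      · exact Or.inr ⟨m - k, by omega, by simpa [show m - (m - k) = k by omega] using hv⟩
  · by_cases hm : m ≤ 6
    · right; right
      exact ⟨m + 2, by omega, h.iso_branch hw hx (by omega) hi' hall⟩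
    · exfalso
      have a1 := L1 0 1 (by omega) (by omega) (by omega)
      have a2 := L2 0 (by omega)
      have a4 := L2 2 (by omega)
      have a5 := L2 3 (by omega)
      have a6 := L2 4 (by omega)
      have a7 := L2 5 (by omega)
      have a8 := L1 7 6 (by omega) (by omega) (by omega)
      norm_num at *
      linarith
  · exfalso
    obtain ⟨j, rfl⟩ : ∃ j, i = j + 3 := ⟨i - 3, by omega⟩
    have a1 := L1 j (j + 1) (by omega) (by omega) (by omega)
    have a2 := L2 j (by omega)
    have a3 := L2 (j + 1) (by omega)
    have b1 := L1 (j + 6) (j + 5) (by omega) (by omega) (by omega)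
    have b2 := L2 (j + 4) (by omega)
    have b3 := L2 (j + 3) (by omega)
    simp only [add_assoc] at *
    norm_num at *
    linarith

omit h in
/-- Maximality of the path forces a tail of length two hanging off `w i` to be no longer than the
initial arm. -/
theorem arm_ge_two (hmax : ∀ w' m', IsSPath G w' m' → m' ≤ m) {x y : W}
    (hx : ∀ k ≤ m, w k ≠ x) (hy : ∀ k ≤ m, w k ≠ y) {i : ℕ} (hi : i ≤ m)
    (hi' : G.Adj x (w i)) (hxy : G.Adj y x) : 2 ≤ i := by
  have := hmax (fun k => if k = 0 then y else if k = 1 then x else w (i + (k - 2))) (m - i + 2) ?_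
  · omega
  refine ⟨fun k hk => ?_, fun j hj k hk hjk => ?_⟩
  · rcases k with _ | _ | k
    · simpa using hxy
    · simpa using hi'
    · simpa [add_assoc] using hw.1 (i + k) (by omega)
  · have hyx : y ≠ x := hxy.ne
    rcases j with _ | _ | j <;> rcases k with _ | _ | k <;> simp at hjk ⊢
    · exact hyx hjk
    · exact hy _ (by omega) hjk.symm
    · exact hyx hjk.symm
    · exact hx _ (by omega) hjk.symm
    · exact hy _ (by omega) hjk
    · exact hx _ (by omega) hjk
    · have := hw.2 _ (by omega) _ (by omega) hjk
      omega

omit h in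
theorem arm_ge_one (hmax : ∀ w' m', IsSPath G w' m' → m' ≤ m) {x : W}
    (hx : ∀ k ≤ m, w k ≠ x) {i : ℕ} (hi : i ≤ m) (hi' : G.Adj x (w i)) : 1 ≤ i := by
  have := hmax (fun k => if k = 0 then x else w (i + (k - 1))) (m - i + 1) ?_
  · omega
  refine ⟨fun k hk => ?_, fun j hj k hk hjk => ?_⟩
  · rcases k with _ | k
    · simpa using hi'
    · simpa [add_assoc] using hw.1 (i + k) (by omega)
  · rcases j with _ | j <;> rcases k with _ | k <;> simp at hjk ⊢
    · exact hx _ (by omega) hjk.symm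
    · exact hx _ (by omega) hjk
    · have := hw.2 _ (by omega) _ (by omega) hjk
      omega

/-- The classification around a path of maximal length: either the path is everything (type `A`), or
one vertex hangs off it (types `D` and `E`). A second vertex off the path would produce a cycle, a
vertex of degree four, a second branch point or an affine diagram `E_6`. -/
theorem ade_of_max (hmax : ∀ w' m', IsSPath G w' m' → m' ≤ m)
    (hconn : ∀ S : Set W, S.Nonempty → (∀ u ∈ S, ∀ v, G.Adj u v → v ∈ S) → ∀ v, v ∈ S) :
    IsADE G := by
  have hne : ∀ a b, a ≤ m → b ≤ m → a ≠ b → w a ≠ w b := fun a b ha hb hab e =>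
      hab (hw.2 a ha b hb e)
  by_cases hcov : ∀ v, ∃ k ≤ m, w k = v
  · left
    refine ⟨m + 1, by omega, ?_⟩
    let φ : Fin (m + 1) → W := fun k => w k
    have hφ : Function.Bijective φ := by
      constructor
      · intro a b hab
        exact Fin.ext (hw.2 _ (by omega) _ (by omega) hab)
      · intro v
        obtain ⟨k, hk, rfl⟩ := hcov v
        exact ⟨⟨k, by omega⟩, rfl⟩
    refine ⟨(RelIso.mk (Equiv.ofBijective φ hφ) ?_ : adeA (m + 1) ≃g G).symm⟩
    intro a b
    have ha := a.2
    have hb := b.2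
    simp only [Equiv.ofBijective_apply, adeA, SimpleGraph.fromRel_adj, φ, ne_eq, Fin.ext_iff]
    rw [h.adj_iff hw (by omega) (by omega)]
    omega
  · obtain ⟨x, hx, i, hi, hi'⟩ : ∃ x, (∀ k ≤ m, w k ≠ x) ∧ ∃ i ≤ m, G.Adj x (w i) := by
      by_contra hcon
      push Not at hcon
      refine hcov (hconn {v | ∃ k ≤ m, w k = v} ⟨w 0, 0, by omega, rfl⟩ ?_)
      rintro u ⟨k, hk, rfl⟩ v huv
      by_contra hv
      exact hcon v (fun l hl e => hv ⟨l, hl, e⟩) k hk huv.symm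
    have arm1 : ∀ {x i}, (∀ k ≤ m, w k ≠ x) → i ≤ m → G.Adj x (w i) → 1 ≤ i ∧ 1 ≤ m - i := by
      intro x i hx hi hi'
      exact ⟨arm_ge_one hw hmax hx hi hi', arm_ge_one hw.reverse hmax (x := x)
        (fun k hk => hx _ (by omega)) (by omega) (by simpa [show m - (m - i) = i by omega])⟩
    have hi1 := arm1 hx hi hi'
    have adj : ∀ k l, k ≤ m → l ≤ m → (k + 1 = l ∨ l + 1 = k) → G.Adj (w k) (w l) :=
      fun k l hk hl => (h.adj_iff hw hk hl).2
    have hall : ∀ v, v = x ∨ ∃ k ≤ m, w k = v := by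
      refine hconn {v | v = x ∨ ∃ k ≤ m, w k = v} ⟨x, Or.inl rfl⟩ ?_
      rintro u hu y huy
      by_contra hy'
      have hyx : y ≠ x := fun e => hy' (Or.inl e)
      have hy : ∀ k ≤ m, w k ≠ y := fun k hk e => hy' (Or.inr ⟨k, hk, e⟩)
      rcases hu with rfl | ⟨j, hj, rfl⟩
      · -- a tail of length two: the affine diagram of type `E_6`
        have a1 := arm_ge_two hw hmax hx hy hi hi' huy.symm
        have a2 := arm_ge_two hw.reverse hmax (x := u) (y := y) (i := m - i)
          (fun k hk => hx _ (by omega)) (fun k hk => hy _ (by omega)) (by omega)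
          (by simpa [show m - (m - i) = i by omega]) huy.symm
        obtain ⟨j, rfl⟩ : ∃ j, i = j + 2 := ⟨i - 2, by omega⟩
        have b1 := h.loc1 (adj j (j + 1) (by omega) (by omega) (by omega))
        have b2 := h.loc2 (adj (j + 1) j (by omega) (by omega) (by omega))
          (adj (j + 1) (j + 2) (by omega) (by omega) (by omega))
          (hne _ _ (by omega) (by omega) (by omega))
        have b3 := h.loc3 (adj (j + 2) (j + 1) (by omega) (by omega) (by omega))
          (adj (j + 2) (j + 3) (by omega) (by omega) (by omega)) hi'.symm
          (hne _ _ (by omega) (by omega) (by omega)) (hx _ (by omega)) (hx _ (by omega))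
        have b4 := h.loc2 (adj (j + 3) (j + 2) (by omega) (by omega) (by omega))
          (adj (j + 3) (j + 4) (by omega) (by omega) (by omega))
          (hne _ _ (by omega) (by omega) (by omega))
        have b5 := h.loc1 (adj (j + 4) (j + 3) (by omega) (by omega) (by omega))
        have b6 := h.loc2 huy hi' (hy _ (by omega)).symm
        have b7 := h.loc1 huy.symm
        linarith
      · have hj1 := arm1 hy hj huy.symm
        rcases lt_trichotomy i j with hij | rfl | hij
        · exact h.no_two_branch hw hx hy (by omega) hij (by omega) hi' huy.symm
        · have b0 := h.loc4 (adj i (i - 1) (by omega) (by omega) (by omega))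
            (adj i (i + 1) (by omega) (by omega) (by omega)) hi'.symm huy
            (hne _ _ (by omega) (by omega) (by omega)) (hx _ (by omega)) (hy _ (by omega))
            (hx _ (by omega)) (hy _ (by omega)) hyx.symm
          have b1 := h.loc1 (adj (i - 1) i (by omega) (by omega) (by omega))
          have b2 := h.loc1 (adj (i + 1) i (by omega) (by omega) (by omega))
          have b3 := h.loc1 hi'
          have b4 := h.loc1 huy.symm
          linarith
        · exact h.no_two_branch hw hy hx (by omega) hij (by omega) huy.symm hi'
    rcases le_total (2 * i) m with h2 | h2
    · exact h.ade_branch hw hx hi1.1 h2 hi' hall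
    · refine h.ade_branch hw.reverse (x := x) (i := m - i) (fun k hk => hx _ (by omega)) hi1.2
        (by omega) (by simpa [show m - (m - i) = i by omega]) (fun v => ?_)
      rcases hall v with hv | ⟨k, hk, hv⟩
      · exact Or.inl hv
      · exact Or.inr ⟨m - k, by omega, by simpa [show m - (m - k) = k by omega] using hv⟩

end SubHarm

/-- A finite connected graph with a strictly superharmonic positive function is an ADE diagram. -/
theorem isADE_of_subHarm {W : Type} [Finite W] [Nonempty W] {G : SimpleGraph W} {p : W → ℝ}
    (h : SubHarm G p)
    (hconn : ∀ S : Set W, S.Nonempty → (∀ u ∈ S, ∀ v, G.Adj u v → v ∈ S) → ∀ v, v ∈ S) :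
    IsADE G := by
  classical
  have := Fintype.ofFinite W
  let P : ℕ → Prop := fun m => ∃ w, IsSPath G w m
  have hb : ∀ m w, IsSPath G w m → m ≤ Fintype.card W := by
    intro m w hw
    have : Fintype.card (Fin (m + 1)) ≤ Fintype.card W :=
      Fintype.card_le_of_injective (fun k : Fin (m + 1) => w k)
        (fun a b hab => Fin.ext (hw.2 _ (by omega) _ (by omega) hab))
    simp at this; omega
  have h0 : P 0 := by
    obtain ⟨v⟩ := ‹Nonempty W›
    exact ⟨fun _ => v, fun k hk => by omega, fun j hj k hk _ => by omega⟩
  obtain ⟨w, hw⟩ : P (Nat.findGreatest P (Fintype.card W)) :=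
    Nat.findGreatest_spec (Nat.zero_le _) h0
  refine h.ade_of_max hw (fun w' m' hw' => ?_) hconn
  exact Nat.le_findGreatest (hb _ _ hw') ⟨w', hw'⟩

/-- If the Perron vector `p` of a component has `X`-eigenvalue less than two, then the components
of the graph of `X` inside are ADE diagrams. -/
theorem component_ade {V : Type} [Fintype V] (X : V → V → ℕ) (hX : ∀ u v, X u v = X v u)
    (c : (graphOf X).ConnectedComponent)
    (p : V → ℝ) (hp0 : ∀ v, 0 ≤ p v) (hp : ∀ v ∈ c.supp, 0 < p v) (μ : ℝ) (hμ : μ < 2)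
    (hXp : ∀ v, ∑ u, (X v u : ℝ) * p u = μ * p v) : IsADE ((graphOf X).induce c.supp) := by
  classical
  have : Nonempty c.supp := c.nonempty_supp.to_subtype
  refine isADE_of_subHarm (p := fun v => p v.1) ⟨fun v => hp v.1 v.2, ?_⟩ ?_
  · intro v s hs
    have h1 : ∑ u ∈ s, p u.1 = ∑ u ∈ s.map (Function.Embedding.subtype _), p u := by simp
    have h2 : ∑ u ∈ s.map (Function.Embedding.subtype _), p u ≤ ∑ u, (X v.1 u : ℝ) * p u := by
      refine le_trans (Finset.sum_le_sum fun u hu => ?_) (Finset.sum_le_sum_of_subset_of_nonneg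
        (Finset.subset_univ _) fun u _ _ => mul_nonneg (by positivity) (hp0 u))
      obtain ⟨u, hus, rfl⟩ := Finset.mem_map.1 hu
      have := hs u hus
      have h3 : X v.1 u.1 = 1 := by
        rcases this.2 with h | h
        · exact h
        · rw [hX]; exact h
      simp [h3]
    rw [h1]
    rw [hXp] at h2
    have := hp v.1 v.2
    nlinarith
  · intro S ⟨w, hw⟩ hS v
    have hr : (graphOf X).Reachable w.1 v.1 := by
      rw [← SimpleGraph.ConnectedComponent.eq, w.2, v.2]
    have key : ∀ x y, (graphOf X).Walk x y → ∀ hx : x ∈ c.supp, (⟨x, hx⟩ : c.supp) ∈ S →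
        ∀ hy : y ∈ c.supp, (⟨y, hy⟩ : c.supp) ∈ S := by
      intro x y W
      induction W with
      | nil => intro _ h _; exact h
      | cons hadj W ih =>
        intro hx hxS hy
        have hz := c.mem_supp_of_adj_mem_supp hx hadj
        exact ih hz (hS ⟨_, hx⟩ hxS ⟨_, hz⟩ hadj) hy
    obtain ⟨W⟩ := hr
    exact key _ _ W w.2 hw v.2

/-! ### Periodicity implies admissibility -/

/-- Periodic tropical `T`-systems come from admissible ADE bigraphs. -/
theorem admissible_of_periodic {V : Type} [Fintype V] (eps : V → ℤ) (A B : V → V → ℕ)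
    (hbip : BipartiteData eps A B) (hrec : RecurrentQuiver A B)
    (hper : ∃ N : ℕ, 0 < N ∧ ∀ (lam : V → ℝ) (f : ℤ → V → ℝ),
      IsTropicalTSystem eps A B lam f →
      ∀ (v : V) (t : ℤ), Even (t + eps v) → f (t + 2 * N) v = f t v) :
    AdmissibleADE A B := by
  obtain ⟨heps, hA, hB, -, -, -, -⟩ := hbip
  have hP : ∀ v0, ∃ (p : V → ℝ) (μ ν : ℝ), μ < 2 ∧ ν < 2 ∧ (∀ v, 0 ≤ p v) ∧
      (∀ v, Reach A B v0 v → 0 < p v) ∧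
      (∀ v, ∑ u, (A v u : ℝ) * p u = μ * p v) ∧ (∀ v, ∑ u, (B v u : ℝ) * p u = ν * p v) := by
    intro v0
    obtain ⟨p, μ, ν, -, -, hp, hn, h1, h2⟩ := perron_ext A B hA hB hrec v0
    have h0 : ∀ v, 0 ≤ p v := by
      intro v
      by_cases hv : Reach A B v0 v
      · exact (hp v hv).le
      · exact (hn v hv).ge
    obtain ⟨h3, h4⟩ := periodic_eig_lt eps A B heps hper p h0 v0
      (hp v0 Relation.ReflTransGen.refl) μ ν h1 h2
    exact ⟨p, μ, ν, h3, h4, h0, hp, h1, h2⟩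
  refine ⟨fun u v => ?_, fun u v => ?_, fun c => ?_, fun c => ?_⟩
  · by_cases h : A u v = 0
    · omega
    · obtain ⟨p, μ, ν, hμ, hν, h0, hp, h1, h2⟩ := hP u
      exact mult_le_one A hA p h0 μ hμ h1 u v (hp u Relation.ReflTransGen.refl)
        (hp v (reach_of Relation.ReflTransGen.refl (Or.inl h)))
  · by_cases h : B u v = 0
    · omega
    · obtain ⟨p, μ, ν, hμ, hν, h0, hp, h1, h2⟩ := hP u
      exact mult_le_one B hB p h0 ν hν h2 u v (hp u Relation.ReflTransGen.refl)
        (hp v (reach_of Relation.ReflTransGen.refl (Or.inr h)))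
  · obtain ⟨v0, hv0⟩ := c.nonempty_supp
    obtain ⟨p, μ, ν, hμ, hν, h0, hp, h1, h2⟩ := hP v0
    refine component_ade A hA c p h0 (fun v hv => hp v (reach_of_reachable hA (fun _ _ => Or.inl) ?_))
      μ hμ h1
    rw [← SimpleGraph.ConnectedComponent.eq, hv, hv0]
  · obtain ⟨v0, hv0⟩ := c.nonempty_supp
    obtain ⟨p, μ, ν, hμ, hν, h0, hp, h1, h2⟩ := hP v0
    refine component_ade B hB c p h0 (fun v hv => hp v (reach_of_reachable hB (fun _ _ => Or.inr) ?_))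
      ν hν h2
    rw [← SimpleGraph.ConnectedComponent.eq, hv, hv0]

/-! ### ADE diagrams have spectral radius below two -/

open Classical in
/-- There is a positive integral function `x` on the vertices such that the sum of `x` over the
neighbours of a vertex is at most twice the value there, with strict inequality somewhere. -/
def HasAdditive {W : Type*} [Fintype W] (G : SimpleGraph W) : Prop :=
  ∃ x : W → ℕ, (∀ v, 0 < x v) ∧ (∀ v, ∑ u, (if G.Adj v u then x u else 0) ≤ 2 * x v) ∧
    ∃ v, ∑ u, (if G.Adj v u then x u else 0) < 2 * x v

theorem HasAdditive.of_iso {W W' : Type*} [Fintype W] [Fintype W'] {G : SimpleGraph W}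
    {G' : SimpleGraph W'} (e : G ≃g G') (h : HasAdditive G') : HasAdditive G := by
  classical
  obtain ⟨x, h1, h2, v, h3⟩ := h
  have key : ∀ v, ∑ u, (if G.Adj v u then x (e u) else 0)
      = ∑ u, (if G'.Adj (e v) u then x u else 0) := by
    intro v
    rw [← Equiv.sum_comp e.toEquiv]
    refine Finset.sum_congr rfl fun u _ => ?_
    exact if_congr e.map_adj_iff.symm rfl rfl
  refine ⟨fun v => x (e v), fun v => h1 _, fun v => ?_, e.symm v, ?_⟩
  · have := h2 (e v); rw [← key] at this; convert this
  · have h4 := key (e.symm v)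
    have h5 : x (e (e.symm v)) = x v := by rw [RelIso.apply_symm_apply]
    rw [RelIso.apply_symm_apply] at h4
    dsimp only
    rw [h5]
    convert h3 using 1

theorem sum_fin_eq_le (n k : ℕ) (c : ℕ) :
    ∑ u : Fin n, (if (u : ℕ) = k then c else 0) ≤ c := by
  by_cases hk : k < n
  · rw [Finset.sum_eq_single (⟨k, hk⟩ : Fin n)]
    · simp
    · intro b _ hb
      rw [if_neg (fun h => hb (Fin.ext h))]
    · simp
  · rw [Finset.sum_eq_zero]
    · exact Nat.zero_le _
    · intro u _; rw [if_neg (by have := u.2; omega)]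

theorem additive_A (n : ℕ) (hn : 1 ≤ n) : HasAdditive (adeA n) := by
  classical
  have hb : ∀ v : Fin n, ∑ u, (if (adeA n).Adj v u then 1 else 0) ≤
      (if (v : ℕ) = 0 then 0 else 1) + 1 := by
    intro v
    have h1 : ∑ u : Fin n, (if (adeA n).Adj v u then 1 else 0) ≤
        ∑ u : Fin n, (if (u : ℕ) = v - 1 then (if (v : ℕ) = 0 then 0 else 1) else 0)
        + ∑ u : Fin n, (if (u : ℕ) = v + 1 then 1 else 0) := by
      rw [← Finset.sum_add_distrib]
      refine Finset.sum_le_sum fun u _ => ?_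
      simp only [adeA, SimpleGraph.fromRel_adj]
      split_ifs <;> omega
    have h2 := sum_fin_eq_le n (v - 1) (if (v : ℕ) = 0 then 0 else 1)
    have h3 := sum_fin_eq_le n (v + 1) 1
    omega
  refine ⟨fun _ => 1, fun _ => one_pos, fun v => ?_, ⟨0, by omega⟩, ?_⟩
  · refine (hb v).trans ?_
    dsimp only
    split_ifs <;> omega
  · refine (hb _).trans_lt ?_
    simp

theorem additive_D (n : ℕ) (hn : 4 ≤ n) : HasAdditive (adeD n) := by
  classical
  let x : ℕ → ℕ := fun u => if u + 3 ≤ n then 2 else 1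
  have hb : ∀ v : Fin n, ∑ u : Fin n, (if (adeD n).Adj v u then x u else 0) ≤
      (if (v : ℕ) = 0 ∨ (v : ℕ) = n - 1 then 0 else x (v - 1))
        + (if (v : ℕ) + 1 ≤ n - 2 then x (v + 1) else 0)
        + (if (v : ℕ) = n - 3 then 1 else 0) + (if (v : ℕ) = n - 1 then 2 else 0) := by
    intro v
    have h1 : ∑ u : Fin n, (if (adeD n).Adj v u then x u else 0) ≤
        ∑ u : Fin n, (if (u : ℕ) = v - 1 then
          (if (v : ℕ) = 0 ∨ (v : ℕ) = n - 1 then 0 else x (v - 1)) else 0)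
        + ∑ u : Fin n, (if (u : ℕ) = v + 1 then
          (if (v : ℕ) + 1 ≤ n - 2 then x (v + 1) else 0) else 0)
        + ∑ u : Fin n, (if (u : ℕ) = n - 1 then (if (v : ℕ) = n - 3 then 1 else 0) else 0)
        + ∑ u : Fin n, (if (u : ℕ) = n - 3 then (if (v : ℕ) = n - 1 then 2 else 0) else 0) := by
      rw [← Finset.sum_add_distrib, ← Finset.sum_add_distrib, ← Finset.sum_add_distrib]
      refine Finset.sum_le_sum fun u _ => ?_
      have hu := u.2
      have hv := v.2
      by_cases hadj : (adeD n).Adj v u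
      · rw [if_pos hadj]
        simp only [adeD, SimpleGraph.fromRel_adj] at hadj
        rcases hadj.2 with (h | h) | (h | h)
        · have e : (u : ℕ) = v + 1 := by omega
          rw [e]; simp only [x]; split_ifs <;> omega
        · have e : (u : ℕ) = n - 1 := by omega
          rw [e]; simp only [x]; split_ifs <;> omega
        · have e : (u : ℕ) = v - 1 := by omega
          rw [e]; simp only [x]; split_ifs <;> omega
        · have e : (u : ℕ) = n - 3 := by omega
          rw [e]; simp only [x]; split_ifs <;> omega
      · rw [if_neg hadj]; exact Nat.zero_le _
    refine h1.trans ?_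
    gcongr <;> exact sum_fin_eq_le _ _ _
  refine ⟨fun u => x u, fun v => by simp only [x]; split_ifs <;> omega, fun v => ?_,
    ⟨0, by omega⟩, ?_⟩
  · refine (hb v).trans ?_
    have hv := v.2
    simp only [x]
    split_ifs <;> omega
  · refine (hb _).trans_lt ?_
    dsimp only [x]
    split_ifs <;> omega

instance (n : ℕ) : DecidableRel (adeE n).Adj := fun a b =>
  decidable_of_iff (a ≠ b ∧ ((((a : ℕ) + 1 = b ∧ (b : ℕ) ≤ n - 2) ∨ ((a : ℕ) = 2 ∧ (b : ℕ) = n - 1)) ∨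
    (((b : ℕ) + 1 = a ∧ (a : ℕ) ≤ n - 2) ∨ ((b : ℕ) = 2 ∧ (a : ℕ) = n - 1))))
    (by simp only [adeE, SimpleGraph.fromRel_adj])

theorem additive_E (n : ℕ) (hn : n = 6 ∨ n = 7 ∨ n = 8) : HasAdditive (adeE n) := by
  have of_dec : ∀ {m : ℕ} (x : Fin m → ℕ), (∀ v, 0 < x v) →
      (∀ v, ∑ u, (if (adeE m).Adj v u then x u else 0) ≤ 2 * x v) →
      (∃ v, ∑ u, (if (adeE m).Adj v u then x u else 0) < 2 * x v) → HasAdditive (adeE m) := by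
    rintro m x h1 h2 ⟨v, h3⟩
    exact ⟨x, h1, fun v => by convert h2 v, v, by convert h3⟩
  rcases hn with rfl | rfl | rfl
  · exact of_dec ![1, 2, 3, 2, 1, 2] (by decide) (by decide) (by decide)
  · exact of_dec ![2, 3, 4, 3, 2, 1, 2] (by decide) (by decide) (by decide)
  · exact of_dec ![2, 4, 6, 5, 4, 3, 2, 3] (by decide) (by decide) (by decide)

/-- On an ADE diagram, the marks of the corresponding affine diagram provide such a function. -/
theorem IsADE.hasAdditive {W : Type*} [Fintype W] {G : SimpleGraph W} (h : IsADE G) :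
    HasAdditive G := by
  rcases h with ⟨n, hn, ⟨e⟩⟩ | ⟨n, hn, ⟨e⟩⟩ | ⟨n, hn, ⟨e⟩⟩
  · exact (additive_A n hn).of_iso e
  · exact (additive_D n hn).of_iso e
  · exact (additive_E n hn).of_iso e

/-- Pairing the Perron vector with an additive function on an ADE component bounds the
eigenvalue. -/
theorem eig_lt_of_ade {V : Type} [Fintype V] (X : V → V → ℕ) (hX : ∀ u v, X u v = X v u)
    (hX0 : ∀ v, X v v = 0) (hX1 : ∀ u v, X u v ≤ 1)
    (c : (graphOf X).ConnectedComponent) (hc : IsADE ((graphOf X).induce c.supp))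
    (p : V → ℝ) (hp : ∀ v ∈ c.supp, 0 < p v) (μ : ℝ)
    (hXp : ∀ v, ∑ u, (X v u : ℝ) * p u = μ * p v) : μ < 2 := by
  classical
  have : Nonempty c.supp := c.nonempty_supp.to_subtype
  obtain ⟨x, h1, h2, w, h3⟩ := hc.hasAdditive
  have hadj : ∀ u v, (graphOf X).Adj u v ↔ X u v = 1 := by
    intro u v
    simp only [graphOf, SimpleGraph.fromRel_adj]
    constructor
    · rintro ⟨_, h | h⟩
      · exact h
      · rwa [hX]
    · intro h
      exact ⟨fun e => by subst e; simp [hX0] at h, Or.inl h⟩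
  have hval : ∀ u v, X u v = if (graphOf X).Adj u v then 1 else 0 := by
    intro u v
    have := hX1 u v
    split_ifs with h
    · exact (hadj u v).1 h
    · rw [hadj] at h; omega
  have hsum : ∀ v : c.supp, ∑ u : c.supp, (X v.1 u.1 : ℝ) * p u.1 = μ * p v.1 := by
    intro v
    rw [← hXp, ← comp_sum (fun u => u ∈ c.supp) (fun u => (X v.1 u : ℝ) * p u)]
    intro u hu
    have : ¬ (graphOf X).Adj v.1 u := fun h => hu (c.mem_supp_of_adj_mem_supp v.2 h)
    rw [hval, if_neg this]; simp
  have e1 : ∑ v : c.supp, (x v : ℝ) * (μ * p v.1)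
      = ∑ u : c.supp, p u.1 * ∑ v : c.supp, (X u.1 v.1 : ℝ) * x v := by
    simp only [← hsum, Finset.mul_sum]
    rw [Finset.sum_comm]
    refine Finset.sum_congr rfl fun u _ => Finset.sum_congr rfl fun v _ => ?_
    rw [hX v.1 u.1]; ring
  have e2 : ∀ u : c.supp, ∑ v : c.supp, (X u.1 v.1 : ℝ) * x v
      = ((∑ v, (if ((graphOf X).induce c.supp).Adj u v then x v else 0) : ℕ) : ℝ) := by
    intro u
    push_cast
    refine Finset.sum_congr rfl fun v _ => ?_
    rw [hval]
    simp only [SimpleGraph.comap_adj, Function.Embedding.subtype_apply]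
    split_ifs <;> simp
  have e3 : ∑ v : c.supp, (x v : ℝ) * (μ * p v.1) < ∑ u : c.supp, p u.1 * (2 * x u) := by
    rw [e1]
    refine Finset.sum_lt_sum (fun u _ => ?_) ⟨w, Finset.mem_univ _, ?_⟩
    · refine mul_le_mul_of_nonneg_left ?_ (hp _ u.2).le
      rw [e2]; exact_mod_cast h2 u
    · refine mul_lt_mul_of_pos_left ?_ (hp _ w.2)
      rw [e2]; exact_mod_cast h3
  have e4 : 0 < ∑ u : c.supp, p u.1 * x u :=
    Finset.sum_pos (fun u _ => mul_pos (hp _ u.2) (by exact_mod_cast h1 u)) Finset.univ_nonempty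
  have e5 : ∑ v : c.supp, (x v : ℝ) * (μ * p v.1) = μ * ∑ u : c.supp, p u.1 * x u := by
    rw [Finset.mul_sum]; exact Finset.sum_congr rfl fun u _ => by ring
  have e6 : ∑ u : c.supp, p u.1 * (2 * x u) = 2 * ∑ u : c.supp, p u.1 * x u := by
    rw [Finset.mul_sum]; exact Finset.sum_congr rfl fun u _ => by ring
  rw [e5, e6] at e3
  exact lt_of_mul_lt_mul_right e3 e4.le

/-! ### Chebyshev matrices and the Coxeter number -/

section Cheb

open Matrix

/-- Chebyshev polynomials of the second kind evaluated at a matrix, `cheb M n = U_{n-1}(M/2)`. -/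
def cheb {W : Type} [Fintype W] [DecidableEq W] (M : Matrix W W ℤ) : ℕ → Matrix W W ℤ
  | 0 => 0
  | 1 => 1
  | n + 2 => M * cheb M (n + 1) - cheb M n

variable {W : Type} [Fintype W] [DecidableEq W] (M : Matrix W W ℤ)

theorem cheb_comm_of {X : Matrix W W ℤ} (h : Commute X M) :
    ∀ n, Commute X (cheb M n) ∧ Commute X (cheb M (n + 1))
  | 0 => ⟨Commute.zero_right _, Commute.one_right _⟩
  | n + 1 => ⟨(cheb_comm_of h n).2,
      (h.mul_right (cheb_comm_of h n).2).sub_right (cheb_comm_of h n).1⟩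

theorem cheb_commute {M N : Matrix W W ℤ} (h : Commute M N) (m n : ℕ) :
    Commute (cheb M m) (cheb N n) :=
  ((cheb_comm_of M ((cheb_comm_of N h n).1.symm) m).1).symm

theorem cheb_transpose (hM : Mᵀ = M) : ∀ n, (cheb M n)ᵀ = cheb M n ∧
    (cheb M (n + 1))ᵀ = cheb M (n + 1)
  | 0 => by simp [cheb]
  | n + 1 => by
    have ih := cheb_transpose hM n
    refine ⟨ih.2, ?_⟩
    rw [cheb, transpose_sub, transpose_mul, ih.1, ih.2, hM,
      ((cheb_comm_of M (Commute.refl M) n).2).eq]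

theorem cheb_sq (n : ℕ) : cheb M (n + 1) * cheb M (n + 1) - cheb M (n + 2) * cheb M n = 1 := by
  induction n with
  | zero => simp [cheb]
  | succ n ih =>
    have h1 := (cheb_comm_of M (Commute.refl M) (n + 1)).2.eq
    have h2 := (cheb_commute (Commute.refl M) (n + 2) n).eq
    have e2 : cheb M (n + 2) = M * cheb M (n + 1) - cheb M n := rfl
    have e3 : cheb M (n + 1 + 2) = M * cheb M (n + 2) - cheb M (n + 1) := rfl
    rw [show n + 1 + 1 = n + 2 from rfl] at *
    rw [e3, h1]
    calc cheb M (n + 2) * cheb M (n + 2) - (cheb M (n + 2) * M - cheb M (n + 1)) * cheb M (n + 1)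
        = cheb M (n + 2) * (cheb M (n + 2) - M * cheb M (n + 1))
          + cheb M (n + 1) * cheb M (n + 1) := by noncomm_ring
      _ = cheb M (n + 1) * cheb M (n + 1) - cheb M (n + 2) * cheb M n := by
          rw [show cheb M (n + 2) - M * cheb M (n + 1) = - cheb M n by rw [e2]; abel]
          noncomm_ring
      _ = 1 := ih

/-- The scalar counterpart of `cheb`. -/
def schebs (μ : ℝ) : ℕ → ℝ
  | 0 => 0
  | 1 => 1
  | n + 2 => μ * schebs μ (n + 1) - schebs μ n

/-- For `μ < 2` the positive part of the sequence is strictly concave, so it cannot last forever. -/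
theorem schebs_exists (μ : ℝ) (hμ : μ < 2) : ∃ n, 1 ≤ n ∧ schebs μ n ≤ 0 := by
  by_contra hcon
  push Not at hcon
  have hpos : ∀ n, 0 < schebs μ (n + 1) := fun n => hcon (n + 1) (by omega)
  by_cases hall : ∃ n, schebs μ (n + 2) ≤ schebs μ (n + 1)
  · -- concavity: once the sequence stops growing it decreases at least linearly
    obtain ⟨n, hn⟩ := hall
    have step : ∀ k, schebs μ (k + 3) - schebs μ (k + 2) ≤ schebs μ (k + 2) - schebs μ (k + 1) := by
      intro k
      have : schebs μ (k + 3) = μ * schebs μ (k + 2) - schebs μ (k + 1) := rfl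
      have := hpos (k + 1)
      nlinarith
    have h3 : schebs μ (n + 3) < schebs μ (n + 2) := by
      have : schebs μ (n + 3) = μ * schebs μ (n + 2) - schebs μ (n + 1) := rfl
      have := hpos (n + 1)
      nlinarith
    set d := schebs μ (n + 2) - schebs μ (n + 3) with hd
    have hdec : ∀ k : ℕ, schebs μ (n + 3 + k) ≤ schebs μ (n + 2 + k) - d := by
      intro k
      induction k with
      | zero => simp [hd]
      | succ k ih =>
        have := step (n + 1 + k)
        rw [show n + 1 + k + 3 = n + 3 + (k + 1) by ring, show n + 1 + k + 2 = n + 3 + k by ring,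
          show n + 1 + k + 1 = n + 2 + k by ring] at this
        rw [show n + 2 + (k + 1) = n + 3 + k by ring]
        linarith
    have hlin : ∀ k : ℕ, schebs μ (n + 2 + k) ≤ schebs μ (n + 2) - k * d := by
      intro k
      induction k with
      | zero => simp
      | succ k ih =>
        have := hdec k
        rw [show n + 2 + (k + 1) = n + 3 + k by ring]
        push_cast
        linarith
    have hd0 : 0 < d := by rw [hd]; linarith
    obtain ⟨k, hk⟩ := exists_nat_gt (schebs μ (n + 2) / d)
    rw [div_lt_iff₀ hd0] at hk
    have h1 := hlin k
    have h2 := hpos (n + 1 + k)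
    rw [show n + 1 + k + 1 = n + 2 + k by ring] at h2
    linarith
  · push Not at hall
    have h1 : ∀ n, 1 ≤ schebs μ (n + 1) := by
      intro n
      induction n with
      | zero => simp [schebs]
      | succ n ih => exact ih.trans (hall n).le
    have h2 : ∀ n : ℕ, schebs μ (n + 2) - schebs μ (n + 1) ≤ 1 - n * (2 - μ) := by
      intro n
      induction n with
      | zero => simp [schebs]; linarith
      | succ n ih =>
        have : schebs μ (n + 1 + 2) = μ * schebs μ (n + 2) - schebs μ (n + 1) := rfl
        have := h1 (n + 1)
        rw [show n + 1 + 1 = n + 2 from rfl] at *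
        push_cast
        nlinarith
    obtain ⟨k, hk⟩ := exists_nat_gt (1 / (2 - μ))
    rw [div_lt_iff₀ (by linarith)] at hk
    have := h2 k
    have := hall k
    linarith

/-- The quadratic form conserved by the linear recursion `x (n+2) = M x (n+1) - x n`. -/
def energy (M : Matrix W W ℤ) (a b : W → ℤ) : ℤ := a ⬝ᵥ a + b ⬝ᵥ b - a ⬝ᵥ (M *ᵥ b)

variable {M}

omit [DecidableEq W] in
/-- The energy is positive definite when the Perron eigenvalue is less than two. -/
theorem energy_pos (hM : Mᵀ = M) (hM0 : ∀ u v, 0 ≤ M u v) (p : W → ℝ) (hp : ∀ v, 0 < p v)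
    (μ : ℝ) (hμ : μ < 2) (hMp : ∀ v, ∑ u, (M v u : ℝ) * p u = μ * p v)
    (a b : W → ℤ) (hab : ¬ (a = 0 ∧ b = 0)) : 1 ≤ energy M a b := by
  have hsym : ∀ u v, M u v = M v u := fun u v => by
    conv_lhs => rw [← hM]
    rfl
  have h1 : ∑ u, ∑ v, (M u v : ℝ) * ((a u : ℝ) * b v) ≤
      ∑ u, ∑ v, (M u v : ℝ) * ((a u : ℝ) ^ 2 * (p v / p u) / 2 + (b v : ℝ) ^ 2 * (p u / p v) / 2) := by
    refine Finset.sum_le_sum fun u _ => Finset.sum_le_sum fun v _ => ?_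
    refine mul_le_mul_of_nonneg_left ?_ (by exact_mod_cast hM0 u v)
    have hu := hp u
    have hv := hp v
    have : (a u : ℝ) ^ 2 * (p v / p u) / 2 + (b v : ℝ) ^ 2 * (p u / p v) / 2 - (a u : ℝ) * b v
        = ((a u : ℝ) * p v - b v * p u) ^ 2 / (2 * (p u * p v)) := by
      field_simp; ring
    have h2 : 0 ≤ ((a u : ℝ) * p v - b v * p u) ^ 2 / (2 * (p u * p v)) := by positivity
    linarith
  have h2 : ∑ u, ∑ v, (M u v : ℝ) * ((a u : ℝ) ^ 2 * (p v / p u) / 2) = μ / 2 * ∑ u, (a u : ℝ) ^ 2 := by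
    rw [Finset.mul_sum]
    refine Finset.sum_congr rfl fun u _ => ?_
    have := hMp u
    have hu := (hp u).ne'
    calc ∑ v, (M u v : ℝ) * ((a u : ℝ) ^ 2 * (p v / p u) / 2)
        = ((a u : ℝ) ^ 2 / p u / 2) * ∑ v, (M u v : ℝ) * p v := by
          rw [Finset.mul_sum]; exact Finset.sum_congr rfl fun v _ => by ring
      _ = _ := by rw [this]; field_simp
  have h3 : ∑ u, ∑ v, (M u v : ℝ) * ((b v : ℝ) ^ 2 * (p u / p v) / 2) = μ / 2 * ∑ u, (b u : ℝ) ^ 2 := by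
    rw [Finset.sum_comm, Finset.mul_sum]
    refine Finset.sum_congr rfl fun u _ => ?_
    have := hMp u
    have hu := (hp u).ne'
    calc ∑ v, (M v u : ℝ) * ((b u : ℝ) ^ 2 * (p v / p u) / 2)
        = ((b u : ℝ) ^ 2 / p u / 2) * ∑ v, (M u v : ℝ) * p v := by
          rw [Finset.mul_sum]; exact Finset.sum_congr rfl fun v _ => by rw [hsym v u]; ring
      _ = _ := by rw [this]; field_simp
  have h4 : (energy M a b : ℝ) = ∑ u, (a u : ℝ) ^ 2 + ∑ u, (b u : ℝ) ^ 2
      - ∑ u, ∑ v, (M u v : ℝ) * ((a u : ℝ) * b v) := by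
    simp only [energy, dotProduct, mulVec, Finset.mul_sum]
    push_cast
    congr 1
    · congr 1 <;> exact Finset.sum_congr rfl fun _ _ => by ring
    · exact Finset.sum_congr rfl fun _ _ => Finset.sum_congr rfl fun _ _ => by ring
  simp only [mul_add, Finset.sum_add_distrib] at h1
  rw [h2, h3] at h1
  have h5 : 0 < ∑ u, (a u : ℝ) ^ 2 + ∑ u, (b u : ℝ) ^ 2 := by
    by_contra h
    have ha := Finset.sum_nonneg (s := Finset.univ) fun u _ => sq_nonneg (a u : ℝ)
    have hb := Finset.sum_nonneg (s := Finset.univ) fun u _ => sq_nonneg (b u : ℝ)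
    have ha' := (Finset.sum_eq_zero_iff_of_nonneg (fun u _ => sq_nonneg (a u : ℝ))).1
      (by linarith : ∑ u, (a u : ℝ) ^ 2 = 0)
    have hb' := (Finset.sum_eq_zero_iff_of_nonneg (fun u _ => sq_nonneg (b u : ℝ))).1
      (by linarith : ∑ u, (b u : ℝ) ^ 2 = 0)
    exact hab ⟨funext fun u => by simpa using ha' u (Finset.mem_univ u),
      funext fun u => by simpa using hb' u (Finset.mem_univ u)⟩
  have h6 : (0 : ℝ) < energy M a b := by rw [h4]; nlinarith
  have h7 : 0 < energy M a b := by exact_mod_cast h6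
  omega

omit [DecidableEq W] in
/-- Vectors of energy one are real roots in disguise: their entries all have the same sign. -/
theorem energy_coherent (hM : Mᵀ = M) (hM0 : ∀ u v, 0 ≤ M u v) (p : W → ℝ) (hp : ∀ v, 0 < p v)
    (μ : ℝ) (hμ : μ < 2) (hMp : ∀ v, ∑ u, (M v u : ℝ) * p u = μ * p v)
    (a b : W → ℤ) (h1 : energy M a b = 1) :
    ((∀ v, 0 ≤ a v) ∧ ∀ v, 0 ≤ b v) ∨ ((∀ v, a v ≤ 0) ∧ ∀ v, b v ≤ 0) := by
  have hsplit : energy M a b = energy M (fun v => max (a v) 0) (fun v => max (b v) 0)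
      + energy M (fun v => max (-a v) 0) (fun v => max (-b v) 0)
      + (∑ u, ∑ v, max (a u) 0 * (M u v * max (-b v) 0)
        + ∑ u, ∑ v, max (-a u) 0 * (M u v * max (b v) 0)) := by
    have hd : ∀ x : ℤ, x = max x 0 - max (-x) 0 := fun x => by omega
    have hsq : ∀ x : ℤ, x * x = max x 0 * max x 0 + max (-x) 0 * max (-x) 0 := fun x => by
      rcases le_total x 0 with h | h
      · rw [max_eq_right h, max_eq_left (by omega)]; ring
      · rw [max_eq_left h, max_eq_right (by omega)]; ring
    simp only [energy, dotProduct, mulVec, Finset.mul_sum]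
    have e1 : ∀ c : W → ℤ, ∑ u, c u * c u = ∑ u, max (c u) 0 * max (c u) 0
        + ∑ u, max (-c u) 0 * max (-c u) 0 := by
      intro c
      rw [← Finset.sum_add_distrib]
      exact Finset.sum_congr rfl fun u _ => hsq _
    rw [e1 a, e1 b]
    have e2 : ∑ u, ∑ v, a u * (M u v * b v) = ∑ u, ∑ v, max (a u) 0 * (M u v * max (b v) 0)
        + ∑ u, ∑ v, max (-a u) 0 * (M u v * max (-b v) 0)
        - (∑ u, ∑ v, max (a u) 0 * (M u v * max (-b v) 0)
        + ∑ u, ∑ v, max (-a u) 0 * (M u v * max (b v) 0)) := by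
      simp only [← Finset.sum_add_distrib, ← Finset.sum_sub_distrib]
      refine Finset.sum_congr rfl fun u _ => Finset.sum_congr rfl fun v _ => ?_
      conv_lhs => rw [hd (a u), hd (b v)]
      ring
    rw [e2]; ring
  have hc1 : 0 ≤ ∑ u, ∑ v, max (a u) 0 * (M u v * max (-b v) 0) :=
    Finset.sum_nonneg fun u _ => Finset.sum_nonneg fun v _ =>
      mul_nonneg (le_max_right _ _) (mul_nonneg (hM0 u v) (le_max_right _ _))
  have hc2 : 0 ≤ ∑ u, ∑ v, max (-a u) 0 * (M u v * max (b v) 0) :=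
    Finset.sum_nonneg fun u _ => Finset.sum_nonneg fun v _ =>
      mul_nonneg (le_max_right _ _) (mul_nonneg (hM0 u v) (le_max_right _ _))
  by_cases hn : (fun v => max (-a v) 0) = (0 : W → ℤ) ∧ (fun v => max (-b v) 0) = (0 : W → ℤ)
  · left
    refine ⟨fun v => ?_, fun v => ?_⟩
    · have := congrFun hn.1 v; simp only [Pi.zero_apply] at this; omega
    · have := congrFun hn.2 v; simp only [Pi.zero_apply] at this; omega
  by_cases hpz : (fun v => max (a v) 0) = (0 : W → ℤ) ∧ (fun v => max (b v) 0) = (0 : W → ℤ)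
  · right
    refine ⟨fun v => ?_, fun v => ?_⟩
    · have := congrFun hpz.1 v; simp only [Pi.zero_apply] at this; omega
    · have := congrFun hpz.2 v; simp only [Pi.zero_apply] at this; omega
  have := energy_pos hM hM0 p hp μ hμ hMp _ _ hn
  have := energy_pos hM hM0 p hp μ hμ hMp _ _ hpz
  omega

/-- Consecutive Chebyshev columns have energy one, as the energy is conserved. -/
theorem energy_cheb (hM : Mᵀ = M) (v : W) (n : ℕ) :
    energy M (fun u => cheb M n u v) (fun u => cheb M (n + 1) u v) = 1 := by
  induction n with
  | zero =>
    simp [energy, cheb, dotProduct, one_apply]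
  | succ n ih =>
    rw [← ih]
    set x := fun u => cheb M n u v with hx
    set y := fun u => cheb M (n + 1) u v with hy
    have hz : (fun u => cheb M (n + 1 + 1) u v) = M *ᵥ y - x := by
      funext u
      simp [cheb, mulVec, dotProduct, Matrix.mul_apply, hx, hy]
    rw [hz]
    have hs : ∀ a b : W → ℤ, a ⬝ᵥ (M *ᵥ b) = (M *ᵥ a) ⬝ᵥ b := by
      intro a b
      rw [dotProduct_mulVec, ← mulVec_transpose, hM]
    have hxy : x ⬝ᵥ (M *ᵥ y) = (M *ᵥ y) ⬝ᵥ x := dotProduct_comm _ _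
    have hyx : y ⬝ᵥ (M *ᵥ x) = (M *ᵥ y) ⬝ᵥ x := hs y x
    have hyy : y ⬝ᵥ (M *ᵥ (M *ᵥ y)) = (M *ᵥ y) ⬝ᵥ (M *ᵥ y) := hs _ _
    simp only [energy, mulVec_sub, dotProduct_sub, sub_dotProduct, hxy, hyx, hyy]
    ring

theorem cheb_perron (p : W → ℝ) (μ : ℝ) (hMp : ∀ v, ∑ u, (M v u : ℝ) * p u = μ * p v) :
    ∀ n, (∀ v, ∑ u, (cheb M n v u : ℝ) * p u = schebs μ n * p v) ∧
      (∀ v, ∑ u, (cheb M (n + 1) v u : ℝ) * p u = schebs μ (n + 1) * p v)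
  | 0 => by simp [cheb, schebs, one_apply]
  | n + 1 => by
    have ih := cheb_perron p μ hMp n
    refine ⟨ih.2, fun v => ?_⟩
    have e : cheb M (n + 1 + 1) = M * cheb M (n + 1) - cheb M n := rfl
    have e' : schebs μ (n + 1 + 1) = μ * schebs μ (n + 1) - schebs μ n := rfl
    rw [e, e']
    simp only [Matrix.sub_apply, Matrix.mul_apply]
    push_cast
    simp only [sub_mul, Finset.sum_sub_distrib, ih.1 v, Finset.sum_mul]
    rw [Finset.sum_comm]
    simp only [mul_assoc, ← Finset.mul_sum, ih.2]
    simp only [mul_left_comm _ (schebs μ (n + 1)), ← Finset.mul_sum, hMp]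

/-- The Coxeter-number phenomenon: for a matrix with Perron eigenvalue less than two the
Chebyshev sequence stays nonnegative and nonzero until it first vanishes, at time `h`. -/
theorem cheb_coxeter [Nonempty W] (hM : Mᵀ = M) (hM0 : ∀ u v, 0 ≤ M u v) (p : W → ℝ)
    (hp : ∀ v, 0 < p v)
    (μ : ℝ) (hμ : μ < 2) (hMp : ∀ v, ∑ u, (M v u : ℝ) * p u = μ * p v) :
    ∃ h : ℕ, 2 ≤ h ∧ (∀ n ≤ h, ∀ u v, 0 ≤ cheb M n u v) ∧ cheb M h = 0 ∧
      (∀ n, 1 ≤ n → n < h → ∀ v, 0 < ∑ u, cheb M n v u) ∧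
      cheb M (h - 1) * cheb M (h - 1) = 1 := by
  classical
  have hex := schebs_exists μ hμ
  set h := Nat.find hex with hh
  obtain ⟨hh1, hh2⟩ := Nat.find_spec hex
  have hmin : ∀ n, 1 ≤ n → n < h → 0 < schebs μ n := by
    intro n h1 h2
    by_contra h3
    exact Nat.find_min hex h2 ⟨h1, not_lt.1 h3⟩
  have h2 : 2 ≤ h := by
    by_contra h3
    have h4 : Nat.find hex = 1 := by omega
    rw [h4] at hh2
    norm_num [schebs] at hh2
  have hsymm : ∀ n u v, cheb M n u v = cheb M n v u := by
    intro n u v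
    conv_lhs => rw [← (cheb_transpose M hM n).1]
    rfl
  have hcol : ∀ n v, ∑ u, (cheb M n u v : ℝ) * p u = schebs μ n * p v := by
    intro n v
    rw [← (cheb_perron p μ hMp n).1 v]
    exact Finset.sum_congr rfl fun u _ => by rw [hsymm]
  have hcoh := fun n v => energy_coherent hM hM0 p hp μ hμ hMp _ _ (energy_cheb hM v n)
  have hnn : ∀ n, n + 1 < h → ∀ u v, 0 ≤ cheb M (n + 1) u v ∧ 0 ≤ cheb M (n + 1 + 1) u v := by
    intro n hn u v
    rcases hcoh (n + 1) v with hc | hc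
    · exact ⟨hc.1 u, hc.2 u⟩
    · exfalso
      have h3 := hcol (n + 1) v
      have h4 : 0 < schebs μ (n + 1) * p v := mul_pos (hmin _ (by omega) hn) (hp v)
      have h5 : ∑ u, (cheb M (n + 1) u v : ℝ) * p u ≤ 0 :=
        Finset.sum_nonpos fun u _ => mul_nonpos_of_nonpos_of_nonneg
          (by exact_mod_cast hc.1 u) (hp u).le
      linarith
  have hnonneg : ∀ n ≤ h, ∀ u v, 0 ≤ cheb M n u v := by
    intro n hn u v
    rcases n with _ | _ | n
    · simp [cheb]
    · exact (hnn 0 (by omega) u v).1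
    · exact (hnn n (by omega) u v).2
  have hzero : cheb M h = 0 := by
    ext u v
    have h3 := hcol h v
    have h4 : schebs μ h * p v ≤ 0 := mul_nonpos_of_nonpos_of_nonneg hh2 (hp v).le
    have h5 : ∀ u ∈ Finset.univ, 0 ≤ (cheb M h u v : ℝ) * p u := fun u _ =>
      mul_nonneg (by exact_mod_cast hnonneg h le_rfl u v) (hp u).le
    have h6 : ∑ u, (cheb M h u v : ℝ) * p u = 0 :=
      le_antisymm (by linarith) (Finset.sum_nonneg h5)
    have h7 := (Finset.sum_eq_zero_iff_of_nonneg h5).1 h6 u (Finset.mem_univ u)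
    have h8 := (mul_eq_zero.1 h7).resolve_right (hp u).ne'
    simpa using h8
  refine ⟨h, h2, hnonneg, hzero, ?_, ?_⟩
  · intro n h1 hn v
    refine lt_of_le_of_ne (Finset.sum_nonneg fun u _ => hnonneg n hn.le v u) fun h0 => ?_
    have h3 := (Finset.sum_eq_zero_iff_of_nonneg
      (fun u _ => hnonneg n hn.le v u)).1 h0.symm
    have h4 := (cheb_perron p μ hMp n).1 v
    rw [Finset.sum_eq_zero (fun u hu => by simp [h3 u hu])] at h4
    have := mul_pos (hmin n h1 hn) (hp v)
    linarith
  · obtain ⟨k, hk⟩ : ∃ k, h = k + 2 := ⟨h - 2, by omega⟩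
    have := cheb_sq M k
    rw [← hk, hzero] at this
    rw [hk]
    simpa using this

end Cheb

/-! ### Sign-coherent phases of the coefficients -/

section Phases

open Matrix

variable {W : Type} [Fintype W]

/-- The action of an integer matrix on vectors over any commutative ring. -/
def act {R : Type} [CommRing R] (K : Matrix W W ℤ) (x : W → R) : W → R :=
  fun v => ∑ u, (K v u : R) * x u

theorem act_mul {R : Type} [CommRing R] (K L : Matrix W W ℤ) (x : W → R) :
    act (K * L) x = act K (act L x) := by
  funext v
  simp only [act, Matrix.mul_apply, Finset.mul_sum]
  push_cast
  simp only [Finset.sum_mul]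
  rw [Finset.sum_comm]
  exact Finset.sum_congr rfl fun u _ => Finset.sum_congr rfl fun w _ => by ring

theorem act_sub_left {R : Type} [CommRing R] (K L : Matrix W W ℤ) (x : W → R) :
    act (K - L) x = act K x - act L x := by
  funext v
  simp [act, sub_mul]

theorem act_neg_left {R : Type} [CommRing R] (K : Matrix W W ℤ) (x : W → R) :
    act (-K) x = - act K x := by
  funext v
  simp [act]

theorem act_sub {R : Type} [CommRing R] (K : Matrix W W ℤ) (x y : W → R) :
    act K (x - y) = act K x - act K y := by
  funext v
  simp [act, mul_sub]

theorem act_neg {R : Type} [CommRing R] (K : Matrix W W ℤ) (x : W → R) :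
    act K (-x) = - act K x := by
  funext v
  simp [act]

theorem act_zero_left {R : Type} [CommRing R] (x : W → R) :
    act (0 : Matrix W W ℤ) x = 0 := by
  funext v
  simp [act]

variable [DecidableEq W]

theorem act_one {R : Type} [CommRing R] (x : W → R) :
    act (1 : Matrix W W ℤ) x = x := by
  funext v
  simp [act, Matrix.one_apply]

omit [DecidableEq W] in
theorem act_pos {K : Matrix W W ℤ} (hK : ∀ u v, 0 ≤ K u v) (hK' : ∀ v, 0 < ∑ u, K v u)
    {x : W → ℤ} (hx : ∀ v, 0 < x v) (v : W) : 0 < act K x v := by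
  have h1 : ∑ u, K v u ≤ act K x v := by
    refine Finset.sum_le_sum fun u _ => ?_
    simp only [Int.cast_id]
    nlinarith [hK v u, hx u]
  exact (hK' v).trans_le h1

omit [DecidableEq W] in
theorem act_nonneg {K : Matrix W W ℤ} (hK : ∀ u v, 0 ≤ K u v)
    {x : W → ℤ} (hx : ∀ v, 0 < x v) (v : W) : 0 ≤ act K x v :=
  Finset.sum_nonneg fun u _ => mul_nonneg (by simpa using hK v u) (hx u).le

theorem cheb_linear {R : Type} [CommRing R] (M : Matrix W W ℤ) (x : ℕ → W → R) (h : ℕ)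
    (hx : ∀ n < h, x (n + 2) = act M (x (n + 1)) - x n) :
    ∀ n, (n ≤ h → x (n + 1) = act (cheb M (n + 1)) (x 1) - act (cheb M n) (x 0)) ∧
      (n + 1 ≤ h → x (n + 2) = act (cheb M (n + 2)) (x 1) - act (cheb M (n + 1)) (x 0)) := by
  intro n
  induction n with
  | zero =>
    refine ⟨fun _ => ?_, fun h1 => ?_⟩
    · simp [cheb, act_one, act_zero_left]
    · rw [hx 0 (by omega)]
      simp [cheb, act_one]
  | succ n ih =>
    refine ⟨ih.2, fun h1 => ?_⟩
    rw [hx (n + 1) (by omega), ih.1 (by omega), show n + 1 + 1 = n + 2 from rfl, ih.2 (by omega)]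
    rw [show cheb M (n + 1 + 2) = M * cheb M (n + 2) - cheb M (n + 1) from rfl,
      show act (cheb M (n + 2)) (x 0) = act (M * cheb M (n + 1)) (x 0) - act (cheb M n) (x 0) by
        rw [← act_sub_left]; rfl]
    simp only [act_sub, act_sub_left, act_mul]
    abel

/-- Running the linear recursion through a full phase of length `h` multiplies consecutive values
by `-U_{h-2}(M/2)`. -/
theorem phase_linear {R : Type} [CommRing R] (M : Matrix W W ℤ) (x : ℕ → W → R) (h : ℕ)
    (h2 : 2 ≤ h) (hzero : cheb M h = 0)
    (hx : ∀ n < h, x (n + 2) = act M (x (n + 1)) - x n) :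
    x h = - act (cheb M (h - 1)) (x 0) ∧ x (h + 1) = - act (cheb M (h - 1)) (x 1) := by
  obtain ⟨k, rfl⟩ : ∃ k, h = k + 2 := ⟨h - 2, by omega⟩
  have h1 := (cheb_linear M x _ hx k).2 (by omega)
  have h3 := (cheb_linear M x _ hx (k + 1)).2 le_rfl
  have e : cheb M (k + 1 + 2) = M * cheb M (k + 2) - cheb M (k + 1) := rfl
  rw [hzero] at h1
  rw [show k + 1 + 1 = k + 2 from rfl, e, hzero] at h3
  simp only [act_zero_left, zero_sub, mul_zero, act_neg_left, sub_zero] at h1 h3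
  exact ⟨h1, h3⟩

/-- As long as the coefficients of a phase are positive they follow the linear recursion; the
phase lasts exactly `h` steps. -/
theorem phase_sign (M : Matrix W W ℤ) (c : ℕ → W → ℤ) (h : ℕ) (h2 : 2 ≤ h)
    (hnn : ∀ n ≤ h, ∀ u v, 0 ≤ cheb M n u v) (hzero : cheb M h = 0)
    (hrow : ∀ n, 1 ≤ n → n < h → ∀ v, 0 < ∑ u, cheb M n v u)
    (hc : ∀ n, (∀ v, 0 < c (n + 1) v) → c (n + 2) = act M (c (n + 1)) - c n)
    (h0 : c 0 = - c 1) (h1 : ∀ v, 0 < c 1 v) :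
    (∀ n < h, ∀ v, 0 < c (n + 1) v) ∧ c (h + 1) = - c h ∧ c h = act (cheb M (h - 1)) (c 1) := by
  have hpos : ∀ n < h, ∀ v, 0 < c (n + 1) v := by
    intro n
    induction n using Nat.strong_induction_on with
    | _ n ih =>
      intro hn v
      have := (cheb_linear M c n (fun k hk => hc k (ih k hk (by omega))) n).1 le_rfl
      rw [this, h0, act_neg]
      simp only [Pi.sub_apply, Pi.neg_apply, sub_neg_eq_add]
      have p1 := act_nonneg (hnn (n + 1) (by omega)) h1 v
      have p2 := act_nonneg (hnn n (by omega)) h1 v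
      rcases lt_or_ge (n + 1) h with h3 | h3
      · have := act_pos (hnn (n + 1) (by omega)) (hrow (n + 1) (by omega) h3) h1 v
        omega
      · have := act_pos (hnn n (by omega)) (hrow n (by omega) hn) h1 v
        omega
  have := phase_linear M c h h2 hzero (fun n hn => hc n (hpos n hn))
  refine ⟨hpos, ?_, ?_⟩
  · rw [this.1, this.2, h0, act_neg, neg_neg]
  · rw [this.1, h0, act_neg, neg_neg]

/-- The integer matrix of a multiplicity function. -/
def toMat (A : W → W → ℕ) : Matrix W W ℤ := Matrix.of fun u v => (A u v : ℤ)

omit [Fintype W] [DecidableEq W] in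
@[simp] theorem toMat_apply (A : W → W → ℕ) (u v : W) : toMat A u v = (A u v : ℤ) := rfl

/-- The tropical `Y`-system of coefficients with initial values `-1`, `1`. -/
def coef (A B : W → W → ℕ) : ℕ → W → ℤ
  | 0 => fun _ => -1
  | 1 => fun _ => 1
  | n + 2 => fun v => ∑ u, (A v u : ℤ) * max (coef A B (n + 1) u) 0
      - ∑ u, (B v u : ℤ) * max (-coef A B (n + 1) u) 0 - coef A B n v

/-- Existence of a half period: the coefficients run through sign-coherent phases, and
every linear system driven by these phases returns to its initial value. -/
theorem phases [Nonempty W] (A B : W → W → ℕ)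
    (hA : ∀ u v, A u v = A v u) (hB : ∀ u v, B u v = B v u)
    (hrec : RecurrentQuiver A B) (p : W → ℝ) (hp : ∀ v, 0 < p v)
    (μ ν : ℝ) (hμ : μ < 2) (hν : ν < 2)
    (hAp : ∀ v, ∑ u, (A v u : ℝ) * p u = μ * p v) (hBp : ∀ v, ∑ u, (B v u : ℝ) * p u = ν * p v) :
    ∃ H : ℕ, 0 < H ∧
      (∀ n < 2 * H, (∀ v, 0 < coef A B (n + 1) v) ∨ (∀ v, coef A B (n + 1) v < 0)) ∧
      ∀ g : ℕ → W → ℝ,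
        (∀ n, (∀ v, 0 < coef A B (n + 1) v) →
          ∀ v, g (n + 2) v = ∑ u, (A v u : ℝ) * g (n + 1) u - g n v) →
        (∀ n, (∀ v, coef A B (n + 1) v < 0) →
          ∀ v, g (n + 2) v = ∑ u, (B v u : ℝ) * g (n + 1) u - g n v) →
        g (2 * H) = g 0 := by
  have hsymm : ∀ X : W → W → ℕ, (∀ u v, X u v = X v u) → (toMat X)ᵀ = toMat X := by
    intro X hX; ext u v; simp [hX u v]
  have hcomm : Commute (toMat A) (toMat B) := by
    ext u v
    simp only [Matrix.mul_apply, toMat_apply]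
    exact_mod_cast hrec u v
  obtain ⟨a, a2, ann, azero, arow, asq⟩ := cheb_coxeter (hsymm A hA) (fun u v => by simp) p hp μ hμ
    (by simpa using hAp)
  obtain ⟨b, b2, bnn, bzero, brow, bsq⟩ := cheb_coxeter (hsymm B hB) (fun u v => by simp) p hp ν hν
    (by simpa using hBp)
  set c := coef A B with hc
  have hcA : ∀ n, (∀ v, 0 < c (n + 1) v) → c (n + 2) = act (toMat A) (c (n + 1)) - c n := by
    intro n hn
    funext v
    simp only [hc, coef, act, toMat_apply, Pi.sub_apply]
    rw [← hc]
    have e1 : ∀ u, max (c (n + 1) u) 0 = c (n + 1) u := fun u => max_eq_left (hn u).le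
    have e2 : ∀ u, max (-c (n + 1) u) 0 = 0 := fun u => max_eq_right (by have := hn u; omega)
    simp [e1, e2]
  have hcB : ∀ n, (∀ v, c (n + 1) v < 0) → c (n + 2) = act (toMat B) (c (n + 1)) - c n := by
    intro n hn
    funext v
    simp only [hc, coef, act, toMat_apply, Pi.sub_apply]
    rw [← hc]
    have e1 : ∀ u, max (c (n + 1) u) 0 = 0 := fun u => max_eq_right (hn u).le
    have e2 : ∀ u, max (-c (n + 1) u) 0 = -c (n + 1) u :=
      fun u => max_eq_left (by have := hn u; omega)
    simp [e1, e2]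
  -- a positive phase followed by a negative phase
  have cycle : ∀ s, c s = - c (s + 1) → (∀ v, 0 < c (s + 1) v) →
      (∀ n < a, ∀ v, 0 < c (s + n + 1) v) ∧ (∀ n < b, ∀ v, c (s + a + n + 1) v < 0) ∧
      c (s + a + b) = - c (s + a + b + 1) ∧ (∀ v, 0 < c (s + a + b + 1) v) := by
    intro s hs0 hs1
    obtain ⟨p1, p2, p3⟩ := phase_sign (toMat A) (fun n => c (s + n)) a a2 ann azero arow
      (fun n hn => hcA (s + n) hn) hs0 hs1
    have p4 : ∀ v, 0 < c (s + a) v := by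
      intro v
      have := p1 (a - 1) (by omega) v
      rwa [show a - 1 + 1 = a by omega] at this
    obtain ⟨q1, q2, q3⟩ := phase_sign (toMat B) (fun n => - c (s + a + n)) b b2 bnn bzero brow
      (fun n hn => by
        have := hcB (s + a + n) (fun v => by
          have := hn v; simp only [Pi.neg_apply] at this; simpa [add_assoc] using this)
        simp only [← add_assoc]
        rw [this, act_neg]; abel)
      (by rw [neg_neg]; simp only [← add_assoc] at p2 ⊢; rw [p2]; rfl)
      (fun v => by simp only [← add_assoc] at p2 ⊢; rw [p2, neg_neg]; exact p4 v)
    refine ⟨p1, fun n hn v => ?_, ?_, fun v => ?_⟩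
    · have := q1 n hn v
      simp only [Pi.neg_apply] at this
      rw [add_assoc (s + a)]
      omega
    · simp only [← add_assoc] at q2
      rw [q2, neg_neg]
    · have := q1 (b - 1) (by omega) v
      simp only [← add_assoc] at q2
      rw [show b - 1 + 1 = b by omega] at this
      have q3' := congrFun q2 v
      simp only [Pi.neg_apply, ← add_assoc] at *
      omega
  obtain ⟨r1, r2, r3, r4⟩ := cycle 0 (by funext v; simp [hc, coef]) (by intro v; simp [hc, coef])
  obtain ⟨t1, t2, t3, t4⟩ := cycle (0 + a + b) r3 r4
  refine ⟨a + b, by omega, ?_, ?_⟩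
  · intro n hn
    rcases lt_or_ge n a with h1 | h1
    · left; simpa using r1 n h1
    rcases lt_or_ge n (a + b) with h2 | h2
    · right
      have := r2 (n - a) (by omega)
      rwa [show 0 + a + (n - a) + 1 = n + 1 by omega] at this
    rcases lt_or_ge n (a + b + a) with h3 | h3
    · left
      have := t1 (n - (a + b)) (by omega)
      rwa [show 0 + a + b + (n - (a + b)) + 1 = n + 1 by omega] at this
    · right
      have := t2 (n - (a + b + a)) (by omega)
      rwa [show 0 + a + b + a + (n - (a + b + a)) + 1 = n + 1 by omega] at this
  · intro g hgA hgB
    have hgA' : ∀ n, (∀ v, 0 < c (n + 1) v) → g (n + 2) = act (toMat A) (g (n + 1)) - g n := by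
      intro n hn; funext v; simp [hgA n hn v, act]
    have hgB' : ∀ n, (∀ v, c (n + 1) v < 0) → g (n + 2) = act (toMat B) (g (n + 1)) - g n := by
      intro n hn; funext v; simp [hgB n hn v, act]
    have e1 := phase_linear (toMat A) (fun n => g n) a a2 azero
      (fun n hn => hgA' n (by simpa using r1 n hn))
    have e2 := phase_linear (toMat B) (fun n => g (a + n)) b b2 bzero
      (fun n hn => hgB' (a + n) (by simpa using r2 n hn))
    have e3 := phase_linear (toMat A) (fun n => g (a + b + n)) a a2 azero
      (fun n hn => hgA' (a + b + n) (by simpa using t1 n hn))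
    have e4 := phase_linear (toMat B) (fun n => g (a + b + a + n)) b b2 bzero
      (fun n hn => hgB' (a + b + a + n) (by simpa using t2 n hn))
    have hst := (cheb_commute hcomm (a - 1) (b - 1)).eq
    have f4 := e4.1
    have f3 := e3.1
    have f2 := e2.1
    have f1 := e1.1
    simp only [add_zero] at f1 f2 f3 f4
    rw [show 2 * (a + b) = a + b + a + b by ring, f4, f3, f2, f1]
    simp only [act_neg, neg_neg, ← act_mul]
    have : cheb (toMat B) (b - 1) * cheb (toMat A) (a - 1) * cheb (toMat B) (b - 1) *
        cheb (toMat A) (a - 1) = 1 := by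
      rw [mul_assoc _ (cheb (toMat A) (a - 1)) (cheb (toMat B) (b - 1)), hst, ← mul_assoc, bsq,
        one_mul, asq]
    rw [← mul_assoc, ← mul_assoc, this, act_one]

end Phases

/-! ### Laurent polynomials and monomials -/

section LaurentRing

/-- The ring of Laurent polynomials over `ℝ` in the variables indexed by `σ`. -/
abbrev LR (σ : Type) : Type := AddMonoidAlgebra ℝ (σ → ℤ)

variable {σ : Type} [Fintype σ] [DecidableEq σ]

/-- The variable `i` of the Laurent ring, as a unit. -/
noncomputable def lvar (i : σ) : (LR σ)ˣ where
  val := AddMonoidAlgebra.single (Pi.single i 1) 1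
  inv := AddMonoidAlgebra.single (-Pi.single i 1) 1
  val_inv := by
    rw [AddMonoidAlgebra.single_mul_single, add_neg_cancel, one_mul, AddMonoidAlgebra.one_def]
  inv_val := by
    rw [AddMonoidAlgebra.single_mul_single, neg_add_cancel, one_mul, AddMonoidAlgebra.one_def]

/-- Evaluation of Laurent polynomials at a tuple of units of an `ℝ`-algebra. -/
noncomputable def lev {S : Type} [CommRing S] [Algebra ℝ S] (x : σ → Sˣ) : LR σ →ₐ[ℝ] S :=
  AddMonoidAlgebra.lift ℝ S (σ → ℤ)
    { toFun := fun m => ((∏ i, x i ^ (m.toAdd i) : Sˣ) : S)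
      map_one' := by simp
      map_mul' := fun m n => by
        rw [← Units.val_mul, ← Finset.prod_mul_distrib]
        simp [zpow_add] }

/-- `lev x` sends the variable `i` to `x i`. -/
theorem lev_lvar {S : Type} [CommRing S] [Algebra ℝ S] (x : σ → Sˣ) (i : σ) :
    lev x (lvar i : LR σ) = x i := by
  simp only [lev, lvar, AddMonoidAlgebra.lift_single, one_smul, MonoidHom.coe_mk, OneHom.coe_mk,
    toAdd_ofAdd]
  rw [Finset.prod_eq_single i]
  · simp
  · intro j _ hj
    simp [Pi.single_eq_of_ne hj]
  · simp

theorem map_units_lvar {S : Type} [CommRing S] [Algebra ℝ S] (x : σ → Sˣ) (i : σ) :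
    Units.map (lev x : LR σ →* S) (lvar i) = x i := by
  ext
  simpa using lev_lvar x i

theorem algHom_unit_inv {R S : Type} [CommRing R] [CommRing S] [Algebra ℝ R] [Algebra ℝ S]
    (φ : R →ₐ[ℝ] S) (a : Rˣ) (b : Sˣ) (h : φ (a : R) = b) : φ ((a⁻¹ : Rˣ) : R) = ((b⁻¹ : Sˣ) : S) := by
  rw [← Units.mul_right_inj b, ← h, ← map_mul]
  simp [h]

/-- Everything in the Laurent ring is built from constants, variables and inverse variables. -/
theorem lr_induction {P : LR σ → Prop} (hc : ∀ r : ℝ, P (algebraMap ℝ _ r))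
    (ha : ∀ a b, P a → P b → P (a + b)) (hm : ∀ a b, P a → P b → P (a * b))
    (hv : ∀ i : σ, P (lvar i : (LR σ)ˣ)) (hi : ∀ i : σ, P ((lvar i)⁻¹ : (LR σ)ˣ)) (a : LR σ) : P a := by
  have h1 : P 1 := by
    have := hc 1
    rwa [map_one] at this
  have hpow : ∀ (u : (LR σ)ˣ), P (u : LR σ) → ∀ n : ℕ, P ((u ^ n : (LR σ)ˣ) : LR σ) := by
    intro u hu n
    induction n with
    | zero => simpa using h1
    | succ n ih => rw [pow_succ]; exact hm _ _ ih hu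
  have hz : ∀ (i : σ) (n : ℤ), P ((lvar i ^ n : (LR σ)ˣ) : LR σ) := by
    intro i n
    cases n with
    | ofNat n => simpa using hpow _ (hv i) n
    | negSucc n =>
      rw [zpow_negSucc, ← inv_pow]
      exact hpow _ (hi i) _
  have hprod : ∀ (s : Finset σ) (m : σ → ℤ), P ((∏ i ∈ s, lvar i ^ m i : (LR σ)ˣ) : LR σ) := by
    intro s m
    induction s using Finset.induction_on with
    | empty => simpa using h1
    | insert i s hi ih => rw [Finset.prod_insert hi]; exact hm _ _ (hz i _) ih
  have hmon : ∀ m : σ → ℤ, (AddMonoidAlgebra.of ℝ (σ → ℤ) (Multiplicative.ofAdd m)) =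
      ((∏ i, lvar i ^ m i : (LR σ)ˣ) : LR σ) := by
    -- both sides are multiplicative in `m` and agree on the standard basis
    let F : Multiplicative (σ → ℤ) →* (LR σ)ˣ :=
      { toFun := fun m => ∏ i, lvar i ^ (m.toAdd i)
        map_one' := by simp
        map_mul' := fun m n => by
          rw [← Finset.prod_mul_distrib]
          simp [zpow_add] }
    let G : Multiplicative (σ → ℤ) →* (LR σ)ˣ :=
      (AddMonoidAlgebra.of ℝ (σ → ℤ)).toHomUnits
    have hFG : ∀ i : σ, G (Multiplicative.ofAdd (Pi.single i 1)) = lvar i := by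
      intro i
      ext1
      simp [G, lvar]
    intro m
    have hm : (Multiplicative.ofAdd m) =
        ∏ i, (Multiplicative.ofAdd (Pi.single i (1 : ℤ))) ^ (m i) := by
      apply Multiplicative.toAdd.injective
      funext j
      simp [toAdd_prod, Finset.sum_apply, Pi.single_apply]
    have : G (Multiplicative.ofAdd m) = ∏ i, lvar i ^ m i := by
      conv_lhs => rw [hm]
      rw [map_prod]
      simp only [map_zpow, hFG]
    rw [← this]
    rfl
  induction a using AddMonoidAlgebra.induction_on with
  | of m => rw [hmon]; exact hprod _ _
  | add a b ha' hb' => exact ha _ _ ha' hb'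
  | smul r a h => rw [Algebra.smul_def]; exact hm _ _ (hc r) h

end LaurentRing

section Mono

variable {V : Type} [Fintype V]

/-- The monomial `∏ u, x u ^ A v u`. -/
def mono {R : Type} [CommMonoid R] (A : V → V → ℕ) (x : V → R) (v : V) : R :=
  ∏ u, x u ^ A v u

theorem mono_mul {R : Type} [CommMonoid R] (A : V → V → ℕ) (x y : V → R) (v : V) :
    mono A (fun u => x u * y u) v = mono A x v * mono A y v := by
  simp [mono, mul_pow, Finset.prod_mul_distrib]

theorem mono_comm {R : Type} [CommMonoid R] {A B : V → V → ℕ} (h : RecurrentQuiver A B)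
    (x : V → R) (v : V) : mono A (mono B x) v = mono B (mono A x) v := by
  have key : ∀ C D : V → V → ℕ, mono C (mono D x) v = ∏ w, x w ^ (∑ u, C v u * D u w) := by
    intro C D
    simp only [mono, ← Finset.prod_pow, ← pow_mul, ← Finset.prod_pow_eq_pow_sum]
    rw [Finset.prod_comm]
    exact Finset.prod_congr rfl fun u _ => Finset.prod_congr rfl fun w _ => by rw [mul_comm]
  rw [key, key]
  exact Finset.prod_congr rfl fun w _ => by rw [h v w]

theorem map_mono {R S : Type} [CommRing R] [CommRing S] [Algebra ℝ R] [Algebra ℝ S]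
    (φ : R →ₐ[ℝ] S) (A : V → V → ℕ) (x : V → R) (v : V) :
    φ (mono A x v) = mono A (fun u => φ (x u)) v := by
  simp [mono]

theorem val_mono {R : Type} [CommRing R] (A : V → V → ℕ) (x : V → Rˣ) (v : V) :
    ((mono A x v : Rˣ) : R) = mono A (fun u => (x u : R)) v := by
  simp [mono]

theorem mono_congr {R : Type} [CommMonoid R] (A : V → V → ℕ) (x y : V → R) (v : V)
    (h : ∀ u, A v u ≠ 0 → x u = y u) : mono A x v = mono A y v := by
  refine Finset.prod_congr rfl fun u _ => ?_
  by_cases hu : A v u = 0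
  · simp [hu]
  · rw [h u hu]

theorem mono_one {R : Type} [CommMonoid R] (A : V → V → ℕ) (v : V) :
    mono A (fun _ => (1 : R)) v = 1 := by
  simp [mono]

theorem mono_eq_zero {R : Type} [CommRing R] (A : V → V → ℕ) (x : V → R) (v w : V)
    (h : x w = 0) (hA : A v w ≠ 0) : mono A x v = 0 :=
  Finset.prod_eq_zero (Finset.mem_univ w) (by rw [h, zero_pow hA])

end Mono

/-! ### The first steps of the generic `T`-system with coefficients -/

section Seeds

variable {V : Type} [Fintype V] [DecidableEq V]

/-- The Laurent ring in the initial data of the `T`-system with coefficients: the variables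
`(0, v)`, `(1, v)` are `T 0 v`, `T 1 v` and `(2, v)`, `(3, v)` are the coefficients
`β 0 v`, `β 1 v`. -/
abbrev LV (V : Type) : Type := LR (Fin 4 × V)

/-- The generator of type `k` at the vertex `v`. -/
noncomputable def gv (k : Fin 4) (v : V) : (LV V)ˣ := lvar (k, v)

/-- The coefficients `β n v`, defined by `β (n + 2) v * β n v = ∏ u, β (n + 1) u ^ A v u`. They are
Laurent monomials. -/
noncomputable def bL (A : V → V → ℕ) : ℕ → V → (LV V)ˣ
  | 0 => gv 2
  | 1 => gv 3
  | n + 2 => fun v => mono A (bL A (n + 1)) v * (bL A n v)⁻¹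

variable (A B : V → V → ℕ)

/-- `T 2 v` as a Laurent polynomial. -/
noncomputable def t2 (v : V) : LV V :=
  ((gv 0 v)⁻¹ : (LV V)ˣ) *
    (mono A (fun u => (gv 1 u : LV V)) v + gv 3 v * mono B (fun u => (gv 1 u : LV V)) v)

/-- `T 3 v` as a Laurent polynomial. -/
noncomputable def t3 (v : V) : LV V :=
  ((gv 1 v)⁻¹ : (LV V)ˣ) * (mono A (t2 A B) v + bL A 2 v * mono B (t2 A B) v)

/-- The substitution `β 1 v ↦ -∏ T 1 u ^ A v u / ∏ T 1 u ^ B v u`, whose kernel is generated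
by `T 2 v`. -/
noncomputable def evv (v : V) : LV V →ₐ[ℝ] LV V :=
  lev (fun i => if i = (3, v) then -(mono A (gv 1) v * (mono B (gv 1) v)⁻¹) else lvar i)

theorem gv_mul_t2 (v : V) : (gv 0 v : LV V) * t2 A B v =
    mono A (fun u => (gv 1 u : LV V)) v + gv 3 v * mono B (fun u => (gv 1 u : LV V)) v := by
  rw [t2, ← mul_assoc]
  simp

theorem gv_mul_t3 (v : V) : (gv 1 v : LV V) * t3 A B v =
    mono A (t2 A B) v + bL A 2 v * mono B (t2 A B) v := by
  rw [t3, ← mul_assoc]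
  simp

theorem bL_mul (n : ℕ) (v : V) : (bL A (n + 2) v : LV V) * bL A n v =
    mono A (fun u => (bL A (n + 1) u : LV V)) v := by
  rw [← val_mono, ← Units.val_mul, bL]
  simp

theorem evv_gv (v u : V) (k : Fin 4) (h : (k, u) ≠ (3, v)) :
    evv A B v (gv k u : LV V) = gv k u := by
  rw [evv, gv, lev_lvar, if_neg h]

theorem evv_gv3 (v : V) : evv A B v (gv 3 v : LV V) * mono B (fun u => (gv 1 u : LV V)) v =
    - mono A (fun u => (gv 1 u : LV V)) v := by
  rw [evv, gv, lev_lvar, if_pos rfl, ← val_mono, ← val_mono, ← Units.val_mul, ← Units.val_neg]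
  congr 1
  simp

theorem evv_mono_gv1 (C : V → V → ℕ) (v w : V) :
    evv A B v (mono C (fun u => (gv 1 u : LV V)) w) = mono C (fun u => (gv 1 u : LV V)) w := by
  rw [map_mono]
  exact mono_congr _ _ _ _ fun u _ => evv_gv A B v u 1 (by simp)

theorem evv_t2 (v : V) : evv A B v (t2 A B v) = 0 := by
  have h := congrArg (evv A B v) (gv_mul_t2 A B v)
  rw [map_mul, map_add, map_mul, evv_mono_gv1, evv_mono_gv1, evv_gv A B v v 0 (by simp),
    evv_gv3, add_neg_cancel] at h
  exact (Units.mul_right_eq_zero _).1 h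

/-- Modulo `T 2 v` every Laurent polynomial agrees with its image under the substitution. -/
theorem t2_dvd_sub (v : V) (a : LV V) : t2 A B v ∣ a - evv A B v a := by
  have hvar : ∀ i : Fin 4 × V, t2 A B v ∣ (lvar i : (LV V)ˣ) - evv A B v (lvar i : (LV V)ˣ) := by
    intro i
    by_cases hi : i = (3, v)
    · subst hi
      have h1 := gv_mul_t2 A B v
      have h2 := evv_gv3 A B v
      have h3 : ((gv 3 v : LV V) - evv A B v (gv 3 v : LV V)) *
          ((mono B (gv 1) v : (LV V)ˣ) : LV V) = t2 A B v * gv 0 v := by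
        rw [val_mono, sub_mul, h2, mul_comm (t2 A B v), h1]
        ring
      have h4 : t2 A B v ∣ ((gv 3 v : LV V) - evv A B v (gv 3 v : LV V)) *
          ((mono B (gv 1) v : (LV V)ˣ) : LV V) := ⟨_, h3⟩
      exact (Units.dvd_mul_right).1 h4
    · have := evv_gv A B v i.2 i.1 hi
      rw [gv] at this
      rw [this, sub_self]
      exact dvd_zero _
  induction a using lr_induction with
  | hc r => rw [AlgHom.commutes, sub_self]; exact dvd_zero _
  | ha a b h1 h2 => rw [map_add, add_sub_add_comm]; exact dvd_add h1 h2
  | hm a b h1 h2 =>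
    rw [map_mul, show a * b - evv A B v a * evv A B v b =
      a * (b - evv A B v b) + (a - evv A B v a) * evv A B v b by ring]
    exact dvd_add (h2.mul_left _) (h1.mul_right _)
  | hv i => exact hvar i
  | hi i =>
    have h1 := hvar i
    have hu : evv A B v (lvar i : (LV V)ˣ) = (Units.map (evv A B v : LV V →* LV V) (lvar i) :
      (LV V)ˣ) := rfl
    have h2 := algHom_unit_inv (evv A B v) (lvar i) _ hu
    rw [hu] at h1
    rw [h2]
    set c := Units.map (evv A B v : LV V →* LV V) (lvar i)
    have h3 : ((lvar i)⁻¹ : (LV V)ˣ) - ((c⁻¹ : (LV V)ˣ) : LV V) =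
        (((lvar i : (LV V)ˣ) : LV V) - c) *
          (-(((lvar i)⁻¹ : (LV V)ˣ) * ((c⁻¹ : (LV V)ˣ) : LV V))) := by
      have e1 : ((lvar i : (LV V)ˣ) : LV V) * ((lvar i)⁻¹ : (LV V)ˣ) = 1 := by simp
      have e2 : (c : LV V) * ((c⁻¹ : (LV V)ˣ) : LV V) = 1 := by simp
      linear_combination ((c⁻¹ : (LV V)ˣ) : LV V) * e1 -
        (((lvar i)⁻¹ : (LV V)ˣ) : LV V) * e2
    rw [h3]
    exact h1.mul_right _

theorem evv_eq_zero_iff (v : V) (a : LV V) : evv A B v a = 0 ↔ t2 A B v ∣ a := by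
  constructor
  · intro h
    have := t2_dvd_sub A B v a
    rwa [h, sub_zero] at this
  · rintro ⟨c, rfl⟩
    rw [map_mul, evv_t2, zero_mul]

/-- `T 2 v` generates the kernel of a homomorphism to a domain, hence is prime. -/
theorem t2_prime (v : V) : Prime (t2 A B v) := by
  refine ⟨?_, ?_, ?_⟩
  · intro h
    have h1 := congrArg (lev (S := ℝ) (fun _ : Fin 4 × V => 1)) (gv_mul_t2 A B v)
    rw [h] at h1
    simp [map_mono, gv, lev_lvar, mono_one] at h1
    norm_num at h1
  · intro h
    have := h.map (evv A B v)
    rw [evv_t2] at this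
    exact not_isUnit_zero this
  · intro a b h
    simp only [← evv_eq_zero_iff, map_mul, mul_eq_zero] at h ⊢
    exact h

omit [DecidableEq V] in
/-- The cancellation behind the Laurent property: once `X₂ v = 0`, the numerator of the next
but one step vanishes as well. -/
theorem num_vanish {S : Type} [CommRing S] {A B : V → V → ℕ} (hA : ∀ u v, A u v = A v u)
    (hB : ∀ u v, B u v = B v u) (hrec : RecurrentQuiver A B)
    (x1 : V → Sˣ) (X2 X3 c1 c2 c3 : V → S) (v : V) (hz : X2 v = 0)
    (h3 : ∀ u, (x1 u : S) * X3 u = mono A X2 u + c2 u * mono B X2 u)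
    (hc : c3 v * c1 v = mono A c2 v)
    (hP : mono A (fun u => (x1 u : S)) v + c1 v * mono B (fun u => (x1 u : S)) v = 0) :
    mono A X3 v + c3 v * mono B X3 v = 0 := by
  have hA3 : mono A (fun u => (x1 u : S)) v * mono A X3 v =
      mono A c2 v * mono A (mono B X2) v := by
    rw [← mono_mul, ← mono_mul]
    refine mono_congr _ _ _ _ fun u hu => ?_
    rw [h3 u, mono_eq_zero A X2 u v hz (by rwa [hA u v]), zero_add]
  have hB3 : mono B (fun u => (x1 u : S)) v * mono B X3 v = mono A (mono B X2) v := by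
    rw [← mono_mul, mono_comm hrec]
    refine mono_congr _ _ _ _ fun u hu => ?_
    rw [h3 u, mono_eq_zero B X2 u v hz (by rwa [hB u v]), mul_zero, add_zero]
  have hu : IsUnit (mono A (fun u => (x1 u : S)) v) := by
    rw [← val_mono]; exact Units.isUnit _
  refine (hu.mul_right_eq_zero).1 ?_
  linear_combination hA3 - (mono A (mono B X2) v) * hc + (-c3 v * c1 v) * hB3 +
    c3 v * mono B X3 v * hP

variable {A B}

/-- `T 4 v` is a Laurent polynomial: the numerator of its defining relation is divisible by `T 2 v`,
as it vanishes under the substitution `evv`. -/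
theorem t4_exists (hA : ∀ u v, A u v = A v u)
    (hB : ∀ u v, B u v = B v u) (hrec : RecurrentQuiver A B) :
    ∃ t4 : V → LV V, ∀ v, t4 v * t2 A B v =
      mono A (t3 A B) v + bL A 3 v * mono B (t3 A B) v := by
  have : ∀ v, t2 A B v ∣ mono A (t3 A B) v + bL A 3 v * mono B (t3 A B) v := by
    intro v
    rw [← evv_eq_zero_iff, map_add, map_mul, map_mono, map_mono]
    refine num_vanish hA hB hrec (gv 1) (fun u => evv A B v (t2 A B u)) _
      (fun u => evv A B v (bL A 1 u : LV V)) (fun u => evv A B v (bL A 2 u : LV V))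
      (fun u => evv A B v (bL A 3 u : LV V)) v (evv_t2 A B v) ?_ ?_ ?_
    · intro u
      have h := congrArg (evv A B v) (gv_mul_t3 A B u)
      rwa [map_mul, map_add, map_mul, evv_gv A B v u 1 (by simp), map_mono, map_mono] at h
    · have h := congrArg (evv A B v) (bL_mul A 1 v)
      rwa [map_mul, map_mono] at h
    · rw [bL, evv_gv3, add_neg_cancel]
  choose c hc using this
  exact ⟨c, fun v => by rw [hc v, mul_comm]⟩

end Seeds

/-! ### Coprimality of `T 2` with `T 3` and `T 4` -/

section Coprime

variable {V : Type} [Fintype V] [DecidableEq V]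

/-- The unit `τ ε - 1` of the dual numbers. -/
noncomputable def dunit (τ : ℝ) : (DualNumber ℝ)ˣ where
  val := algebraMap ℝ _ τ * DualNumber.eps - 1
  inv := -(1 + algebraMap ℝ _ τ * DualNumber.eps)
  val_inv := by
    have h : (DualNumber.eps : DualNumber ℝ) * DualNumber.eps = 0 := DualNumber.eps_mul_eps
    linear_combination -(algebraMap ℝ (DualNumber ℝ) τ) ^ 2 * h
  inv_val := by
    have h : (DualNumber.eps : DualNumber ℝ) * DualNumber.eps = 0 := DualNumber.eps_mul_eps
    linear_combination -(algebraMap ℝ (DualNumber ℝ) τ) ^ 2 * h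

/-- The values of `β 1` at the test point. -/
noncomputable def tb1 (v : V) (τ : ℝˣ) (u : V) : (DualNumber ℝ)ˣ :=
  if u = v then dunit τ else 1

/-- The test point in the dual numbers at which `T 2 v` takes the value `ε`. -/
noncomputable def tpt (A : V → V → ℕ) (v : V) (τ : ℝˣ) : Fin 4 × V → (DualNumber ℝ)ˣ
  | (0, u) => if u = v then Units.map (algebraMap ℝ (DualNumber ℝ) : ℝ →* DualNumber ℝ) τ else 1
  | (1, _) => 1
  | (2, u) => mono A (tb1 v τ) u
  | (3, u) => tb1 v τ u

/-- The values of `T 2` at the test point. -/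
noncomputable def tx2 (v u : V) : DualNumber ℝ := if u = v then DualNumber.eps else 2

variable (A B : V → V → ℕ)

theorem lev_tpt_t2 (v : V) (τ : ℝˣ) (u : V) : lev (tpt A v τ) (t2 A B u) = tx2 v u := by
  have h := congrArg (lev (tpt A v τ)) (gv_mul_t2 A B u)
  simp only [map_mul, map_add, map_mono, gv, lev_lvar, tpt, Units.val_one, mono_one, mul_one] at h
  by_cases hu : u = v
  · subst hu
    simp only [tb1, if_true, dunit] at h
    have h' : ((Units.map (algebraMap ℝ (DualNumber ℝ) : ℝ →* DualNumber ℝ) τ :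
      (DualNumber ℝ)ˣ) : DualNumber ℝ) = algebraMap ℝ (DualNumber ℝ) τ := rfl
    rw [add_sub_cancel, ← h', Units.mul_right_inj] at h
    simp [h, tx2]
  · simp only [tb1, if_neg hu, Units.val_one, one_mul] at h
    rw [h, tx2, if_neg hu]
    norm_num

theorem lev_tpt_b2 (v : V) (τ : ℝˣ) (u : V) : lev (tpt A v τ) (bL A 2 u : LV V) = 1 := by
  have h := congrArg (lev (tpt A v τ)) (bL_mul A 0 u)
  simp only [map_mul, map_mono, bL, gv, lev_lvar, tpt] at h ⊢
  rw [← val_mono] at h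
  rw [← Units.val_one, ← Units.val_one, ← Units.mul_left_inj (mono A (tb1 v τ) u)]
  simpa using h

theorem lev_tpt_b3 (v : V) (τ : ℝˣ) (u : V) :
    lev (tpt A v τ) (bL A 3 u : LV V) * tb1 v τ u = 1 := by
  have h := congrArg (lev (tpt A v τ)) (bL_mul A 1 u)
  rw [map_mul, map_mono] at h
  simp only [Nat.reduceAdd, lev_tpt_b2, mono_one] at h
  rw [← h]
  simp [bL, gv, lev_lvar, tpt]

/-- The values of `T 3` at the test point. -/
noncomputable def tx3 (v u : V) : DualNumber ℝ := mono A (tx2 v) u + mono B (tx2 v) u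

theorem lev_tpt_t3 (v : V) (τ : ℝˣ) (u : V) : lev (tpt A v τ) (t3 A B u) = tx3 A B v u := by
  have h := congrArg (lev (tpt A v τ)) (gv_mul_t3 A B u)
  simp only [map_mul, map_add, map_mono, lev_tpt_t2, lev_tpt_b2, one_mul] at h
  rw [gv, lev_lvar, tpt] at h
  simpa [tx3] using h

variable {A B}

theorem fst_two : (2 : DualNumber ℝ).fst = 2 := by
  rw [← one_add_one_eq_two, TrivSqZeroExt.fst_add, TrivSqZeroExt.fst_one, one_add_one_eq_two]

omit [DecidableEq V] in
theorem fst_mono (C : V → V → ℕ) (x : V → DualNumber ℝ) (u : V) :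
    (mono C x u).fst = mono C (fun w => (x w).fst) u :=
  map_mono (TrivSqZeroExt.fstHom ℝ ℝ ℝ) C x u

omit [DecidableEq V] in
theorem mono_pos_of {C : V → V → ℕ} {x : V → ℝ} {u : V} (h : ∀ w, C u w ≠ 0 → 0 < x w) :
    0 < mono C x u := by
  refine Finset.prod_pos fun w _ => ?_
  by_cases hw : C u w = 0
  · simp [hw]
  · exact pow_pos (h w hw) _

theorem tx3_pos (hAB : ∀ u v, A u v * B u v = 0) (v u : V) : 0 < (tx3 A B v u).fst := by
  have hx : ∀ w, 0 ≤ (tx2 v w).fst := by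
    intro w
    by_cases hw : w = v <;> simp [tx2, hw, fst_two]
  have hx' : ∀ w, w ≠ v → 0 < (tx2 v w).fst := by
    intro w hw
    simp [tx2, hw, fst_two]
  have hn : ∀ C : V → V → ℕ, 0 ≤ mono C (fun w => (tx2 v w).fst) u :=
    fun C => Finset.prod_nonneg fun w _ => pow_nonneg (hx w) _
  have hp : ∀ C : V → V → ℕ, C u v = 0 → 0 < mono C (fun w => (tx2 v w).fst) u :=
    fun C hC => mono_pos_of fun w hw => hx' w (by rintro rfl; exact hw hC)
  rw [tx3, TrivSqZeroExt.fst_add, fst_mono, fst_mono]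
  rcases mul_eq_zero.1 (hAB u v) with h | h
  · exact add_pos_of_pos_of_nonneg (hp A h) (hn B)
  · exact add_pos_of_nonneg_of_pos (hn A) (hp B h)

/-- At the test point `T 2 v` is nilpotent, while `T 3 w` has positive real part. -/
theorem t2_not_dvd_t3 (hAB : ∀ u v, A u v * B u v = 0) (v w : V) : ¬ t2 A B v ∣ t3 A B w := by
  rintro ⟨c, hc⟩
  have h := congrArg (fun a => (lev (tpt A v 1) a).fst) hc
  simp only [map_mul, lev_tpt_t3, lev_tpt_t2] at h
  have := tx3_pos hAB v w
  rw [h] at this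
  simp [tx2] at this

/-- If `T 2 v` divided `T 4 w`, evaluation of the relation defining `T 4 w` at the test points would
contradict positivity of the monomials in `T 3`. For `w = v` the product `T 4 v * T 2 v` would be
divisible by `T 2 v ^ 2`, which vanishes at the test points, and the coefficients of `ε` at `τ = 1`
and `τ = 2` are incompatible. -/
theorem t2_not_dvd_t4 (hAB : ∀ u v, A u v * B u v = 0) {t4 : V → LV V}
    (h4 : ∀ v, t4 v * t2 A B v = mono A (t3 A B) v + bL A 3 v * mono B (t3 A B) v)
    (v w : V) : ¬ t2 A B v ∣ t4 w := by
  rintro ⟨c, hc⟩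
  have h := fun τ => congrArg (lev (tpt A v τ)) (h4 w)
  simp only [hc, map_mul, map_add, map_mono, lev_tpt_t3, lev_tpt_t2] at h
  have hp : ∀ C : V → V → ℕ, 0 < (mono C (tx3 A B v) w).fst := fun C => by
    rw [fst_mono]; exact mono_pos_of fun u _ => tx3_pos hAB v u
  by_cases hw : w = v
  · subst hw
    have key : ∀ τ : ℝˣ, 0 = (algebraMap ℝ _ (τ : ℝ) * DualNumber.eps - 1) *
        mono A (tx3 A B w) w + mono B (tx3 A B w) w := by
      intro τ
      have h1 := h τ
      have h2 := lev_tpt_b3 A w τ w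
      have h3 : (tb1 w τ w : DualNumber ℝ) = algebraMap ℝ _ (τ : ℝ) * DualNumber.eps - 1 := by
        simp [tb1, dunit]
      have h4 : tx2 w w = DualNumber.eps := by simp [tx2]
      have h5 : (DualNumber.eps : DualNumber ℝ) * DualNumber.eps = 0 := DualNumber.eps_mul_eps
      rw [h3] at h2
      rw [h4] at h1
      linear_combination (algebraMap ℝ _ (τ : ℝ) * DualNumber.eps - 1) * h1 +
        mono B (tx3 A B w) w * h2 -
        (algebraMap ℝ _ (τ : ℝ) * DualNumber.eps - 1) * (lev (tpt A w τ)) c * h5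
    have k1 := congrArg TrivSqZeroExt.snd (key 1)
    have k2 := congrArg TrivSqZeroExt.snd (key (Units.mk0 2 (by norm_num)))
    have := hp A
    have e2 : (algebraMap ℝ (DualNumber ℝ) 2).fst = 2 := rfl
    simp [TrivSqZeroExt.snd_mul, e2] at k1 k2
    linarith
  · have h1 := congrArg TrivSqZeroExt.fst (h 1)
    have h2 := lev_tpt_b3 A v 1 w
    simp only [tb1, if_neg hw, Units.val_one, mul_one] at h2
    rw [h2, one_mul] at h1
    have := hp A
    have := hp B
    simp [tx2, hw] at h1
    linarith

end Coprime

/-! ### The Laurent phenomenon -/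

section Laurent

variable {V : Type} [Fintype V]

/-- A nowhere vanishing solution of the `T`-system with coefficients in a field. -/
structure TSol {S : Type} [Field S] (A B : V → V → ℕ) (T β : ℕ → V → S) : Prop where
  e1 : ∀ n v, T (n + 2) v * T n v = mono A (T (n + 1)) v + β (n + 1) v * mono B (T (n + 1)) v
  e2 : ∀ n v, β (n + 2) v * β n v = mono A (β (n + 1)) v
  hT : ∀ n v, T n v ≠ 0
  hb : ∀ n v, β n v ≠ 0

theorem TSol.shift {S : Type} [Field S] {A B : V → V → ℕ} {T β : ℕ → V → S}
    (h : TSol A B T β) (k : ℕ) : TSol A B (fun n => T (n + k)) (fun n => β (n + k)) where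
  e1 := fun n v => by
    have := h.e1 (n + k) v
    rwa [add_right_comm n k 2, add_right_comm n k 1] at this
  e2 := fun n v => by
    have := h.e2 (n + k) v
    rwa [add_right_comm n k 2, add_right_comm n k 1] at this
  hT := fun n v => h.hT _ v
  hb := fun n v => h.hb _ v

/-- The initial data of a solution, as a point for Laurent polynomials. -/
def TSol.pt {S : Type} [Field S] {A B : V → V → ℕ} {T β : ℕ → V → S}
    (h : TSol A B T β) : Fin 4 × V → Sˣ
  | (0, v) => Units.mk0 (T 0 v) (h.hT 0 v)
  | (1, v) => Units.mk0 (T 1 v) (h.hT 1 v)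
  | (2, v) => Units.mk0 (β 0 v) (h.hb 0 v)
  | (3, v) => Units.mk0 (β 1 v) (h.hb 1 v)

variable [DecidableEq V] (A B : V → V → ℕ)

/-- The field of rational functions in the initial data. -/
abbrev LK (V : Type) [Fintype V] [DecidableEq V] : Type := FractionRing (LV V)

/-- The generic solution of the `T`-system with coefficients. -/
noncomputable def genT : ℕ → V → LK V
  | 0 => fun v => algebraMap (LV V) (LK V) (gv 0 v)
  | 1 => fun v => algebraMap (LV V) (LK V) (gv 1 v)
  | n + 2 => fun v => (mono A (genT (n + 1)) v +
      algebraMap (LV V) (LK V) (bL A (n + 1) v) * mono B (genT (n + 1)) v) / genT n v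

/-- Fractions with numerator and denominator positive at the point `(1, …, 1)`. -/
def GPos (x : LK V) : Prop :=
  ∃ a b : LV V, 0 < lev (S := ℝ) (fun _ => 1) a ∧ 0 < lev (S := ℝ) (fun _ => 1) b ∧
    x * algebraMap (LV V) (LK V) b = algebraMap (LV V) (LK V) a

variable {A B}

theorem algebraMap_ne_of_pos {b : LV V} (hb : 0 < lev (S := ℝ) (fun _ => 1) b) :
    algebraMap (LV V) (LK V) b ≠ 0 := by
  intro h
  have : b = 0 := (map_eq_zero_iff _ (IsFractionRing.injective (LV V) (LK V))).1 h
  rw [this, map_zero] at hb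
  exact lt_irrefl _ hb

theorem GPos.ne_zero {x : LK V} (h : GPos x) : x ≠ 0 := by
  obtain ⟨a, b, ha, hb, h⟩ := h
  rintro rfl
  rw [zero_mul] at h
  exact algebraMap_ne_of_pos ha h.symm

theorem GPos.of {a : LV V} (ha : 0 < lev (S := ℝ) (fun _ => 1) a) :
    GPos (algebraMap (LV V) (LK V) a) :=
  ⟨a, 1, ha, by simp, by simp⟩

theorem GPos.mul {x y : LK V} (hx : GPos x) (hy : GPos y) : GPos (x * y) := by
  obtain ⟨a, b, ha, hb, h⟩ := hx
  obtain ⟨a', b', ha', hb', h'⟩ := hy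
  refine ⟨a * a', b * b', by rw [map_mul]; positivity, by rw [map_mul]; positivity, ?_⟩
  rw [map_mul, map_mul, ← h, ← h']
  ring

theorem GPos.add {x y : LK V} (hx : GPos x) (hy : GPos y) : GPos (x + y) := by
  obtain ⟨a, b, ha, hb, h⟩ := hx
  obtain ⟨a', b', ha', hb', h'⟩ := hy
  refine ⟨a * b' + a' * b, b * b', ?_, by rw [map_mul]; positivity, ?_⟩
  · rw [map_add, map_mul, map_mul]; positivity
  · rw [map_add, map_mul, map_mul, map_mul, ← h, ← h']
    ring

theorem GPos.div {x y : LK V} (hx : GPos x) (hy : GPos y) : GPos (x / y) := by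
  have hy0 := hy.ne_zero
  obtain ⟨a, b, ha, hb, h⟩ := hx
  obtain ⟨a', b', ha', hb', h'⟩ := hy
  refine ⟨a * b', b * a', by rw [map_mul]; positivity, by rw [map_mul]; positivity, ?_⟩
  rw [map_mul, map_mul, ← h, ← h']
  field_simp

theorem GPos.mono {C : V → V → ℕ} {x : V → LK V} (hx : ∀ u, GPos (x u)) (v : V) :
    GPos (mono C x v) := by
  have h1 : GPos (1 : LK V) := by simpa using GPos.of (a := (1 : LV V)) (by simp)
  refine Finset.prod_induction _ GPos (fun _ _ => GPos.mul) h1 fun u _ => ?_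
  induction C v u with
  | zero => simpa using h1
  | succ n ih => rw [pow_succ]; exact ih.mul (hx u)

theorem lev_one_bL (n : ℕ) (v : V) : lev (S := ℝ) (fun _ => 1) (bL A n v : LV V) = 1 := by
  induction n using Nat.twoStepInduction generalizing v with
  | zero => simp [bL, gv, lev_lvar]
  | one => simp [bL, gv, lev_lvar]
  | more n ih1 ih2 =>
    have h := congrArg (lev (S := ℝ) (fun _ => 1)) (bL_mul A n v)
    rw [map_mul, map_mono, ih1] at h
    simpa [ih2, mono_one] using h

/-- The generic solution never vanishes, because no subtraction occurs in the recursion. -/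
theorem genT_pos (n : ℕ) (v : V) : GPos (genT A B n v) := by
  induction n using Nat.twoStepInduction generalizing v with
  | zero => exact GPos.of (by simp [gv, lev_lvar])
  | one => exact GPos.of (by simp [gv, lev_lvar])
  | more n ih1 ih2 =>
    rw [genT]
    refine GPos.div (GPos.add (GPos.mono ih2 v) (GPos.mul (GPos.of ?_) (GPos.mono ih2 v))) (ih1 v)
    rw [lev_one_bL]; exact one_pos

theorem genSol : TSol A B (genT A B) (fun n v => algebraMap (LV V) (LK V) (bL A n v)) where
  e1 := fun n v => by rw [genT, div_mul_cancel₀ _ (genT_pos n v).ne_zero]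
  e2 := fun n v => by rw [← map_mul, bL_mul]; simp [mono]
  hT := fun n v => (genT_pos n v).ne_zero
  hb := fun n v => algebraMap_ne_of_pos (by rw [lev_one_bL]; exact one_pos)

theorem TSol.lev_bL {S : Type} [Field S] [Algebra ℝ S] {T β : ℕ → V → S}
    (h : TSol A B T β) (n : ℕ) (v : V) : lev h.pt (bL A n v : LV V) = β n v := by
  induction n using Nat.twoStepInduction generalizing v with
  | zero => simp [bL, gv, lev_lvar, TSol.pt]
  | one => simp [bL, gv, lev_lvar, TSol.pt]
  | more n ih1 ih2 =>
    have h1 := congrArg (lev h.pt) (bL_mul A n v)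
    rw [map_mul, map_mono, ih1] at h1
    simp only [ih2] at h1
    rw [← h.e2] at h1
    exact mul_right_cancel₀ (h.hb n v) h1

/-- The Laurent polynomials of the generic solution evaluate correctly at every solution. -/
theorem TSol.lev_genT {S : Type} [Field S] [Algebra ℝ S] {T β : ℕ → V → S}
    (h : TSol A B T β) {n : ℕ}
    (hL : ∀ m ≤ n, ∀ v, ∃ p, algebraMap (LV V) (LK V) p = genT A B m v) :
    ∀ m ≤ n, ∀ v p, algebraMap (LV V) (LK V) p = genT A B m v → lev h.pt p = T m v := by
  have hinj := IsFractionRing.injective (LV V) (LK V)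
  intro m
  induction m using Nat.twoStepInduction with
  | zero =>
    intro _ v p hp
    rw [genT] at hp
    rw [hinj hp]
    simp [gv, lev_lvar, TSol.pt]
  | one =>
    intro _ v p hp
    rw [genT] at hp
    rw [hinj hp]
    simp [gv, lev_lvar, TSol.pt]
  | more m ih1 ih2 =>
    intro hm v p hp
    obtain ⟨q, hq⟩ := hL m (by omega) v
    choose r hr using fun u => hL (m + 1) (by omega) u
    have e : p * q = mono A r v + bL A (m + 1) v * mono B r v := by
      apply hinj
      have := genSol (A := A) (B := B) |>.e1 m v
      rw [← hp, ← hq] at this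
      rw [map_mul, this, map_add, map_mul]
      simp [mono, hr]
    have e' := congrArg (lev h.pt) e
    rw [map_mul, map_add, map_mul, map_mono, map_mono, h.lev_bL, ih1 (by omega) v q hq] at e'
    have : ∀ u, lev h.pt (r u) = T (m + 1) u := fun u => ih2 (by omega) u _ (hr u)
    simp only [this] at e'
    rw [← h.e1] at e'
    exact mul_right_cancel₀ (h.hT m v) e'

/-- The image of a Laurent polynomial has bounded denominators. -/
theorem lev_denom (x : Fin 4 × V → (LK V)ˣ) (d : LV V)
    (h1 : ∀ i, ∃ a, (x i : LK V) = algebraMap (LV V) (LK V) a)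
    (h2 : ∀ i, ∃ a, ((x i)⁻¹ : (LK V)ˣ) * algebraMap (LV V) (LK V) d =
      algebraMap (LV V) (LK V) a) (p : LV V) :
    ∃ (e : ℕ) (a : LV V), lev x p * algebraMap (LV V) (LK V) (d ^ e) =
      algebraMap (LV V) (LK V) a := by
  induction p using lr_induction with
  | hc r =>
    refine ⟨0, algebraMap ℝ _ r, ?_⟩
    rw [AlgHom.commutes, pow_zero, map_one, mul_one, ← IsScalarTower.algebraMap_apply]
  | ha a b ha hb =>
    obtain ⟨e, a', ha'⟩ := ha
    obtain ⟨f, b', hb'⟩ := hb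
    refine ⟨e + f, a' * d ^ f + b' * d ^ e, ?_⟩
    rw [map_add, map_add, map_mul, map_mul, ← ha', ← hb', pow_add, map_mul]
    ring
  | hm a b ha hb =>
    obtain ⟨e, a', ha'⟩ := ha
    obtain ⟨f, b', hb'⟩ := hb
    refine ⟨e + f, a' * b', ?_⟩
    rw [map_mul, map_mul, ← ha', ← hb', pow_add, map_mul]
    ring
  | hv i =>
    obtain ⟨a, ha⟩ := h1 i
    exact ⟨0, a, by rw [lev_lvar, ha, pow_zero, map_one, mul_one]⟩
  | hi i =>
    obtain ⟨a, ha⟩ := h2 i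
    exact ⟨1, a, by rw [algHom_unit_inv _ _ _ (lev_lvar x i), pow_one, ha]⟩

/-- A prime which does not divide one denominator can be removed from another one. -/
theorem denom_descent {k : LK V} {P M Q : LV V} (hP : Prime P) (hPM : ¬ P ∣ M)
    (hM : ∃ a, k * algebraMap (LV V) (LK V) M = algebraMap (LV V) (LK V) a)
    (hQ : ∃ a, k * algebraMap (LV V) (LK V) (P * Q) = algebraMap (LV V) (LK V) a) :
    ∃ a, k * algebraMap (LV V) (LK V) Q = algebraMap (LV V) (LK V) a := by
  have hinj := IsFractionRing.injective (LV V) (LK V)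
  obtain ⟨a, ha⟩ := hQ
  obtain ⟨b, hb⟩ := hM
  have e : a * M = P * (b * Q) := by
    apply hinj
    simp only [map_mul] at ha ⊢
    rw [← ha, ← hb]
    ring
  obtain ⟨c, rfl⟩ := (hP.dvd_or_dvd ⟨_, e⟩).resolve_right hPM
  refine ⟨c, ?_⟩
  have hP0 : algebraMap (LV V) (LK V) P ≠ 0 := by
    rw [Ne, map_eq_zero_iff _ hinj]; exact hP.ne_zero
  rw [map_mul, map_mul] at ha
  apply mul_left_cancel₀ hP0
  rw [← ha]
  ring

/-- **Laurent phenomenon** for the `T`-system with coefficients. -/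
theorem laurent (hA : ∀ u v, A u v = A v u) (hB : ∀ u v, B u v = B v u)
    (hAB : ∀ u v, A u v * B u v = 0) (hrec : RecurrentQuiver A B) (n : ℕ) (v : V) :
    ∃ p, algebraMap (LV V) (LK V) p = genT A B n v := by
  obtain ⟨t4, ht4⟩ := t4_exists hA hB hrec
  have gs := genSol (A := A) (B := B)
  have e2 : ∀ v, algebraMap (LV V) (LK V) (t2 A B v) = genT A B 2 v := by
    intro v
    apply mul_right_cancel₀ (gs.hT 0 v)
    rw [gs.e1, genT, ← map_mul, mul_comm (t2 A B v), gv_mul_t2, map_add, map_mul]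
    simp [mono, genT, bL]
  have e3 : ∀ v, algebraMap (LV V) (LK V) (t3 A B v) = genT A B 3 v := by
    intro v
    apply mul_right_cancel₀ (gs.hT 1 v)
    rw [gs.e1, genT, ← map_mul, mul_comm (t3 A B v), gv_mul_t3, map_add, map_mul]
    simp [mono, e2]
  have e4 : ∀ v, algebraMap (LV V) (LK V) (t4 v) = genT A B 4 v := by
    intro v
    apply mul_right_cancel₀ (gs.hT 2 v)
    rw [gs.e1, ← e2, ← map_mul, ht4, map_add, map_mul]
    simp [mono, e3]
  induction n using Nat.strong_induction_on generalizing v with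
  | _ n ih =>
  match n, ih with
  | 0, _ => exact ⟨_, rfl⟩
  | 1, _ => exact ⟨_, rfl⟩
  | 2, _ => exact ⟨_, e2 v⟩
  | 3, _ => exact ⟨_, e3 v⟩
  | 4, _ => exact ⟨_, e4 v⟩
  | n + 5, ih =>
    have hb : ∀ m u, ∃ a, ((algebraMap (LV V) (LK V) (bL A m u))⁻¹ : LK V) =
        algebraMap (LV V) (LK V) a := by
      intro m u
      refine ⟨((bL A m u)⁻¹ : (LV V)ˣ), inv_eq_of_mul_eq_one_right ?_⟩
      rw [← map_mul]; simp
    have hdvd : ∀ {x : LK V} {a d : LV V}, x ≠ 0 → algebraMap (LV V) (LK V) a = x → a ∣ d →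
        ∃ c, x⁻¹ * algebraMap (LV V) (LK V) d = algebraMap (LV V) (LK V) c := by
      rintro x a d hx rfl ⟨c, rfl⟩
      exact ⟨c, by rw [map_mul, inv_mul_cancel_left₀ hx]⟩
    have hmul : ∀ {x : LK V} {d : LV V}, (∃ a, x = algebraMap (LV V) (LK V) a) →
        ∃ c, x * algebraMap (LV V) (LK V) d = algebraMap (LV V) (LK V) c := by
      rintro x d ⟨a, rfl⟩
      exact ⟨a * d, by rw [map_mul]⟩
    -- expansion in the seed at times `1, 2`
    have s1 : ∃ (e : ℕ) (a : LV V), genT A B (n + 5) v *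
        algebraMap (LV V) (LK V) ((∏ u, t2 A B u) ^ e) = algebraMap (LV V) (LK V) a := by
      obtain ⟨p, hp⟩ := ih (n + 4) (by omega) v
      have h := (gs.shift 1).lev_genT (n := n + 4) (fun m hm v => ih m (by omega) v) (n + 4)
        le_rfl v p hp
      rw [show n + 5 = n + 4 + 1 by ring, ← h]
      apply lev_denom
      · rintro ⟨k, u⟩
        fin_cases k
        · exact ⟨_, rfl⟩
        · exact ⟨_, (e2 u).symm⟩
        · exact ⟨_, rfl⟩
        · exact ⟨_, rfl⟩
      · rintro ⟨k, u⟩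
        fin_cases k
        · refine hmul ⟨((gv 1 u)⁻¹ : (LV V)ˣ), ?_⟩
          refine inv_eq_of_mul_eq_one_right ?_
          change algebraMap (LV V) (LK V) (gv 1 u : LV V) * _ = 1
          rw [← map_mul]; simp
        · exact hdvd (gs.hT 2 u) (e2 u) (Finset.dvd_prod_of_mem _ (Finset.mem_univ u))
        · exact hmul (hb 1 u)
        · exact hmul (hb 2 u)
    -- expansion in the seed at times `3, 4`
    have s3 : ∃ (e : ℕ) (a : LV V), genT A B (n + 5) v *
        algebraMap (LV V) (LK V) (((∏ u, t3 A B u) * ∏ u, t4 u) ^ e) =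
          algebraMap (LV V) (LK V) a := by
      obtain ⟨p, hp⟩ := ih (n + 2) (by omega) v
      have h := (gs.shift 3).lev_genT (n := n + 2) (fun m hm v => ih m (by omega) v) (n + 2)
        le_rfl v p hp
      rw [show n + 5 = n + 2 + 3 by ring, ← h]
      apply lev_denom
      · rintro ⟨k, u⟩
        fin_cases k
        · exact ⟨_, (e3 u).symm⟩
        · exact ⟨_, (e4 u).symm⟩
        · exact ⟨_, rfl⟩
        · exact ⟨_, rfl⟩
      · rintro ⟨k, u⟩
        fin_cases k
        · exact hdvd (gs.hT 3 u) (e3 u)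
            ((Finset.dvd_prod_of_mem _ (Finset.mem_univ u)).mul_right _)
        · exact hdvd (gs.hT 4 u) (e4 u)
            ((Finset.dvd_prod_of_mem _ (Finset.mem_univ u)).mul_left _)
        · exact hmul (hb 3 u)
        · exact hmul (hb 4 u)
    obtain ⟨e, hs1⟩ := s1
    obtain ⟨f, hs3⟩ := s3
    set k := genT A B (n + 5) v
    have good : ∀ u Q, (∃ a, k * algebraMap (LV V) (LK V) (t2 A B u * Q) =
        algebraMap (LV V) (LK V) a) →
        ∃ a, k * algebraMap (LV V) (LK V) Q = algebraMap (LV V) (LK V) a := by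
      intro u Q hQ
      refine denom_descent (t2_prime A B u) ?_ hs3 hQ
      intro hd
      have hpr := t2_prime A B u
      rcases hpr.dvd_or_dvd (hpr.dvd_of_dvd_pow hd) with h | h
      · obtain ⟨w, -, hw⟩ := hpr.exists_mem_finset_dvd h
        exact t2_not_dvd_t3 hAB u w hw
      · obtain ⟨w, -, hw⟩ := hpr.exists_mem_finset_dvd h
        exact t2_not_dvd_t4 hAB ht4 u w hw
    have goodprod : ∀ Q, (∃ a, k * algebraMap (LV V) (LK V) ((∏ u, t2 A B u) * Q) =
        algebraMap (LV V) (LK V) a) →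
        ∃ a, k * algebraMap (LV V) (LK V) Q = algebraMap (LV V) (LK V) a := by
      refine Finset.prod_induction (t2 A B) (fun a => ∀ Q, (∃ c, k * algebraMap (LV V) (LK V)
        (a * Q) = algebraMap (LV V) (LK V) c) → ∃ c, k * algebraMap (LV V) (LK V) Q =
          algebraMap (LV V) (LK V) c) ?_ ?_ ?_
      · intro a b ha hb Q hQ
        exact hb Q (ha (b * Q) (by rwa [← mul_assoc]))
      · intro Q hQ
        rwa [one_mul] at hQ
      · intro u _
        exact good u
    have final : ∀ e : ℕ, (∃ a, k * algebraMap (LV V) (LK V) ((∏ u, t2 A B u) ^ e) =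
        algebraMap (LV V) (LK V) a) → ∃ a, k = algebraMap (LV V) (LK V) a := by
      intro e
      induction e with
      | zero => intro h; simpa using h
      | succ e ihe => intro h; exact ihe (goodprod _ (by rwa [← pow_succ']))
    obtain ⟨a, ha⟩ := final e hs1
    exact ⟨a, ha.symm⟩

end Laurent

/-! ### Interpolation, and the deformed `T`-system -/

section Interp

open Polynomial Filter Topology

/-- A polynomial which is `O(θ ^ d)` at `0` is divisible by `X ^ d`. -/
theorem poly_factor (d : ℕ) (Q : ℝ[X]) (L : ℝ)
    (h : Tendsto (fun θ : ℝ => Q.eval θ / θ ^ d) (𝓝[>] 0) (𝓝 L)) :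
    ∃ q : ℝ[X], Q = X ^ d * q ∧ q.eval 0 = L := by
  have hcont : ∀ P : ℝ[X], Tendsto (fun θ : ℝ => P.eval θ) (𝓝[>] 0) (𝓝 (P.eval 0)) :=
    fun P => (P.continuous.tendsto 0).mono_left nhdsWithin_le_nhds
  induction d generalizing Q with
  | zero =>
    refine ⟨Q, by simp, ?_⟩
    simp only [pow_zero, div_one] at h
    exact tendsto_nhds_unique (hcont Q) h
  | succ d ih =>
    have h0 : Q.eval 0 = 0 := by
      have h1 : Tendsto (fun θ : ℝ => (Q.eval θ / θ ^ (d + 1)) * θ ^ (d + 1)) (𝓝[>] 0)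
          (𝓝 (L * 0)) := by
        refine h.mul ?_
        have : Tendsto (fun θ : ℝ => θ ^ (d + 1)) (𝓝[>] 0) (𝓝 ((0 : ℝ) ^ (d + 1))) :=
          ((continuous_pow (d + 1)).tendsto 0).mono_left nhdsWithin_le_nhds
        simpa using this
      rw [mul_zero] at h1
      refine tendsto_nhds_unique (hcont Q) (h1.congr' ?_)
      filter_upwards [self_mem_nhdsWithin] with θ hθ
      have : (θ : ℝ) ≠ 0 := ne_of_gt hθ
      field_simp
    obtain ⟨R, rfl⟩ : X ∣ Q := by
      rw [X_dvd_iff, coeff_zero_eq_eval_zero, h0]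
    obtain ⟨q, rfl, hq⟩ := ih R (h.congr' (by
      filter_upwards [self_mem_nhdsWithin] with θ hθ
      have : (θ : ℝ) ≠ 0 := ne_of_gt hθ
      simp only [eval_mul, eval_X, pow_succ]
      field_simp))
    exact ⟨q, by ring, hq⟩

/-- If `Q(θ) / θ ^ d` has a limit at `0`, the limit is controlled by finitely many values,
with constants depending on `d` only. -/
theorem limit_interp (d : ℕ) : ∃ w : ℕ → ℝ, ∀ (Q : ℝ[X]) (L : ℝ), Q.natDegree ≤ 2 * d →
    Tendsto (fun θ : ℝ => Q.eval θ / θ ^ d) (𝓝[>] 0) (𝓝 L) →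
    L = ∑ j ∈ Finset.range (d + 1), w j * (Q.eval (1 + j : ℝ) / (1 + j : ℝ) ^ d) := by
  refine ⟨fun j => (Lagrange.basis (Finset.range (d + 1)) (fun j : ℕ => (1 + j : ℝ)) j).eval 0, ?_⟩
  intro Q L hdeg hlim
  obtain ⟨q, rfl, rfl⟩ := poly_factor d Q L hlim
  have hinj : Set.InjOn (fun j : ℕ => (1 + j : ℝ)) (Finset.range (d + 1)) := by
    intro a _ b _ hab
    simpa using hab
  have hq : q.degree < (Finset.range (d + 1)).card := by
    by_cases h0 : q = 0
    · rw [h0, degree_zero]; exact WithBot.bot_lt_coe _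
    · rw [natDegree_mul (pow_ne_zero _ X_ne_zero) h0, natDegree_X_pow] at hdeg
      rw [degree_eq_natDegree h0, Finset.card_range]
      exact_mod_cast (by omega : q.natDegree < d + 1)
  have := Lagrange.eq_interpolate hinj hq
  conv_lhs => rw [this]
  rw [Lagrange.interpolate_apply, eval_finsetSum]
  refine Finset.sum_congr rfl fun j _ => ?_
  have hj : (1 + j : ℝ) ≠ 0 := by positivity
  rw [eval_mul, eval_C, eval_mul, eval_pow, eval_X, mul_div_cancel_left₀ _ (pow_ne_zero d hj),
    mul_comm]

/-- Along a one-parameter family of points whose coordinates are monomials in `θ`, a Laurent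
polynomial is `θ ^ (-d)` times a polynomial of degree at most `2 d`. -/
theorem lev_poly {σ : Type} [Fintype σ] [DecidableEq σ] (k : σ → ℤ) (p : LR σ) :
    ∃ d : ℕ, ∀ (y : σ → ℝ) (x : ℝ → σ → ℝˣ),
      (∀ θ, 0 < θ → ∀ i, (x θ i : ℝ) = y i * θ ^ k i) →
      ∃ Q : ℝ[X], Q.natDegree ≤ 2 * d ∧ ∀ θ, 0 < θ → lev (x θ) p * θ ^ d = Q.eval θ := by
  have hmono : ∀ (m : ℤ) (z : ℝ), ∃ Q : ℝ[X], Q.natDegree ≤ 2 * m.natAbs ∧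
      ∀ θ : ℝ, 0 < θ → z * θ ^ m * θ ^ m.natAbs = Q.eval θ := by
    intro m z
    refine ⟨C z * X ^ (m + m.natAbs).toNat, (natDegree_C_mul_X_pow_le _ _).trans (by omega), ?_⟩
    intro θ hθ
    rw [eval_mul, eval_C, eval_pow, eval_X, mul_assoc, ← zpow_natCast θ (m.natAbs),
      ← zpow_add₀ hθ.ne', ← zpow_natCast θ (Int.toNat _), Int.toNat_of_nonneg (by omega)]
  induction p using lr_induction with
  | hc r =>
    refine ⟨0, fun y x _ => ⟨C r, by simp, fun θ _ => ?_⟩⟩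
    rw [AlgHom.commutes]
    simp
  | ha a b ha hb =>
    obtain ⟨d, hd⟩ := ha
    obtain ⟨e, he⟩ := hb
    refine ⟨d + e, fun y x hx => ?_⟩
    obtain ⟨Q, hQ, hQ'⟩ := hd y x hx
    obtain ⟨R, hR, hR'⟩ := he y x hx
    refine ⟨Q * X ^ e + R * X ^ d, ?_, fun θ hθ => ?_⟩
    · refine (natDegree_add_le _ _).trans (max_le ?_ ?_)
      · refine natDegree_mul_le.trans ?_
        rw [natDegree_X_pow]; omega
      · refine natDegree_mul_le.trans ?_
        rw [natDegree_X_pow]; omega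
    · simp only [map_add, eval_add, eval_mul, eval_pow, eval_X, ← hQ' θ hθ, ← hR' θ hθ]
      ring
  | hm a b ha hb =>
    obtain ⟨d, hd⟩ := ha
    obtain ⟨e, he⟩ := hb
    refine ⟨d + e, fun y x hx => ?_⟩
    obtain ⟨Q, hQ, hQ'⟩ := hd y x hx
    obtain ⟨R, hR, hR'⟩ := he y x hx
    refine ⟨Q * R, natDegree_mul_le.trans (by omega), fun θ hθ => ?_⟩
    simp only [map_mul, eval_mul, ← hQ' θ hθ, ← hR' θ hθ]
    ring
  | hv i =>
    refine ⟨(k i).natAbs, fun y x hx => ?_⟩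
    obtain ⟨Q, hQ, hQ'⟩ := hmono (k i) (y i)
    exact ⟨Q, hQ, fun θ hθ => by rw [lev_lvar, hx θ hθ, hQ' θ hθ]⟩
  | hi i =>
    refine ⟨(-k i).natAbs, fun y x hx => ?_⟩
    obtain ⟨Q, hQ, hQ'⟩ := hmono (-k i) (y i)⁻¹
    refine ⟨Q, hQ, fun θ hθ => ?_⟩
    rw [algHom_unit_inv _ _ _ (lev_lvar (x θ) i), Units.val_inv_eq_inv_val, hx θ hθ, mul_inv,
      ← zpow_neg, hQ' θ hθ]

end Interp

section Deform

open Filter Topology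

variable {W : Type} [Fintype W]

/-- The `T`-system deformed by the parameter `θ`: at the vertex `v` and time `n + 1` the second
(resp. first) monomial is weighted by `θ ^ |coef|` when `coef` is positive (resp. negative). -/
noncomputable def Usol (A B : W → W → ℕ) (θ : ℝ) (x0 x1 : W → ℝ) : ℕ → W → ℝ
  | 0 => x0
  | 1 => x1
  | n + 2 => fun v => (θ ^ (-coef A B (n + 1) v).toNat * mono A (Usol A B θ x0 x1 (n + 1)) v +
      θ ^ (coef A B (n + 1) v).toNat * mono B (Usol A B θ x0 x1 (n + 1)) v) /
        Usol A B θ x0 x1 n v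

/-- The exponents of `θ` by which the deformed system is rescaled to one with coefficients. -/
def gexp (A B : W → W → ℕ) : ℕ → W → ℤ
  | 0 => 0
  | 1 => 0
  | n + 2 => fun v => max (-coef A B (n + 1) v) 0 + ∑ u, (A v u : ℤ) * gexp A B (n + 1) u -
      gexp A B n v

/-- The exponents of the coefficients of the rescaled system. -/
def gcoef (A B : W → W → ℕ) (n : ℕ) (v : W) : ℤ :=
  coef A B n v + ∑ u, (B v u : ℤ) * gexp A B n u - ∑ u, (A v u : ℤ) * gexp A B n u

/-- By commutativity of `A` and `B`, the exponents `gcoef` satisfy the linear recursion that makes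
`θ ^ gcoef` a system of coefficients. -/
theorem gcoef_rec {A B : W → W → ℕ} (hrec : RecurrentQuiver A B) (n : ℕ) (v : W) :
    gcoef A B (n + 2) v + gcoef A B n v = ∑ u, (A v u : ℤ) * gcoef A B (n + 1) u := by
  have hsum : ∀ C : W → W → ℕ, ∑ u, (C v u : ℤ) * gexp A B (n + 2) u =
      ∑ u, (C v u : ℤ) * max (-coef A B (n + 1) u) 0 +
      ∑ w, (∑ u, (C v u : ℤ) * A u w) * gexp A B (n + 1) w - ∑ u, (C v u : ℤ) * gexp A B n u := by
    intro C
    have : ∑ w, (∑ u, (C v u : ℤ) * A u w) * gexp A B (n + 1) w =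
        ∑ u, (C v u : ℤ) * ∑ w, (A u w : ℤ) * gexp A B (n + 1) w := by
      simp only [Finset.sum_mul, Finset.mul_sum]
      rw [Finset.sum_comm]
      exact Finset.sum_congr rfl fun _ _ => Finset.sum_congr rfl fun _ _ => by ring
    rw [this, ← Finset.sum_add_distrib, ← Finset.sum_sub_distrib]
    exact Finset.sum_congr rfl fun u _ => by rw [gexp]; ring
  have hAB : ∑ w, (∑ u, (B v u : ℤ) * A u w) * gexp A B (n + 1) w =
      ∑ u, (A v u : ℤ) * ∑ w, (B u w : ℤ) * gexp A B (n + 1) w := by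
    have h1 : ∀ w, (∑ u, (B v u : ℤ) * A u w) = ∑ u, (A v u : ℤ) * B u w := by
      intro w
      exact_mod_cast (hrec v w).symm
    simp only [h1, Finset.sum_mul, Finset.mul_sum]
    rw [Finset.sum_comm]
    exact Finset.sum_congr rfl fun _ _ => Finset.sum_congr rfl fun _ _ => by ring
  have hAA : ∑ w, (∑ u, (A v u : ℤ) * A u w) * gexp A B (n + 1) w =
      ∑ u, (A v u : ℤ) * ∑ w, (A u w : ℤ) * gexp A B (n + 1) w := by
    simp only [Finset.sum_mul, Finset.mul_sum]
    rw [Finset.sum_comm]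
    exact Finset.sum_congr rfl fun _ _ => Finset.sum_congr rfl fun _ _ => by ring
  have hc : ∑ u, (A v u : ℤ) * max (coef A B (n + 1) u) 0 =
      ∑ u, (A v u : ℤ) * coef A B (n + 1) u + ∑ u, (A v u : ℤ) * max (-coef A B (n + 1) u) 0 := by
    rw [← Finset.sum_add_distrib]
    refine Finset.sum_congr rfl fun u _ => ?_
    rw [← mul_add]
    congr 1
    rcases le_total (coef A B (n + 1) u) 0 with h | h
    · rw [max_eq_right h, max_eq_left (by omega)]; ring
    · rw [max_eq_left h, max_eq_right (by omega)]; ring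
  have hR : ∑ u, (A v u : ℤ) * gcoef A B (n + 1) u = ∑ u, (A v u : ℤ) * coef A B (n + 1) u +
      ∑ u, (A v u : ℤ) * ∑ w, (B u w : ℤ) * gexp A B (n + 1) w -
      ∑ u, (A v u : ℤ) * ∑ w, (A u w : ℤ) * gexp A B (n + 1) w := by
    rw [← Finset.sum_add_distrib, ← Finset.sum_sub_distrib]
    exact Finset.sum_congr rfl fun u _ => by rw [gcoef]; ring
  rw [hR, gcoef, gcoef, hsum, hsum, hAB, hAA, coef]
  beta_reduce
  rw [hc]
  ring

theorem mono_pos {C : W → W → ℕ} {x : W → ℝ} (h : ∀ w, 0 < x w) (v : W) : 0 < mono C x v :=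
  Finset.prod_pos fun w _ => pow_pos (h w) _

theorem mono_le_mono {C : W → W → ℕ} {x y : W → ℝ} (hx : ∀ w, 0 ≤ x w) (h : ∀ w, x w ≤ y w)
    (v : W) : mono C x v ≤ mono C y v :=
  Finset.prod_le_prod (fun w _ => pow_nonneg (hx w) _)
    fun w _ => pow_le_pow_left₀ (hx w) (h w) _

theorem mono_exp (C : W → W → ℕ) (s : ℝ) (x : W → ℝ) (v : W) :
    mono C (fun u => Real.exp (s * x u)) v = Real.exp (s * ∑ u, (C v u : ℝ) * x u) := by
  rw [mono, Finset.mul_sum, Real.exp_sum]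
  refine Finset.prod_congr rfl fun u _ => ?_
  rw [← Real.exp_nat_mul]
  congr 1
  ring

theorem mono_zpow (C : W → W → ℕ) (θ : ℝ) (hθ : 0 < θ) (k : W → ℤ) (v : W) :
    mono C (fun u => θ ^ k u) v = θ ^ (∑ u, (C v u : ℤ) * k u) := by
  have hs : ∀ s : Finset W, θ ^ (∑ u ∈ s, (C v u : ℤ) * k u) = ∏ u ∈ s, (θ ^ k u) ^ C v u := by
    intro s
    classical
    induction s using Finset.induction_on with
    | empty => simp
    | insert a s ha ih =>
      rw [Finset.sum_insert ha, Finset.prod_insert ha, zpow_add₀ hθ.ne', ih, mul_comm (C v a : ℤ),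
        zpow_mul, zpow_natCast]
  rw [hs]
  rfl

theorem Usol_pos (A B : W → W → ℕ) {θ : ℝ} (hθ : 0 < θ) {x0 x1 : W → ℝ} (h0 : ∀ v, 0 < x0 v)
    (h1 : ∀ v, 0 < x1 v) (n : ℕ) (v : W) : 0 < Usol A B θ x0 x1 n v := by
  induction n using Nat.twoStepInduction generalizing v with
  | zero => exact h0 v
  | one => exact h1 v
  | more n ih1 ih2 =>
    rw [Usol]
    have hA := mono_pos (C := A) ih2 v
    have hB := mono_pos (C := B) ih2 v
    have := ih1 v
    positivity

/-- The rescaled deformed system is a solution of the `T`-system with coefficients. -/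
theorem Usol_TSol {A B : W → W → ℕ} (hrec : RecurrentQuiver A B) {θ : ℝ} (hθ : 0 < θ)
    {x0 x1 : W → ℝ} (h0 : ∀ v, 0 < x0 v) (h1 : ∀ v, 0 < x1 v) :
    TSol A B (fun n v => Usol A B θ x0 x1 n v * θ ^ (-gexp A B n v))
      (fun n v => θ ^ gcoef A B n v) where
  e1 := fun n v => by
    have hU := (Usol_pos A B hθ h0 h1 n v).ne'
    rw [mono_mul, mono_mul, mono_zpow A θ hθ, mono_zpow B θ hθ, Usol]
    beta_reduce
    rw [← zpow_natCast θ (Int.toNat _), ← zpow_natCast θ (Int.toNat _), Int.ofNat_toNat,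
      Int.ofNat_toNat]
    have e1 : θ ^ (-gexp A B (n + 2) v) * θ ^ (-gexp A B n v) * θ ^ max (-coef A B (n + 1) v) 0 =
        θ ^ (∑ u, (A v u : ℤ) * -gexp A B (n + 1) u) := by
      rw [← zpow_add₀ hθ.ne', ← zpow_add₀ hθ.ne', gexp]
      congr 1
      simp only [mul_neg, Finset.sum_neg_distrib]
      ring
    have e2 : θ ^ (-gexp A B (n + 2) v) * θ ^ (-gexp A B n v) * θ ^ max (coef A B (n + 1) v) 0 =
        θ ^ gcoef A B (n + 1) v * θ ^ (∑ u, (B v u : ℤ) * -gexp A B (n + 1) u) := by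
      rw [← zpow_add₀ hθ.ne', ← zpow_add₀ hθ.ne', ← zpow_add₀ hθ.ne', gexp, gcoef]
      congr 1
      simp only [mul_neg, Finset.sum_neg_distrib]
      rcases le_total (coef A B (n + 1) v) 0 with h | h
      · rw [max_eq_right h, max_eq_left (by omega)]; ring
      · rw [max_eq_left h, max_eq_right (by omega)]; ring
    have e3 : ∀ N a b U : ℝ, U ≠ 0 → N / U * a * (U * b) = N * (a * b) := by
      intro N a b U hU
      field_simp
    rw [e3 _ _ _ _ hU]
    linear_combination mono A (Usol A B θ x0 x1 (n + 1)) v * e1 +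
      mono B (Usol A B θ x0 x1 (n + 1)) v * e2
  e2 := fun n v => by
    rw [mono_zpow A θ hθ, ← gcoef_rec hrec, zpow_add₀ hθ.ne']
  hT := fun n v => mul_ne_zero (Usol_pos A B hθ h0 h1 n v).ne' (zpow_ne_zero _ hθ.ne')
  hb := fun n v => zpow_ne_zero _ hθ.ne'

end Deform

/-! ### Periodicity on a component -/

section Core

open Filter Topology Polynomial

variable {W : Type} [Fintype W]

/-- A solution of the tropical `T`-system on all of `ℤ × W`, without parity restriction. -/
def TropSol (A B : W → W → ℕ) (F : ℤ → W → ℝ) : Prop :=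
  ∀ t v, F (t + 1) v + F (t - 1) v =
    max (∑ u, (A v u : ℝ) * F t u) (∑ u, (B v u : ℝ) * F t u)

/-- The deformed system with initial data `exp (s F 0)`, `exp (s F 1)` stays within constant
factors of `exp (s F n)`, uniformly in `s ≥ 0`. -/
theorem Usol_bound {A B : W → W → ℕ} {F : ℕ → W → ℝ}
    (hF : ∀ n v, F (n + 2) v + F n v =
      max (∑ u, (A v u : ℝ) * F (n + 1) u) (∑ u, (B v u : ℝ) * F (n + 1) u))
    {θ : ℝ} (hθ : 0 < θ) (n : ℕ) : ∀ v, ∃ K : ℝ, 0 < K ∧ ∀ s, 0 ≤ s →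
      Usol A B θ (fun u => Real.exp (s * F 0 u)) (fun u => Real.exp (s * F 1 u)) n v ≤
        K * Real.exp (s * F n v) ∧
      Real.exp (s * F n v) ≤
        K * Usol A B θ (fun u => Real.exp (s * F 0 u)) (fun u => Real.exp (s * F 1 u)) n v := by
  have hpos : ∀ s n v, 0 < Usol A B θ (fun u => Real.exp (s * F 0 u))
      (fun u => Real.exp (s * F 1 u)) n v := fun s n v =>
    Usol_pos A B hθ (fun _ => Real.exp_pos _) (fun _ => Real.exp_pos _) n v
  induction n using Nat.twoStepInduction with
  | zero => exact fun v => ⟨1, one_pos, fun s _ => by simp [Usol]⟩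
  | one => exact fun v => ⟨1, one_pos, fun s _ => by simp [Usol]⟩
  | more n ih1 ih2 =>
    intro v
    obtain ⟨K, hK, hKs⟩ := ih1 v
    choose K' hK' hKs' using ih2
    set w1 : ℝ := θ ^ (-coef A B (n + 1) v).toNat with hw1
    set w2 : ℝ := θ ^ (coef A B (n + 1) v).toNat with hw2
    have hw1p : 0 < w1 := by positivity
    have hw2p : 0 < w2 := by positivity
    have ha := mono_pos (C := A) hK' v
    have hb := mono_pos (C := B) hK' v
    set a := mono A K' v
    set b := mono B K' v
    refine ⟨max ((w1 * a + w2 * b) * K) ((a / w1 + b / w2) * K), by positivity, ?_⟩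
    intro s hs
    set U := Usol A B θ (fun u => Real.exp (s * F 0 u)) (fun u => Real.exp (s * F 1 u)) with hU
    set E : ℝ := Real.exp (s * max (∑ u, (A v u : ℝ) * F (n + 1) u)
      (∑ u, (B v u : ℝ) * F (n + 1) u)) with hE
    have hE0 : 0 < E := Real.exp_pos _
    have hrecE : Real.exp (s * F (n + 2) v) * Real.exp (s * F n v) = E := by
      rw [← Real.exp_add, ← mul_add, hF]
    have hrecU : U (n + 2) v * U n v = w1 * mono A (U (n + 1)) v + w2 * mono B (U (n + 1)) v := by
      rw [hU, Usol]
      exact div_mul_cancel₀ _ (hpos s n v).ne'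
    have hmA : ∀ C : W → W → ℕ, mono C (U (n + 1)) v ≤
        mono C K' v * Real.exp (s * ∑ u, (C v u : ℝ) * F (n + 1) u) := by
      intro C
      rw [← mono_exp, ← mono_mul]
      exact mono_le_mono (fun u => (hpos s _ u).le) (fun u => (hKs' u s hs).1) v
    have hmB : ∀ C : W → W → ℕ, Real.exp (s * ∑ u, (C v u : ℝ) * F (n + 1) u) ≤
        mono C K' v * mono C (U (n + 1)) v := by
      intro C
      rw [← mono_exp, ← mono_mul]
      exact mono_le_mono (fun u => (Real.exp_pos _).le) (fun u => (hKs' u s hs).2) v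
    have hUn : 0 < U n v := hpos s n v
    have hUn2 : 0 < U (n + 2) v := hpos s (n + 2) v
    have hen : 0 < Real.exp (s * F n v) := Real.exp_pos _
    have hen2 : 0 < Real.exp (s * F (n + 2) v) := Real.exp_pos _
    have hUA : 0 < mono A (U (n + 1)) v := mono_pos (fun u => hpos s _ u) v
    have hUB : 0 < mono B (U (n + 1)) v := mono_pos (fun u => hpos s _ u) v
    obtain ⟨k1, k2⟩ := hKs s hs
    have hAE : Real.exp (s * ∑ u, (A v u : ℝ) * F (n + 1) u) ≤ E :=
      Real.exp_le_exp.2 (mul_le_mul_of_nonneg_left (le_max_left _ _) hs)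
    have hBE : Real.exp (s * ∑ u, (B v u : ℝ) * F (n + 1) u) ≤ E :=
      Real.exp_le_exp.2 (mul_le_mul_of_nonneg_left (le_max_right _ _) hs)
    constructor
    · refine le_trans ?_ (mul_le_mul_of_nonneg_right (le_max_left _ _) hen2.le)
      have h1 : U (n + 2) v * U n v ≤ (w1 * a + w2 * b) * E := by
        rw [hrecU, add_mul, mul_assoc, mul_assoc]
        refine add_le_add (mul_le_mul_of_nonneg_left ?_ hw1p.le)
          (mul_le_mul_of_nonneg_left ?_ hw2p.le)
        · exact (hmA A).trans (mul_le_mul_of_nonneg_left hAE ha.le)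
        · exact (hmA B).trans (mul_le_mul_of_nonneg_left hBE hb.le)
      have h2 : U (n + 2) v * Real.exp (s * F n v) ≤
          ((w1 * a + w2 * b) * K * Real.exp (s * F (n + 2) v)) * Real.exp (s * F n v) := by
        calc U (n + 2) v * Real.exp (s * F n v) ≤ U (n + 2) v * (K * U n v) :=
              mul_le_mul_of_nonneg_left k2 hUn2.le
          _ = K * (U (n + 2) v * U n v) := by ring
          _ ≤ K * ((w1 * a + w2 * b) * E) := mul_le_mul_of_nonneg_left h1 hK.le
          _ = _ := by rw [← hrecE]; ring
      exact le_of_mul_le_mul_right h2 hen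
    · refine le_trans ?_ (mul_le_mul_of_nonneg_right (le_max_right _ _) hUn2.le)
      have hS : E ≤ a * mono A (U (n + 1)) v + b * mono B (U (n + 1)) v := by
        have := mul_pos ha hUA
        have := mul_pos hb hUB
        rcases max_choice (∑ u, (A v u : ℝ) * F (n + 1) u) (∑ u, (B v u : ℝ) * F (n + 1) u)
          with h | h
        · rw [hE, h]; have := hmB A; linarith
        · rw [hE, h]; have := hmB B; linarith
      have h1 : E ≤ (a / w1 + b / w2) * (U (n + 2) v * U n v) := by
        rw [hrecU]
        have e : (a / w1 + b / w2) * (w1 * mono A (U (n + 1)) v + w2 * mono B (U (n + 1)) v) =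
            a * mono A (U (n + 1)) v + b * mono B (U (n + 1)) v +
              (a / w1 * (w2 * mono B (U (n + 1)) v) + b / w2 * (w1 * mono A (U (n + 1)) v)) := by
          field_simp
          ring
        rw [e]
        have : 0 < a / w1 * (w2 * mono B (U (n + 1)) v) + b / w2 * (w1 * mono A (U (n + 1)) v) := by
          positivity
        linarith
      have h2 : Real.exp (s * F (n + 2) v) * Real.exp (s * F n v) ≤
          ((a / w1 + b / w2) * K * U (n + 2) v) * Real.exp (s * F n v) := by
        rw [hrecE]
        have hc : 0 < (a / w1 + b / w2) * U (n + 2) v := by positivity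
        calc E ≤ ((a / w1 + b / w2) * U (n + 2) v) * U n v := by rw [mul_assoc]; exact h1
          _ ≤ ((a / w1 + b / w2) * U (n + 2) v) * (K * Real.exp (s * F n v)) :=
              mul_le_mul_of_nonneg_left k1 hc.le
          _ = _ := by ring
      exact le_of_mul_le_mul_right h2 hen

/-- As `θ → 0` the deformed system degenerates, in every phase of constant sign, to a linear
system. -/
theorem Usol_limit {A B : W → W → ℕ} {M : ℕ}
    (hM : ∀ n < M, (∀ v, 0 < coef A B (n + 1) v) ∨ (∀ v, coef A B (n + 1) v < 0))
    (g : ℕ → W → ℝ)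
    (hgA : ∀ n, (∀ v, 0 < coef A B (n + 1) v) →
      ∀ v, g (n + 2) v = ∑ u, (A v u : ℝ) * g (n + 1) u - g n v)
    (hgB : ∀ n, (∀ v, coef A B (n + 1) v < 0) →
      ∀ v, g (n + 2) v = ∑ u, (B v u : ℝ) * g (n + 1) u - g n v) (s : ℝ) (n : ℕ) :
    n ≤ M → ∀ v, Tendsto (fun θ : ℝ => Usol A B θ (fun u => Real.exp (s * g 0 u))
      (fun u => Real.exp (s * g 1 u)) n v) (𝓝[>] 0) (𝓝 (Real.exp (s * g n v))) := by
  induction n using Nat.twoStepInduction with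
  | zero => exact fun _ v => tendsto_const_nhds
  | one => exact fun _ v => tendsto_const_nhds
  | more n ih1 ih2 =>
    intro hn v
    have hmono : ∀ C : W → W → ℕ, Tendsto (fun θ : ℝ => mono C (Usol A B θ
        (fun u => Real.exp (s * g 0 u)) (fun u => Real.exp (s * g 1 u)) (n + 1)) v) (𝓝[>] 0)
        (𝓝 (Real.exp (s * ∑ u, (C v u : ℝ) * g (n + 1) u))) := by
      intro C
      rw [← mono_exp]
      exact tendsto_finsetProd _ fun u _ => (ih2 (by omega) u).pow _
    have hpow : ∀ k : ℕ, 0 < k → Tendsto (fun θ : ℝ => θ ^ k) (𝓝[>] 0) (𝓝 0) := by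
      intro k hk
      have : Tendsto (fun θ : ℝ => θ ^ k) (𝓝[>] 0) (𝓝 ((0 : ℝ) ^ k)) :=
        ((continuous_pow k).tendsto 0).mono_left nhdsWithin_le_nhds
      rwa [zero_pow hk.ne'] at this
    have hone : ∀ k : ℕ, k = 0 → Tendsto (fun θ : ℝ => θ ^ k) (𝓝[>] 0) (𝓝 1) := by
      rintro k rfl
      simp
    have hd := ih1 (by omega) v
    have hd0 := (Real.exp_pos (s * g n v)).ne'
    simp only [Usol]
    rcases hM n (by omega) with h | h
    · have hv := h v
      have := (((hone (-coef A B (n + 1) v).toNat (by omega)).mul (hmono A)).add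
        ((hpow (coef A B (n + 1) v).toNat (by omega)).mul (hmono B))).div hd hd0
      rw [one_mul, zero_mul, add_zero, ← Real.exp_sub, ← mul_sub, ← hgA n h v] at this
      exact this
    · have hv := h v
      have := (((hpow (-coef A B (n + 1) v).toNat (by omega)).mul (hmono A)).add
        ((hone (coef A B (n + 1) v).toNat (by omega)).mul (hmono B))).div hd hd0
      rw [one_mul, zero_mul, zero_add, ← Real.exp_sub, ← mul_sub, ← hgB n h v] at this
      exact this

variable [DecidableEq W]

/-- The Laurent phenomenon for the deformed system: up to a power of `θ`, its value is a polynomial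
in `θ`, of degree bounded independently of the initial data. -/
theorem Usol_poly {A B : W → W → ℕ} (hA : ∀ u v, A u v = A v u) (hB : ∀ u v, B u v = B v u)
    (hAB : ∀ u v, A u v * B u v = 0) (hrec : RecurrentQuiver A B) (n : ℕ) (v : W) :
    ∃ d : ℕ, ∀ x0 x1 : W → ℝ, (∀ u, 0 < x0 u) → (∀ u, 0 < x1 u) →
      ∃ Q : ℝ[X], Q.natDegree ≤ 2 * d ∧ ∀ θ, 0 < θ →
        Usol A B θ x0 x1 n v * θ ^ d = Q.eval θ := by
  obtain ⟨p, hp⟩ := laurent hA hB hAB hrec n v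
  let k : Fin 4 × W → ℤ := fun i =>
    if i.1 = 2 then gcoef A B 0 i.2 else if i.1 = 3 then gcoef A B 1 i.2 else 0
  obtain ⟨d, hd⟩ := lev_poly k p
  set e := gexp A B n v with he
  refine ⟨d + e.natAbs, fun x0 x1 h0 h1 => ?_⟩
  let y : Fin 4 × W → ℝ := fun i => if i.1 = 0 then x0 i.2 else if i.1 = 1 then x1 i.2 else 1
  let x : ℝ → Fin 4 × W → ℝˣ := fun θ =>
    if hθ : 0 < θ then (Usol_TSol (A := A) (B := B) hrec hθ h0 h1).pt else 1
  obtain ⟨Q, hQ, hQ'⟩ := hd y x (by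
    rintro θ hθ ⟨j, u⟩
    simp only [x, dif_pos hθ]
    fin_cases j <;> simp [TSol.pt, k, y, Usol, gexp])
  refine ⟨Q * X ^ (e + e.natAbs).toNat, ?_, fun θ hθ => ?_⟩
  · refine natDegree_mul_le.trans ?_
    rw [natDegree_X_pow]; omega
  · have h := (Usol_TSol (A := A) (B := B) hrec hθ h0 h1).lev_genT (n := n)
      (fun m _ u => laurent hA hB hAB hrec m u) n le_rfl v p hp
    have h2 := hQ' θ hθ
    simp only [x, dif_pos hθ] at h2
    rw [h] at h2
    have e1 : (θ : ℝ) ^ (e + e.natAbs).toNat = θ ^ e * θ ^ e.natAbs := by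
      rw [← zpow_natCast θ (Int.toNat _), Int.toNat_of_nonneg (by omega), zpow_add₀ hθ.ne',
        zpow_natCast]
    have e2 : θ ^ (-e) * θ ^ e = 1 := by
      rw [← zpow_add₀ hθ.ne']; simp
    rw [eval_mul, eval_pow, eval_X, ← h2, e1, pow_add]
    linear_combination (-(Usol A B θ x0 x1 n v) * θ ^ d * θ ^ e.natAbs) * e2

/-- One half of periodicity: a solution does not decrease over the common period.

Start the deformed system at `exp (s F 0)`, `exp (s F 1)`. Its limit at `θ → 0` is
`exp (s F 0 v)` at time `M`, since the limiting linear system has returned to its initial value. By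
interpolation this limit is a combination, with coefficients independent of `s`, of the values at
`θ = 1, …, d + 1`, which are bounded by constant multiples of `exp (s F M v)`. Comparing growth as
`s → ∞` gives the claim. -/
theorem trop_le {A B : W → W → ℕ} (hA : ∀ u v, A u v = A v u) (hB : ∀ u v, B u v = B v u)
    (hAB : ∀ u v, A u v * B u v = 0) (hrec : RecurrentQuiver A B) {M : ℕ}
    (hM : ∀ n < M, (∀ v, 0 < coef A B (n + 1) v) ∨ (∀ v, coef A B (n + 1) v < 0))
    (hper : ∀ g : ℕ → W → ℝ,
        (∀ n, (∀ v, 0 < coef A B (n + 1) v) →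
          ∀ v, g (n + 2) v = ∑ u, (A v u : ℝ) * g (n + 1) u - g n v) →
        (∀ n, (∀ v, coef A B (n + 1) v < 0) →
          ∀ v, g (n + 2) v = ∑ u, (B v u : ℝ) * g (n + 1) u - g n v) → g M = g 0)
    {F : ℕ → W → ℝ}
    (hF : ∀ n v, F (n + 2) v + F n v =
      max (∑ u, (A v u : ℝ) * F (n + 1) u) (∑ u, (B v u : ℝ) * F (n + 1) u)) (v : W) :
    F 0 v ≤ F M v := by
  -- the linear system started from `F 0`, `F 1`
  obtain ⟨g, g0, g1, g2⟩ : ∃ g : ℕ → W → ℝ, g 0 = F 0 ∧ g 1 = F 1 ∧ ∀ n v, g (n + 2) v =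
      (if 0 < coef A B (n + 1) v then ∑ u, (A v u : ℝ) * g (n + 1) u
        else ∑ u, (B v u : ℝ) * g (n + 1) u) - g n v := by
    let G : ℕ → (W → ℝ) × (W → ℝ) := fun n => Nat.rec (F 0, F 1) (fun n q => (q.2, fun v =>
      (if 0 < coef A B (n + 1) v then ∑ u, (A v u : ℝ) * q.2 u
        else ∑ u, (B v u : ℝ) * q.2 u) - q.1 v)) n
    exact ⟨fun n => (G n).1, rfl, rfl, fun n v => rfl⟩
  have hgA : ∀ n, (∀ v, 0 < coef A B (n + 1) v) →
      ∀ v, g (n + 2) v = ∑ u, (A v u : ℝ) * g (n + 1) u - g n v := by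
    intro n hn v
    rw [g2, if_pos (hn v)]
  have hgB : ∀ n, (∀ v, coef A B (n + 1) v < 0) →
      ∀ v, g (n + 2) v = ∑ u, (B v u : ℝ) * g (n + 1) u - g n v := by
    intro n hn v
    rw [g2, if_neg (by have := hn v; omega)]
  have hgM : g M v = F 0 v := by rw [hper g hgA hgB, g0]
  obtain ⟨d, hd⟩ := Usol_poly hA hB hAB hrec M v
  obtain ⟨w, hw⟩ := limit_interp d
  choose K hK hKs using fun j : ℕ => Usol_bound hF (θ := 1 + j) (by positivity) M v
  set C := ∑ j ∈ Finset.range (d + 1), |w j| * K j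
  have key : ∀ s, 0 ≤ s → Real.exp (s * F 0 v) ≤ C * Real.exp (s * F M v) := by
    intro s hs
    obtain ⟨Q, hQ, hQ'⟩ := hd (fun u => Real.exp (s * F 0 u)) (fun u => Real.exp (s * F 1 u))
      (fun _ => Real.exp_pos _) (fun _ => Real.exp_pos _)
    have hlim := Usol_limit hM g hgA hgB s M le_rfl v
    rw [g0, g1, hgM] at hlim
    rw [hw Q _ hQ (hlim.congr' ?_), Finset.sum_mul]
    · refine Finset.sum_le_sum fun j _ => ?_
      have hj : (0 : ℝ) < 1 + j := by positivity
      rw [← hQ' _ hj, mul_div_cancel_right₀ _ (pow_pos hj d).ne', mul_assoc]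
      have hU := Usol_pos A B hj (x0 := fun u => Real.exp (s * F 0 u))
        (x1 := fun u => Real.exp (s * F 1 u)) (fun _ => Real.exp_pos _)
        (fun _ => Real.exp_pos _) M v
      exact (mul_le_mul_of_nonneg_right (le_abs_self _) hU.le).trans
        (mul_le_mul_of_nonneg_left (hKs j s hs).1 (abs_nonneg _))
    · filter_upwards [self_mem_nhdsWithin] with θ hθ
      have hθ' : (0 : ℝ) < θ := hθ
      rw [← hQ' θ hθ', mul_div_cancel_right₀ _ (pow_pos hθ' d).ne']
  by_contra! hlt
  -- otherwise the ratio of the two exponentials is unbounded in `s`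
  have hC : ∀ s, 0 ≤ s → s * (F 0 v - F M v) < C := by
    intro s hs
    have h1 : Real.exp (s * (F 0 v - F M v)) ≤ C := by
      rw [mul_sub, Real.exp_sub, div_le_iff₀ (Real.exp_pos _)]
      exact key s hs
    have := Real.add_one_le_exp (s * (F 0 v - F M v))
    linarith
  have h0 := hC 0 le_rfl
  rw [zero_mul] at h0
  have h1 := hC (C / (F 0 v - F M v)) (div_nonneg h0.le (by linarith))
  rw [div_mul_cancel₀ _ (by linarith : F 0 v - F M v ≠ 0)] at h1
  exact lt_irrefl _ h1

/-- Periodicity of the tropical `T`-system when both matrices have spectral radius below `2`. -/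
theorem trop_periodic [Nonempty W] {A B : W → W → ℕ} (hA : ∀ u v, A u v = A v u)
    (hB : ∀ u v, B u v = B v u) (hAB : ∀ u v, A u v * B u v = 0) (hrec : RecurrentQuiver A B)
    (p : W → ℝ) (hp : ∀ v, 0 < p v) (μ ν : ℝ) (hμ : μ < 2) (hν : ν < 2)
    (hAp : ∀ v, ∑ u, (A v u : ℝ) * p u = μ * p v) (hBp : ∀ v, ∑ u, (B v u : ℝ) * p u = ν * p v) :
    ∃ H : ℕ, 0 < H ∧ ∀ F : ℤ → W → ℝ, TropSol A B F →
      ∀ t v, F (t + 2 * H) v = F t v := by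
  obtain ⟨H, hH, hM, hper⟩ := phases A B hA hB hrec p hp μ ν hμ hν hAp hBp
  refine ⟨H, hH, fun F hF t v => le_antisymm ?_ ?_⟩
  · have := trop_le hA hB hAB hrec hM hper (F := fun n : ℕ => F (t + 2 * H - n)) (fun n v => by
      have := hF (t + 2 * H - (n + 1 : ℕ)) v
      rw [add_comm] at this
      convert this using 3 <;> push_cast <;> ring_nf) v
    simpa using this
  · have := trop_le hA hB hAB hrec hM hper (F := fun n : ℕ => F (t + n)) (fun n v => by
      have := hF (t + (n + 1 : ℕ)) v
      convert this using 3 <;> push_cast <;> ring_nf) v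
    simpa using this

end Core

/-! ### Admissibility implies periodicity -/

/-- A solution of the bipartite system, extended by zero to the pairs `(t, v)` of the other
parity, solves the recursion at every time and vertex. -/
theorem tropSol_of_bipartite {V : Type} [Fintype V] (eps : V → ℤ) (A B : V → V → ℕ)
    (hbip : BipartiteData eps A B) {lam : V → ℝ} {f : ℤ → V → ℝ}
    (hf : IsTropicalTSystem eps A B lam f) :
    ∀ t v, (if Even (t + 1 + eps v) then f (t + 1) v else 0)
        + (if Even (t - 1 + eps v) then f (t - 1) v else 0)
      = max (∑ u, (A v u : ℝ) * (if Even (t + eps u) then f t u else 0))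
          (∑ u, (B v u : ℝ) * (if Even (t + eps u) then f t u else 0)) := by
  obtain ⟨heps, -, -, -, -, hne, -⟩ := hbip
  intro t v
  have hflip : ∀ u, eps v ≠ eps u → (Even (t + eps u) ↔ Odd (t + eps v)) := by
    intro u hu
    rw [Int.even_iff, Int.odd_iff]
    have h1 := heps u
    have h2 := heps v
    omega
  have key : ∀ X : V → V → ℕ, (∀ u, eps v = eps u → X v u = 0) →
      ∑ u, (X v u : ℝ) * (if Even (t + eps u) then f t u else 0)
        = if Odd (t + eps v) then ∑ u, (X v u : ℝ) * f t u else 0 := by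
    intro X hX
    have : ∀ u, (X v u : ℝ) * (if Even (t + eps u) then f t u else 0)
        = if Odd (t + eps v) then (X v u : ℝ) * f t u else 0 := by
      intro u
      by_cases h : eps v = eps u
      · simp [hX u h]
      · simp only [hflip u h]
        split_ifs <;> simp
    simp only [this]
    split_ifs <;> simp
  rw [key A fun u h => (hne v u h).1, key B fun u h => (hne v u h).2]
  by_cases hodd : Odd (t + eps v)
  · have h1 : Even (t + 1 + eps v) := by rw [Int.even_iff]; rw [Int.odd_iff] at hodd; omega
    have h2 : Even (t - 1 + eps v) := by rw [Int.even_iff]; rw [Int.odd_iff] at hodd; omega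
    rw [if_pos h1, if_pos h2, if_pos hodd, if_pos hodd]
    exact hf.2 t v hodd
  · have h1 : ¬ Even (t + 1 + eps v) := by rw [Int.even_iff]; rw [Int.odd_iff] at hodd; omega
    have h2 : ¬ Even (t - 1 + eps v) := by rw [Int.even_iff]; rw [Int.odd_iff] at hodd; omega
    rw [if_neg h1, if_neg h2, if_neg hodd, if_neg hodd]
    simp

/-- In an admissible ADE bigraph, `trop_periodic` applies to each connected component. -/
theorem comp_periodic {V : Type} [Fintype V] (eps : V → ℤ) (A B : V → V → ℕ)
    (hbip : BipartiteData eps A B) (hrec : RecurrentQuiver A B) (hade : AdmissibleADE A B)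
    (v0 : V) :
    ∃ H : ℕ, 0 < H ∧ ∀ (lam : V → ℝ) (f : ℤ → V → ℝ), IsTropicalTSystem eps A B lam f →
      ∀ t : ℤ, Even (t + eps v0) → f (t + 2 * H) v0 = f t v0 := by
  classical
  have hbip' := hbip
  obtain ⟨-, hA, hB, hA0, hB0, -, hAB⟩ := hbip
  obtain ⟨hA1, hB1, hAc, hBc⟩ := hade
  obtain ⟨p, μ, ν, -, -, hp, hn, h1, h2⟩ := perron_ext A B hA hB hrec v0
  have hμ : μ < 2 := by
    refine eig_lt_of_ade A hA hA0 hA1 ((graphOf A).connectedComponentMk v0) (hAc _) p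
      (fun v hv => hp v (reach_of_reachable hA (fun _ _ => Or.inl) ?_)) μ h1
    exact (SimpleGraph.ConnectedComponent.eq.1 hv).symm
  have hν : ν < 2 := by
    refine eig_lt_of_ade B hB hB0 hB1 ((graphOf B).connectedComponentMk v0) (hBc _) p
      (fun v hv => hp v (reach_of_reachable hB (fun _ _ => Or.inr) ?_)) ν h2
    exact (SimpleGraph.ConnectedComponent.eq.1 hv).symm
  have : Nonempty (Comp A B v0) := ⟨⟨v0, Relation.ReflTransGen.refl⟩⟩
  have hsum : ∀ X : V → V → ℕ, (∀ u v, X u v ≠ 0 → A u v ≠ 0 ∨ B u v ≠ 0) → ∀ (g : V → ℝ)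
      (v : Comp A B v0), ∑ u : Comp A B v0, (X v.1 u.1 : ℝ) * g u.1 = ∑ u, (X v.1 u : ℝ) * g u := by
    intro X hX g v
    refine comp_sum (Reach A B v0) (fun u => (X v.1 u : ℝ) * g u) fun u hu => ?_
    have : X v.1 u = 0 := by
      by_contra h
      exact hu (reach_of v.2 (hX _ _ h))
    simp [this]
  obtain ⟨H, hH, hper⟩ := trop_periodic (W := Comp A B v0) (A := fun u v => A u.1 v.1)
    (B := fun u v => B u.1 v.1) (fun u v => hA _ _) (fun u v => hB _ _) (fun u v => hAB _ _)
    (comp_rec A B v0 hrec) (fun v => p v.1) (fun v => hp _ v.2) μ ν hμ hν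
    (fun v => (hsum A (fun _ _ => Or.inl) p v).trans (h1 v.1))
    (fun v => (hsum B (fun _ _ => Or.inr) p v).trans (h2 v.1))
  refine ⟨H, hH, fun lam f hf t ht => ?_⟩
  have h := hper (fun t v => if Even (t + eps v.1) then f t v.1 else 0) (fun t v => by
    have := tropSol_of_bipartite eps A B hbip' hf t v.1
    rw [← hsum A (fun _ _ => Or.inl) _ v, ← hsum B (fun _ _ => Or.inr) _ v] at this
    exact this) t ⟨v0, Relation.ReflTransGen.refl⟩
  have ht' : Even (t + 2 * (H : ℤ) + eps v0) := by
    rw [Int.even_iff] at ht ⊢; omega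
  simpa only [if_pos ht, if_pos ht'] using h

/-- Admissible ADE bigraphs have periodic tropical `T`-systems: a common period is the product
of the periods of the components. -/
theorem periodic_of_admissible {V : Type} [Fintype V] (eps : V → ℤ) (A B : V → V → ℕ)
    (hbip : BipartiteData eps A B) (hrec : RecurrentQuiver A B) (hade : AdmissibleADE A B) :
    ∃ N : ℕ, 0 < N ∧ ∀ (lam : V → ℝ) (f : ℤ → V → ℝ),
      IsTropicalTSystem eps A B lam f →
      ∀ (v : V) (t : ℤ), Even (t + eps v) → f (t + 2 * N) v = f t v := by
  choose H hH hper using comp_periodic eps A B hbip hrec hade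
  refine ⟨∏ v, H v, Finset.prod_pos fun v _ => hH v, fun lam f hf v t ht => ?_⟩
  obtain ⟨k, hk⟩ := Finset.dvd_prod_of_mem H (Finset.mem_univ v)
  rw [hk]
  clear hk
  induction k with
  | zero => simp
  | succ k ih =>
    have e : Even (t + 2 * ((H v * k : ℕ) : ℤ) + eps v) := by
      rw [Int.even_iff] at ht ⊢; omega
    have := hper v lam f hf _ e
    rw [ih] at this
    rw [← this]
    congr 1
    push_cast; ring

/-- for a bipartite recurrent quiver, the tropical `T`-system is periodic for
every initial value iff `G(Q)` is an admissible ADE bigraph. -/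
theorem tropical_periodic_iff_admissibleADE
    {V : Type} [Fintype V] [DecidableEq V]
    (eps : V → ℤ) (A B : V → V → ℕ)
    (hbip : BipartiteData eps A B) (hrec : RecurrentQuiver A B) :
    (∃ N : ℕ, 0 < N ∧ ∀ (lam : V → ℝ) (f : ℤ → V → ℝ),
      IsTropicalTSystem eps A B lam f →
      ∀ (v : V) (t : ℤ), Even (t + eps v) → f (t + 2 * N) v = f t v) ↔
    AdmissibleADE A B := by
  exact ⟨admissible_of_periodic eps A B hbip hrec, periodic_of_admissible eps A B hbip hrec⟩
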